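/- Let Γ be a lattice in G = PSL(2,ℂ) and let (x_iH) be a sequence of pairwise distinct closed H-orbits in Γ\G. Then lim_i x_iH = Γ\G; that is, for every nonempty open subset O of Γ\G one has x_iH ∩ O ≠ ∅ for all sufficiently large i. (This is the homogeneous formulation of the statement that any infinite sequence of properly immersed geodesic planes in a hyperbolic 3-manifold of finite volume becomes dense.) -/

import Mathlib

open scoped MatrixGroups
open Matrix Filter

noncomputable section

/-- `SL(2,ℂ)`. -/
abbrev SL2C := Matrix.SpecialLinearGroup (Fin 2) ℂ

instance : TopologicalSpace SL2C := instTopologicalSpaceSubtype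

/-- `G = PSL(2,ℂ) = SL(2,ℂ)/{±I}`, with the quotient topology. -/
abbrev PSL2C := Matrix.ProjectiveSpecialLinearGroup (Fin 2) ℂ

/-- The projection `π : SL(2,ℂ) → PSL(2,ℂ)`. -/
def pr : SL2C →* PSL2C := QuotientGroup.mk' _

/-- The upper triangular unipotent matrix `[[1, t],[0, 1]]` as an element of `SL(2,ℂ)`. -/
def uMat (t : ℂ) : SL2C := ⟨!![1, t; 0, 1], by simp [Matrix.det_fin_two_of]⟩

/-- `u_t = π [[1, t],[0, 1]]` for `t ∈ ℝ`. -/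
def uu (t : ℝ) : PSL2C := pr (uMat t)

/-- `v_s = π [[1, is],[0, 1]]` for `s ∈ ℝ`. -/
def vv (s : ℝ) : PSL2C := pr (uMat (s * Complex.I))

/-- The subgroup `U = {u_t : t ∈ ℝ}` as a subset of `PSL(2,ℂ)`. -/
def Uset : Set PSL2C := Set.range uu

/-- The subgroup `V = {v_s : s ∈ ℝ}` as a subset of `PSL(2,ℂ)`. -/
def Vset : Set PSL2C := Set.range vv

/-- The subgroup `N = {π [[1, z],[0,1]] : z ∈ ℂ}` as a subset of `PSL(2,ℂ)`. -/
def Nset : Set PSL2C := {x | ∃ z : ℂ, x = pr (uMat z)}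

/-- `H = π (SL(2,ℝ))`, the image in `PSL(2,ℂ)` of the real matrices. -/
def Hset : Set PSL2C :=
  {x | ∃ g : Matrix.SpecialLinearGroup (Fin 2) ℝ,
    x = pr (Matrix.SpecialLinearGroup.map (algebraMap ℝ ℂ) g)}

/-- The upper triangular matrix `[[a, z],[0, a⁻¹]]` as an element of `SL(2,ℂ)`,
for a nonzero real `a`. -/
def tri (a : ℝ) (ha : a ≠ 0) (z : ℂ) : SL2C :=
  ⟨!![(a : ℂ), z; 0, (a : ℂ)⁻¹], by
    have h : (a : ℂ) ≠ 0 := by exact_mod_cast ha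
    simp [Matrix.det_fin_two_of, mul_inv_cancel₀ h]⟩

/-- `AN = {π [[a, z],[0, a⁻¹]] : a > 0 real, z ∈ ℂ}`. -/
def ANset : Set PSL2C := {x | ∃ (a : ℝ) (ha : 0 < a) (z : ℂ), x = pr (tri a ha.ne' z)}

/-- `AV = {π [[a, ib],[0, a⁻¹]] : a > 0 real, b ∈ ℝ}`. -/
def AVset : Set PSL2C :=
  {x | ∃ (a : ℝ) (ha : 0 < a) (b : ℝ), x = pr (tri a ha.ne' (b * Complex.I))}

/-- `A = {π diag(a, a⁻¹) : a > 0 real}`. -/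
def Aset : Set PSL2C := {x | ∃ (a : ℝ) (ha : 0 < a), x = pr (tri a ha.ne' 0)}

variable (Γ : Subgroup PSL2C)

/-- The space `Γ\\G` of right cosets `Γg`, with the quotient topology. -/
abbrev XΓ := Quotient (QuotientGroup.rightRel Γ)

/-- The natural projection `G → Γ\\G`. -/
def mkX (g : PSL2C) : XΓ Γ := Quotient.mk'' g

/-- The right translation action of `G` on `Γ\\G`: `(Γg₀)·g = Γ(g₀g)`. -/
def act (x : XΓ Γ) (g : PSL2C) : XΓ Γ :=
  Quotient.map' (fun h => h * g)
    (fun a b hab => by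
      rw [QuotientGroup.rightRel_apply] at hab ⊢
      simpa [_root_.mul_inv_rev, mul_assoc] using hab) x

/-- The orbit `xS = {x·s : s ∈ S}` of a point `x ∈ Γ\\G` under a subset `S ⊆ G`. -/
def orb (x : XΓ Γ) (S : Set PSL2C) : Set (XΓ Γ) := (fun s => act Γ x s) '' S

/-- `Γ` is a lattice in `G`: there is a nonzero finite Borel measure on `Γ\\G`
invariant under the right translation action of `G`. -/
def IsLattice : Prop :=
  letI : MeasurableSpace (XΓ Γ) := borel _
  ∃ μ : MeasureTheory.Measure (XΓ Γ), μ ≠ 0 ∧ MeasureTheory.IsFiniteMeasure μ ∧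
    ∀ g : PSL2C, MeasureTheory.Measure.map (fun x => act Γ x g) μ = μ


section Helpers

open Topology

/-- Complex two by two matrices. -/
abbrev M2C := Matrix (Fin 2) (Fin 2) ℂ

/-- Entrywise `ℓ¹` norm of a two by two matrix. -/
def nm (A : M2C) : ℝ := ‖A 0 0‖ + ‖A 0 1‖ + ‖A 1 0‖ + ‖A 1 1‖

/-- Traceless part. -/
def tl (A : M2C) : M2C := A - (A.trace / 2) • (1 : M2C)

/-- The underlying matrix. -/
def mx (g : SL2C) : M2C := (g : Matrix (Fin 2) (Fin 2) ℂ)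

lemma mx_mul (g h : SL2C) : mx (g * h) = mx g * mx h := Matrix.SpecialLinearGroup.coe_mul g h
lemma mx_one : mx 1 = 1 := Matrix.SpecialLinearGroup.coe_one
lemma mx_neg (g : SL2C) : mx (-g) = - mx g := Matrix.SpecialLinearGroup.coe_neg g
lemma mx_inj {g h : SL2C} (e : mx g = mx h) : g = h := Subtype.ext e
lemma mx_embed : Topology.IsClosedEmbedding mx :=
  Matrix.SpecialLinearGroup.isClosedEmbedding_val (n := Fin 2) (R := ℂ)

/-- Size of an element of `SL(2,ℂ)`: norm of the traceless part. -/
def sz (g : SL2C) : ℝ := nm (tl (mx g))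

lemma nm_nonneg (A : M2C) : 0 ≤ nm A := by unfold nm; positivity

lemma nm_entry (A : M2C) (i j : Fin 2) : ‖A i j‖ ≤ nm A := by
  have h1 := norm_nonneg (A 0 0)
  have h2 := norm_nonneg (A 0 1)
  have h3 := norm_nonneg (A 1 0)
  have h4 := norm_nonneg (A 1 1)
  unfold nm
  fin_cases i <;> fin_cases j <;> simp <;> linarith

lemma nm_add_le (A B : M2C) : nm (A + B) ≤ nm A + nm B := by
  unfold nm
  simp only [Matrix.add_apply]
  linarith [norm_add_le (A 0 0) (B 0 0), norm_add_le (A 0 1) (B 0 1),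
    norm_add_le (A 1 0) (B 1 0), norm_add_le (A 1 1) (B 1 1)]

lemma nm_sub_le (A B : M2C) : nm (A - B) ≤ nm A + nm B := by
  unfold nm
  simp only [Matrix.sub_apply]
  linarith [norm_sub_le (A 0 0) (B 0 0), norm_sub_le (A 0 1) (B 0 1),
    norm_sub_le (A 1 0) (B 1 0), norm_sub_le (A 1 1) (B 1 1)]

lemma nm_smul (c : ℂ) (A : M2C) : nm (c • A) = ‖c‖ * nm A := by
  unfold nm
  simp only [Matrix.smul_apply, smul_eq_mul, norm_mul]
  ring

lemma nm_one : nm 1 = 2 := by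
  unfold nm
  simp
  norm_num

lemma nm_mul_le (A B : M2C) : nm (A * B) ≤ nm A * nm B := by
  unfold nm
  simp only [Matrix.mul_apply, Fin.sum_univ_two]
  have e : ∀ i j, ‖A i 0 * B 0 j + A i 1 * B 1 j‖ ≤ ‖A i 0‖ * ‖B 0 j‖ + ‖A i 1‖ * ‖B 1 j‖ := by
    intro i j
    refine (norm_add_le _ _).trans ?_
    rw [norm_mul, norm_mul]
  have h1 := e 0 0
  have h2 := e 0 1
  have h3 := e 1 0
  have h4 := e 1 1
  have p : ∀ i j k l, 0 ≤ ‖A i j‖ * ‖B k l‖ := fun i j k l => by positivity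
  nlinarith [p 0 0 1 0, p 0 0 1 1, p 0 1 0 0, p 0 1 0 1, p 1 0 1 0, p 1 0 1 1, p 1 1 0 0, p 1 1 0 1]

lemma nm_eq_zero {A : M2C} (h : nm A = 0) : A = 0 := by
  ext i j
  have := nm_entry A i j
  rw [h] at this
  simpa using le_antisymm this (norm_nonneg _)

lemma nm_continuous : Continuous nm := by
  unfold nm
  fun_prop

lemma nm_zero : nm 0 = 0 := by simp [nm]

lemma tl_continuous : Continuous tl := by
  unfold tl Matrix.trace
  simp only [Fin.sum_univ_two, Matrix.diag_apply]
  fun_prop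

lemma tl_00 (A : M2C) : tl A 0 0 = (A 0 0 - A 1 1) / 2 := by
  simp [tl, Matrix.trace_fin_two]; ring
lemma tl_01 (A : M2C) : tl A 0 1 = A 0 1 := by
  simp [tl]
lemma tl_10 (A : M2C) : tl A 1 0 = A 1 0 := by
  simp [tl]
lemma tl_11 (A : M2C) : tl A 1 1 = -((A 0 0 - A 1 1) / 2) := by
  simp [tl, Matrix.trace_fin_two]; ring

lemma tl_trace (A : M2C) : (tl A) 1 1 = -(tl A 0 0) := by rw [tl_11, tl_00]

lemma tl_eq (A : M2C) : A = (A.trace / 2) • (1 : M2C) + tl A := by simp [tl]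

lemma sl_mul_inv (x : SL2C) : (mx x) * (mx (x⁻¹)) = 1 := by
  rw [← mx_mul, mul_inv_cancel, mx_one]
lemma sl_inv_mul (x : SL2C) : (mx (x⁻¹)) * (mx x) = 1 := by
  rw [← mx_mul, inv_mul_cancel, mx_one]

lemma tl_conj (x : SL2C) (A : M2C) : tl ((mx (x⁻¹)) * A * (mx x)) = (mx (x⁻¹)) * tl A * (mx x) := by
  unfold tl
  rw [Matrix.trace_mul_cycle, sl_mul_inv, one_mul, mul_sub, sub_mul, mul_smul_comm, smul_mul_assoc,
    mul_one, sl_inv_mul]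

lemma sz_conj_le (x g : SL2C) : sz (x⁻¹ * g * x) ≤ nm (mx (x⁻¹)) * nm (mx x) * sz g := by
  unfold sz
  have : (mx (x⁻¹ * g * x)) = (mx (x⁻¹)) * (mx g) * (mx x) := by rw [mx_mul, mx_mul]
  rw [this, tl_conj]
  refine (nm_mul_le _ _).trans ?_
  have := nm_mul_le (mx (x⁻¹)) (tl (mx g))
  nlinarith [nm_nonneg (mx x)]

lemma sz_nonneg (g : SL2C) : 0 ≤ sz g := nm_nonneg _

lemma nm_tl_le (A : M2C) : nm (tl A) ≤ 2 * nm A := by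
  have h : nm (tl A) ≤ ‖A 0 0‖ + ‖A 1 1‖ + ‖A 0 1‖ + ‖A 1 0‖ := by
    unfold nm
    rw [tl_00, tl_01, tl_10, tl_11, norm_neg, norm_div]
    have := norm_sub_le (A 0 0) (A 1 1)
    simp
    linarith
  have := nm_nonneg A
  unfold nm at *
  linarith

lemma cval : Continuous (fun g : SL2C => (mx g)) := mx_embed.continuous

lemma sz_continuous : Continuous sz := nm_continuous.comp (tl_continuous.comp cval)

lemma centry (i j : Fin 2) : Continuous (fun g : SL2C => (mx g) i j) := by
  have := cval
  fun_prop

lemma det_eq (g : SL2C) : (mx g) 0 0 * (mx g) 1 1 - (mx g) 0 1 * (mx g) 1 0 = 1 := by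
  have := g.2; rw [Matrix.det_fin_two] at this; exact this

lemma inv_00 (g : SL2C) : (mx (g⁻¹)) 0 0 = (mx g) 1 1 := by
  simp [mx, Matrix.SpecialLinearGroup.coe_inv, Matrix.adjugate_fin_two]
lemma inv_01 (g : SL2C) : (mx (g⁻¹)) 0 1 = -(mx g) 0 1 := by
  simp [mx, Matrix.SpecialLinearGroup.coe_inv, Matrix.adjugate_fin_two]
lemma inv_10 (g : SL2C) : (mx (g⁻¹)) 1 0 = -(mx g) 1 0 := by
  simp [mx, Matrix.SpecialLinearGroup.coe_inv, Matrix.adjugate_fin_two]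
lemma inv_11 (g : SL2C) : (mx (g⁻¹)) 1 1 = (mx g) 0 0 := by
  simp [mx, Matrix.SpecialLinearGroup.coe_inv, Matrix.adjugate_fin_two]

lemma mul_e (g h : SL2C) (i j : Fin 2) : (mx (g * h)) i j = (mx g) i 0 * (mx h) 0 j + (mx g) i 1 * (mx h) 1 j := by
  simp [mx_mul, Matrix.mul_apply, Fin.sum_univ_two]

lemma sl_ext {g h : SL2C} (h0 : (mx g) 0 0 = (mx h) 0 0) (h1 : (mx g) 0 1 = (mx h) 0 1) (h2 : (mx g) 1 0 = (mx h) 1 0)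
    (h3 : (mx g) 1 1 = (mx h) 1 1) : g = h := by
  apply mx_inj
  ext i j
  fin_cases i <;> fin_cases j <;> simpa

/-- Convergence in `SL(2,ℂ)` is entrywise. -/
lemma tendsto_sl {ι : Type*} {l : Filter ι} {f : ι → SL2C} {g : SL2C} :
    Tendsto f l (𝓝 g) ↔ ∀ i j, Tendsto (fun n => (mx (f n)) i j) l (𝓝 ((mx g) i j)) := by
  rw [mx_embed.tendsto_nhds_iff]
  constructor
  · intro h i j
    exact tendsto_pi_nhds.1 (tendsto_pi_nhds.1 h i) j
  · intro h
    exact tendsto_pi_nhds.2 fun i => tendsto_pi_nhds.2 (h i)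

lemma tendsto_sl4 {ι : Type*} {l : Filter ι} {f : ι → SL2C} {g : SL2C}
    (h0 : Tendsto (fun n => (mx (f n)) 0 0) l (𝓝 ((mx g) 0 0)))
    (h1 : Tendsto (fun n => (mx (f n)) 0 1) l (𝓝 ((mx g) 0 1)))
    (h2 : Tendsto (fun n => (mx (f n)) 1 0) l (𝓝 ((mx g) 1 0)))
    (h3 : Tendsto (fun n => (mx (f n)) 1 1) l (𝓝 ((mx g) 1 1))) : Tendsto f l (𝓝 g) := by
  rw [tendsto_sl]
  intro i j
  fin_cases i <;> fin_cases j <;> assumption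

instance sl_topgroup : IsTopologicalGroup SL2C where
  continuous_mul := by
    rw [continuous_iff_continuousAt]
    rintro ⟨a, b⟩
    refine tendsto_sl.2 fun i j => ?_
    simp only [mul_e]
    have h1 : ∀ i j, Tendsto (fun n : SL2C × SL2C => mx n.1 i j) (𝓝 (a, b)) (𝓝 (mx a i j)) :=
      fun i j => ((centry i j).comp continuous_fst).tendsto (a, b)
    have h2 : ∀ i j, Tendsto (fun n : SL2C × SL2C => mx n.2 i j) (𝓝 (a, b)) (𝓝 (mx b i j)) :=
      fun i j => ((centry i j).comp continuous_snd).tendsto (a, b)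
    exact ((h1 i 0).mul (h2 0 j)).add ((h1 i 1).mul (h2 1 j))
  continuous_inv := by
    rw [continuous_iff_continuousAt]
    intro a
    refine tendsto_sl4 ?_ ?_ ?_ ?_
    · simp only [inv_00]; exact (centry 1 1).tendsto a
    · simp only [inv_01]; exact (centry 0 1).neg.tendsto a
    · simp only [inv_10]; exact (centry 1 0).neg.tendsto a
    · simp only [inv_11]; exact (centry 0 0).tendsto a

instance sl_t2 : T2Space SL2C := mx_embed.isEmbedding.t2Space
instance sl_lc : LocallyCompactSpace SL2C :=
  haveI : LocallyCompactSpace M2C := inferInstanceAs (LocallyCompactSpace (Fin 2 → Fin 2 → ℂ))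
  mx_embed.locallyCompactSpace
instance sl_sc : SecondCountableTopology SL2C :=
  haveI : SecondCountableTopology M2C :=
    inferInstanceAs (SecondCountableTopology (Fin 2 → Fin 2 → ℂ))
  mx_embed.isEmbedding.isInducing.secondCountableTopology

lemma nhds_one_basis {O : Set SL2C} (hO : O ∈ 𝓝 (1 : SL2C)) :
    ∃ δ > 0, ∀ g : SL2C, nm ((mx g) - 1) < δ → g ∈ O := by
  by_contra hc
  push Not at hc
  choose f hf hfO using fun n : ℕ => hc (1 / ((n : ℝ) + 1)) (by positivity)
  have h0 : Tendsto (fun n => nm ((mx (f n)) - 1)) atTop (𝓝 0) :=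
    squeeze_zero (fun n => nm_nonneg _) (fun n => (hf n).le) tendsto_one_div_add_atTop_nhds_zero_nat
  have : Tendsto f atTop (𝓝 1) := by
    rw [tendsto_sl]
    intro i j
    rw [tendsto_iff_norm_sub_tendsto_zero]
    rw [mx_one]
    refine squeeze_zero (fun n => norm_nonneg _) (fun n => ?_) h0
    have := nm_entry ((mx (f n)) - 1) i j
    exact this
  have := this.eventually hO
  obtain ⟨n, hn⟩ := this.exists
  exact hfO n hn

lemma nm_sub_one_mem (δ : ℝ) (hδ : 0 < δ) : {g : SL2C | nm ((mx g) - 1) < δ} ∈ 𝓝 (1 : SL2C) := by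
  have : Continuous (fun g : SL2C => nm ((mx g) - 1)) :=
    nm_continuous.comp (cval.sub continuous_const)
  refine (isOpen_lt this continuous_const).mem_nhds ?_
  simp [nm_zero, hδ, mx_one]

/-- half trace -/
def ht (g : SL2C) : ℂ := (mx g).trace / 2

lemma ht_sq (g : SL2C) : (ht g) ^ 2 = 1 + (tl (mx g) 0 0) ^ 2 + (mx g) 0 1 * (mx g) 1 0 := by
  rw [tl_00, ht, Matrix.trace_fin_two]; linear_combination det_eq g

lemma sl_eq_tl (g : SL2C) : (mx g) = (ht g) • (1 : M2C) + tl (mx g) := tl_eq _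

lemma ht_bound (g : SL2C) : ‖(ht g) ^ 2 - 1‖ ≤ sz g ^ 2 := by
  rw [ht_sq]
  have : (1 + (tl (mx g) 0 0) ^ 2 + (mx g) 0 1 * (mx g) 1 0 - 1) =
    (tl (mx g) 0 0) ^ 2 + tl (mx g) 0 1 * tl (mx g) 1 0 := by rw [tl_01, tl_10]; ring
  rw [this]
  refine (norm_add_le _ _).trans ?_
  rw [norm_pow, norm_mul]
  unfold sz nm
  have h1 := norm_nonneg (tl (mx g) 0 0)
  have h2 := norm_nonneg (tl (mx g) 0 1)
  have h3 := norm_nonneg (tl (mx g) 1 0)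
  have h4 := norm_nonneg (tl (mx g) 1 1)
  nlinarith [mul_nonneg h1 h2, mul_nonneg h1 h3, mul_nonneg h1 h4, mul_nonneg h2 h3,
    mul_nonneg h2 h4, mul_nonneg h3 h4]

lemma sz_small (g : SL2C) : nm ((mx g) - 1) ≤ 3 * sz g ∨ nm ((mx (-g)) - 1) ≤ 3 * sz g := by
  have hb := ht_bound g
  have : (ht g) ^ 2 - 1 = (ht g - 1) * (ht g + 1) := by ring
  rw [this, norm_mul] at hb
  have hs := sz_nonneg g
  have key : ‖ht g - 1‖ ≤ sz g ∨ ‖ht g + 1‖ ≤ sz g := by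
    by_contra hc
    push Not at hc
    nlinarith [hc.1, hc.2]
  rcases key with h | h
  · left
    have e : (mx g) - 1 = (ht g - 1) • (1 : M2C) + tl (mx g) := by
      conv_lhs => rw [sl_eq_tl g]
      rw [sub_smul, one_smul]; abel
    rw [e]
    refine (nm_add_le _ _).trans ?_
    rw [nm_smul, nm_one]
    unfold sz at *
    linarith
  · right
    have e : (mx (-g)) - 1 = (-(ht g + 1)) • (1 : M2C) - tl (mx g) := by
      have : (mx (-g)) = - (mx g) := mx_neg g
      rw [this]
      conv_lhs => rw [sl_eq_tl g]
      rw [neg_smul, add_smul, one_smul]; abel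
    rw [e]
    refine (nm_sub_le _ _).trans ?_
    rw [nm_smul, nm_one, norm_neg]
    unfold sz at *
    linarith

lemma sz_zero {g : SL2C} (h : sz g = 0) : g = 1 ∨ g = -1 := by
  rcases sz_small g with h1 | h1
  · left
    rw [h, mul_zero] at h1
    have := nm_eq_zero (le_antisymm h1 (nm_nonneg _))
    apply mx_inj
    rw [mx_one]
    exact sub_eq_zero.1 this
  · right
    rw [h, mul_zero] at h1
    have := nm_eq_zero (le_antisymm h1 (nm_nonneg _))
    have h2 : -g = 1 := by
      apply mx_inj
      rw [mx_one]
      exact sub_eq_zero.1 this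
    rw [← h2, neg_neg]

lemma sz_one : sz 1 = 0 := by
  simp [sz, nm, tl, Matrix.trace_fin_two, mx_one]
lemma sz_neg (g : SL2C) : sz (-g) = sz g := by
  have : (mx (-g)) = - (mx g) := mx_neg g
  have h2 : tl (-(mx g)) = (-1 : ℂ) • tl (mx g) := by
    unfold tl; rw [Matrix.trace_neg, neg_one_smul, neg_sub]
    rw [neg_div, neg_smul]; abel
  rw [sz, this, h2, nm_smul]; simp [sz]

lemma sz_le_nm (g : SL2C) : sz g ≤ 2 * nm ((mx g) - 1) := by
  have : tl (mx g) = tl ((mx g) - 1) := by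
    unfold tl
    rw [Matrix.trace_sub]
    ext i j
    fin_cases i <;> fin_cases j <;> simp [Matrix.trace_fin_two] <;> ring
  rw [sz, this]
  exact nm_tl_le _

section lattice
variable (D : Subgroup PSL2C)

/-- The projection from `SL(2,ℂ)` to the quotient. -/
def pp (g : SL2C) : XΓ D := mkX D (pr g)

/-- The preimage of the lattice in `SL(2,ℂ)`. -/
def LL : Subgroup SL2C := D.comap pr

lemma pr_cont : Continuous pr := by
  unfold pr
  exact QuotientGroup.continuous_mk

lemma pr_open : IsOpenMap pr := by
  unfold pr
  exact QuotientGroup.isOpenMap_coe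

lemma pr_surj : Function.Surjective pr := QuotientGroup.mk'_surjective _

lemma mkX_cont : Continuous (mkX D) := continuous_quotient_mk'

lemma mkX_eq (a b : PSL2C) : mkX D a = mkX D b ↔ b * a⁻¹ ∈ D := by
  unfold mkX
  rw [Quotient.eq'', QuotientGroup.rightRel_apply]

lemma pp_eq (a b : SL2C) : pp D a = pp D b ↔ ∃ γ ∈ LL D, b = γ * a := by
  unfold pp
  rw [mkX_eq]
  constructor
  · intro h
    refine ⟨b * a⁻¹, ?_, by group⟩
    simpa [LL] using h
  · rintro ⟨γ, h, rfl⟩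
    simpa [LL] using h

lemma pp_cont : Continuous (pp D) := (mkX_cont D).comp pr_cont

lemma pp_open : IsOpenMap (pp D) := by
  intro V hV
  refine isOpen_coinduced.2 ?_
  have h1 : IsOpen (pr ⁻¹' (mkX D ⁻¹' (pp D '' V))) := by
    have : (pr ⁻¹' (mkX D ⁻¹' (pp D '' V))) = ⋃ γ : LL D, (fun x => (γ : SL2C)⁻¹ * x) ⁻¹' V := by
      ext x
      simp only [Set.mem_preimage, Set.mem_image, Set.mem_iUnion]
      constructor
      · rintro ⟨v, hv, h⟩
        obtain ⟨γ, hγ, rfl⟩ := (pp_eq D v x).1 h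
        exact ⟨⟨γ, hγ⟩, by simpa using hv⟩
      · rintro ⟨γ, hv⟩
        exact ⟨_, hv, (pp_eq D _ x).2 ⟨γ, γ.2, by group⟩⟩
    rw [this]
    exact isOpen_iUnion fun γ => hV.preimage (by fun_prop)
  have h2 := pr_open _ h1
  rwa [Set.image_preimage_eq _ pr_surj] at h2

lemma pp_surj : Function.Surjective (pp D) := by
  intro x
  obtain ⟨a, rfl⟩ := Quotient.exists_rep x
  obtain ⟨g, rfl⟩ := pr_surj a
  exact ⟨g, rfl⟩

lemma act_pp (g h : SL2C) : act D (pp D g) (pr h) = pp D (g * h) := by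
  unfold pp mkX act
  rw [map_mul]
  rfl

lemma act_cont (g : PSL2C) : Continuous (fun x => act D x g) := by
  obtain ⟨h, rfl⟩ := pr_surj g
  have : Continuous ((fun x => act D x (pr h)) ∘ (pp D)) := by
    have e : (fun x => act D x (pr h)) ∘ (pp D) = fun g => pp D (g * h) := by
      ext g; exact act_pp D g h
    rw [e]
    exact (pp_cont D).comp (by fun_prop)
  exact ((pp_open D).isQuotientMap (pp_cont D) (pp_surj D)).continuous_iff.2 this

lemma neg_one_mem_LL : (-1 : SL2C) ∈ LL D := by
  have : pr (-1 : SL2C) = 1 := by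
    unfold pr
    rw [QuotientGroup.mk'_apply, QuotientGroup.eq_one_iff]
    rw [Subgroup.mem_center_iff]
    intro g
    simp
  simp [LL, this, D.one_mem]

lemma ker_pr {g : SL2C} (h : pr g = 1) : g = 1 ∨ g = -1 := by
  unfold pr at h
  rw [QuotientGroup.mk'_apply, QuotientGroup.eq_one_iff] at h
  rw [Matrix.SpecialLinearGroup.mem_center_iff] at h
  obtain ⟨r, hr, h⟩ := h
  have hr' : r ^ 2 = 1 := by simpa using hr
  have e : r = 1 ∨ r = -1 := by simpa using hr'
  have hm : mx g = (Matrix.scalar (Fin 2)) r := h.symm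
  rcases e with rfl | rfl
  · left
    apply mx_inj
    rw [hm, mx_one, map_one]
  · right
    apply mx_inj
    rw [hm, mx_neg, mx_one, map_neg, map_one]

lemma pr_neg (g : SL2C) : pr (-g) = pr g := by
  have : -g = g * (-1) := by simp
  have h2 : pr (-1 : SL2C) = 1 := by
    unfold pr
    rw [QuotientGroup.mk'_apply, QuotientGroup.eq_one_iff]
    rw [Subgroup.mem_center_iff]
    intro g
    simp
  rw [this, map_mul, h2, mul_one]

lemma LL_disc (hD : DiscreteTopology D) : ∃ η > 0, ∀ γ ∈ LL D, sz γ < η → sz γ = 0 := by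
  obtain ⟨V, hV, hV2⟩ := isOpen_induced_iff.1 (isOpen_discrete ({1} : Set D))
  have h1 : pr ⁻¹' V ∈ 𝓝 (1 : SL2C) := by
    refine (hV.preimage pr_cont).mem_nhds ?_
    rw [Set.mem_preimage, map_one]
    have : (1 : D) ∈ Subtype.val ⁻¹' V := by rw [hV2]; rfl
    exact this
  obtain ⟨δ, hδ, hb⟩ := nhds_one_basis h1
  refine ⟨δ / 3, by positivity, fun γ hγ hs => ?_⟩
  have key : pr γ ∈ V → sz γ = 0 := by
    intro h
    have : (⟨pr γ, hγ⟩ : D) ∈ Subtype.val ⁻¹' V := h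
    rw [hV2, Set.mem_singleton_iff, Subtype.ext_iff] at this
    rcases ker_pr this with rfl | rfl
    · exact sz_one
    · rw [sz_neg, sz_one]
  rcases sz_small γ with h | h
  · exact key (hb γ (by linarith))
  · have := hb (-γ) (by linarith)
    rw [Set.mem_preimage, pr_neg] at this
    exact key this

lemma one_ne_neg_one : (1 : SL2C) ≠ -1 := by
  intro h
  have := congrArg (fun g => mx g 0 0) h
  simp only [mx_neg, mx_one] at this
  norm_num at this

lemma disc_of {L : Subgroup SL2C} (h : ∃ η > 0, ∀ γ ∈ L, sz γ < η → sz γ = 0) :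
    DiscreteTopology L := by
  obtain ⟨η, hη, h⟩ := h
  apply discreteTopology_of_isOpen_singleton_one
  have ho : IsOpen ({g : SL2C | sz g < η} ∩ {-1}ᶜ) :=
    (isOpen_lt sz_continuous continuous_const).inter isOpen_compl_singleton
  convert ho.preimage (continuous_subtype_val (p := fun g => g ∈ L)) using 1
  ext ⟨γ, hγ⟩
  simp only [Set.mem_singleton_iff, Set.mem_preimage, Set.mem_inter_iff, Set.mem_ofPred_eq,
    Set.mem_compl_iff]
  constructor
  · intro e
    have : γ = 1 := congrArg Subtype.val e
    subst this
    exact ⟨by rw [sz_one]; exact hη, one_ne_neg_one⟩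
  · rintro ⟨h1, h2⟩
    rcases sz_zero (h γ hγ h1) with h3 | h3
    · exact Subtype.ext h3
    · exact absurd h3 h2

end lattice

/-- The set of `g` at which all nontrivial conjugates have size at least `ε`. -/
def Wset (L : Subgroup SL2C) (ε : ℝ) : Set SL2C :=
  {g | ∀ γ ∈ L, sz γ ≠ 0 → ε ≤ sz (g⁻¹ * γ * g)}

/-- The properties of a lattice used in the proof. -/
structure LatHyp (L : Subgroup SL2C) : Prop where
  neg : (-1 : SL2C) ∈ L
  disc : ∃ η > 0, ∀ γ ∈ L, sz γ < η → sz γ = 0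
  recur : ∀ (a : SL2C) (V : Set SL2C), IsOpen V → V.Nonempty → ∀ N : ℕ,
    ∃ k ≥ N, ∃ x ∈ V, ∃ γ ∈ L, γ * x * a ^ k ∈ V
  cpt : ∀ ε > 0, ∃ K, IsCompact K ∧ ∀ g ∈ Wset L ε, ∃ γ ∈ L, γ * g ∈ K

set_option linter.unusedSectionVars false

lemma inj_ball {L : Subgroup SL2C} (hneg : (-1 : SL2C) ∈ L) (ε : ℝ) (hε : 0 < ε) :
    ∃ B C : Set SL2C, IsOpen B ∧ (1 : SL2C) ∈ B ∧ IsCompact C ∧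
      (∀ b ∈ B, ∀ b' ∈ B, b * b'⁻¹ ∈ C) ∧
      ∀ g ∈ Wset L ε, ∀ b ∈ B, ∀ b' ∈ B, ∀ γ ∈ L, γ * (g * b) = g * b' → γ = 1 := by
  obtain ⟨C, hC, hC1⟩ := exists_compact_mem_nhds (1 : SL2C)
  obtain ⟨O, hO, hO1, hOp⟩ : ∃ O : Set SL2C, IsOpen O ∧ (1 : SL2C) ∈ O ∧
      ∀ g ∈ O, sz g < ε ∧ g ≠ -1 := by
    refine ⟨{g : SL2C | sz g < ε} ∩ {-1}ᶜ,
      (isOpen_lt sz_continuous continuous_const).inter isOpen_compl_singleton, ⟨?_, ?_⟩, ?_⟩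
    · simpa [sz_one] using hε
    · exact one_ne_neg_one
    · intro g hg
      exact hg
  have h1 : O ∩ C ∈ 𝓝 (1 : SL2C) := inter_mem (hO.mem_nhds hO1) hC1
  have hc : Continuous (fun z : SL2C × SL2C => z.1 * z.2⁻¹) := by fun_prop
  have h2 := hc.tendsto (1, 1)
  simp only [inv_one, mul_one] at h2
  have h3 := h2 h1
  rw [Filter.mem_map, nhds_prod_eq, Filter.mem_prod_self_iff] at h3
  obtain ⟨t, ht, hsub⟩ := h3
  obtain ⟨B, hB, hBo, hB1⟩ := mem_nhds_iff.1 ht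
  have key : ∀ b ∈ B, ∀ b' ∈ B, b * b'⁻¹ ∈ O ∩ C :=
    fun b hb b' hb' => hsub (Set.mk_mem_prod (hB hb) (hB hb'))
  refine ⟨B, C, hBo, hB1, hC, fun b hb b' hb' => (key b hb b' hb').2, ?_⟩
  intro g hg b hb b' hb' γ hγ e
  have e2 : g⁻¹ * γ * g = b' * b⁻¹ := by
    have : b' = g⁻¹ * (γ * (g * b)) := by rw [e]; group
    rw [this]; group
  obtain ⟨k1, k2⟩ := hOp _ (key b' hb' b hb).1
  rw [← e2] at k1 k2
  by_cases hs : sz γ = 0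
  · rcases sz_zero hs with h | h
    · exact h
    · exfalso
      apply k2
      rw [h]
      simp
  · exact absurd (hg γ hγ hs) (not_le.2 k1)

lemma mem_Wset_of_disc {L : Subgroup SL2C} (h : ∃ η > 0, ∀ γ ∈ L, sz γ < η → sz γ = 0)
    (x : SL2C) : ∃ ε > 0, x ∈ Wset L ε := by
  obtain ⟨η, hη, h⟩ := h
  set c := nm (mx (x⁻¹)⁻¹) * nm (mx x⁻¹) with hc
  have hc0 : 0 ≤ c := mul_nonneg (nm_nonneg _) (nm_nonneg _)
  refine ⟨η / (c + 1), by positivity, fun γ hγ hs => ?_⟩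
  have h1 := sz_conj_le x⁻¹ (x⁻¹ * γ * x)
  have e : (x⁻¹)⁻¹ * (x⁻¹ * γ * x) * x⁻¹ = γ := by group
  rw [e, ← hc] at h1
  have h2 : η ≤ sz γ := by
    by_contra hlt
    exact hs (h γ hγ (not_le.1 hlt))
  rw [div_le_iff₀ (by positivity)]
  nlinarith [sz_nonneg (x⁻¹ * γ * x)]

instance sl_meas : MeasurableSpace SL2C := borel SL2C
instance sl_borel : BorelSpace SL2C := ⟨rfl⟩

section meas
open MeasureTheory
variable (D : Subgroup PSL2C) [MeasurableSpace (XΓ D)] [BorelSpace (XΓ D)]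
  (μ : Measure (XΓ D)) [IsFiniteMeasure μ]

lemma act_mp (hinv : ∀ g : PSL2C, Measure.map (fun x => act D x g) μ = μ) (g : PSL2C) :
    MeasurePreserving (fun x => act D x g) μ μ := ⟨(act_cont D g).measurable, hinv g⟩

lemma act_img (S : Set SL2C) (h : SL2C) :
    pp D '' ((fun x => x * h) '' S) = (fun x => act D x (pr h⁻¹)) ⁻¹' (pp D '' S) := by
  ext x
  constructor
  · rintro ⟨_, ⟨s, hs, rfl⟩, rfl⟩
    refine ⟨s, hs, ?_⟩
    dsimp only
    rw [act_pp, mul_inv_cancel_right]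
  · rintro ⟨s, hs, hx⟩
    obtain ⟨g, rfl⟩ := pp_surj D x
    dsimp only at hx
    rw [act_pp, pp_eq] at hx
    obtain ⟨γ, hγ, e⟩ := hx
    refine ⟨s * h, ⟨s, hs, rfl⟩, ?_⟩
    rw [pp_eq]
    refine ⟨γ, hγ, ?_⟩
    rw [← mul_assoc, ← e]; group

lemma mu_img (hinv : ∀ g : PSL2C, Measure.map (fun x => act D x g) μ = μ) (S : Set SL2C)
    (hS : MeasurableSet (pp D '' S)) (h : SL2C) :
    μ (pp D '' ((fun x => x * h) '' S)) = μ (pp D '' S) := by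
  rw [act_img]
  exact (act_mp D μ hinv _).measure_preimage hS.nullMeasurableSet

lemma mu_open_pos (h0 : μ ≠ 0) (hinv : ∀ g : PSL2C, Measure.map (fun x => act D x g) μ = μ)
    (V : Set SL2C) (hV : IsOpen V) (hne : V.Nonempty) : μ (pp D '' V) ≠ 0 := by
  intro hz
  apply h0
  rw [← Measure.measure_univ_eq_zero]
  obtain ⟨S, hSc, hSd⟩ := TopologicalSpace.exists_countable_dense SL2C
  have hcov : (Set.univ : Set (XΓ D)) ⊆ ⋃ s ∈ S, pp D '' ((fun x => x * s) '' V) := by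
    intro x _
    obtain ⟨g, rfl⟩ := pp_surj D x
    have ho : IsOpen ((fun s : SL2C => g * s⁻¹) ⁻¹' V) := hV.preimage (by fun_prop)
    obtain ⟨v, hv⟩ := hne
    obtain ⟨s, hs, hsS⟩ := hSd.inter_open_nonempty _ ho ⟨v⁻¹ * g, by simpa using hv⟩
    simp only [Set.mem_iUnion]
    exact ⟨s, hsS, g, ⟨g * s⁻¹, hs, by simp⟩, rfl⟩
  refine measure_mono_null hcov ?_
  rw [measure_biUnion_null_iff hSc]
  intro s _
  rw [mu_img D μ hinv V (pp_open D V hV).measurableSet, hz]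

lemma recur_of (h0 : μ ≠ 0) (hinv : ∀ g : PSL2C, Measure.map (fun x => act D x g) μ = μ)
    (a : SL2C) (V : Set SL2C) (hV : IsOpen V) (hne : V.Nonempty) (N : ℕ) :
    ∃ k ≥ N, ∃ x ∈ V, ∃ γ ∈ LL D, γ * x * a ^ k ∈ V := by
  have hc := (act_mp D μ hinv (pr a)).conservative
  obtain ⟨m, hm, hmne⟩ := hc.exists_gt_measure_inter_ne_zero
    (pp_open D V hV).measurableSet.nullMeasurableSet (mu_open_pos D μ h0 hinv V hV hne) N
  obtain ⟨x, ⟨v, hv, rfl⟩, hx⟩ := nonempty_of_measure_ne_zero hmne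
  refine ⟨m, hm.le, v, hv, ?_⟩
  have it : ∀ k : ℕ, (fun x => act D x (pr a))^[k] (pp D v) = pp D (v * a ^ k) := by
    intro k
    induction k with
    | zero => simp
    | succ k ih => rw [Function.iterate_succ_apply', ih, act_pp, pow_succ, mul_assoc]
  rw [Set.mem_preimage, it] at hx
  obtain ⟨w, hw, e⟩ := hx
  obtain ⟨γ, hγ, e⟩ := (pp_eq D _ _).1 e.symm
  exact ⟨γ, hγ, by rw [mul_assoc, ← e]; exact hw⟩

lemma exists_cover (hd : ∃ η > 0, ∀ γ ∈ LL D, sz γ < η → sz γ = 0) :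
    ∃ V : ℕ → Set SL2C, (∀ i, IsOpen (V i)) ∧ (⋃ i, V i) = Set.univ ∧
      ∀ i, Set.InjOn (pp D) (V i) := by
  have h1 : ∀ x : SL2C, ∃ V : Set SL2C, IsOpen V ∧ x ∈ V ∧ Set.InjOn (pp D) V := by
    intro x
    obtain ⟨ε, hε, hx⟩ := mem_Wset_of_disc hd x
    obtain ⟨B, C, hB, hB1, -, -, h⟩ := inj_ball (neg_one_mem_LL D) ε hε
    refine ⟨(fun y => x⁻¹ * y) ⁻¹' B, hB.preimage (by fun_prop), by simpa using hB1, ?_⟩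
    intro y hy z hz e
    obtain ⟨γ, hγ, e⟩ := (pp_eq D _ _).1 e
    have := h x hx _ hy _ hz γ hγ (by rw [e]; group)
    rw [e, this, one_mul]
  choose V hVo hVx hVi using h1
  obtain ⟨s, hs, hc⟩ := TopologicalSpace.countable_cover_nhds
    (fun x => (hVo x).mem_nhds (hVx x))
  have hne : s.Nonempty := by
    by_contra hn
    rw [Set.not_nonempty_iff_eq_empty] at hn
    subst hn
    simp only [Set.mem_empty_iff_false, Set.iUnion_of_empty, Set.iUnion_empty] at hc
    exact Set.empty_ne_univ hc
  obtain ⟨f, rfl⟩ := hs.exists_eq_range hne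
  refine ⟨fun i => V (f i), fun i => hVo _, ?_, fun i => hVi _⟩
  simpa using hc

lemma exists_lift (hd : ∃ η > 0, ∀ γ ∈ LL D, sz γ < η → sz γ = 0)
    (hinv : ∀ g : PSL2C, Measure.map (fun x => act D x g) μ = μ) :
    ∃ m : Measure SL2C, IsFiniteMeasureOnCompacts m ∧ m.IsMulRightInvariant ∧
      ∀ T, MeasurableSet T → Set.InjOn (pp D) T → m T = μ (pp D '' T) := by
  obtain ⟨V, hVo, hVc, hVi⟩ := exists_cover D hd
  have hemb : ∀ i, MeasurableEmbedding (fun x : V i => pp D x) := by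
    intro i
    have : IsOpenEmbedding (fun x : V i => pp D x) := by
      refine IsOpenEmbedding.of_continuous_injective_isOpenMap
        ((pp_cont D).comp continuous_subtype_val) ?_ ?_
      · intro x y e
        exact Subtype.ext (hVi i x.2 y.2 e)
      · exact (pp_open D).comp (hVo i).isOpenMap_subtype_val
    exact this.measurableEmbedding
  have himg : ∀ i (S : Set SL2C), (fun x : V i => pp D x) '' (Subtype.val ⁻¹' S) = pp D '' (S ∩ V i) := by
    intro i S
    ext x
    constructor
    · rintro ⟨⟨y, hy⟩, hyS, rfl⟩
      exact ⟨y, ⟨hyS, hy⟩, rfl⟩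
    · rintro ⟨y, ⟨hyS, hy⟩, rfl⟩
      exact ⟨⟨y, hy⟩, hyS, rfl⟩
  have hmeas : ∀ i (S : Set SL2C), MeasurableSet S → S ⊆ V i → MeasurableSet (pp D '' S) := by
    intro i S hS hSV
    have := (hemb i).measurableSet_image.2 (measurable_subtype_coe hS)
    rwa [himg, Set.inter_eq_left.2 hSV] at this
  set P := disjointed V with hP
  have hPm : ∀ i, MeasurableSet (P i) := MeasurableSet.disjointed fun i => (hVo i).measurableSet
  have hPV : ∀ i, P i ⊆ V i := fun i => disjointed_subset V i
  have hPc : (⋃ i, P i) = Set.univ := by rw [hP, iUnion_disjointed, hVc]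
  have hPd : Pairwise (Function.onFun Disjoint P) := disjoint_disjointed V
  set m : Measure SL2C := Measure.sum fun i =>
    ((Measure.comap (fun x : V i => pp D x) μ).map Subtype.val).restrict (P i) with hm
  have hmS : ∀ S, MeasurableSet S → m S = ∑' i, μ (pp D '' (S ∩ P i)) := by
    intro S hS
    rw [hm, Measure.sum_apply _ hS]
    congr 1
    ext1 i
    rw [Measure.restrict_apply hS, Measure.map_apply measurable_subtype_coe (hS.inter (hPm i)),
      (hemb i).comap_apply, himg, Set.inter_eq_left.2 (Set.inter_subset_right.trans (hPV i))]
  have hmT : ∀ T, MeasurableSet T → Set.InjOn (pp D) T → m T = μ (pp D '' T) := by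
    intro T hT hi
    rw [hmS T hT]
    have e : pp D '' T = ⋃ i, pp D '' (T ∩ P i) := by
      rw [← Set.image_iUnion, ← Set.inter_iUnion, hPc, Set.inter_univ]
    rw [e, measure_iUnion]
    · intro i j hij
      have h1 : Disjoint (T ∩ P i) (T ∩ P j) :=
        (hPd hij).mono Set.inter_subset_right Set.inter_subset_right
      exact h1.image hi Set.inter_subset_left Set.inter_subset_left
    · intro i
      exact hmeas i _ (hT.inter (hPm i)) (Set.inter_subset_right.trans (hPV i))
  refine ⟨m, ?_, ?_, hmT⟩
  · have : IsLocallyFiniteMeasure m := by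
      refine ⟨fun x => ?_⟩
      have hx : x ∈ ⋃ i, V i := by rw [hVc]; trivial
      obtain ⟨i, hi⟩ := Set.mem_iUnion.1 hx
      refine ⟨V i, (hVo i).mem_nhds hi, ?_⟩
      rw [hmT _ (hVo i).measurableSet (hVi i)]
      exact measure_lt_top _ _
    infer_instance
  · refine ⟨fun g => ?_⟩
    ext S hS
    rw [Measure.map_apply (by fun_prop) hS]
    have hpre : ∀ A : Set SL2C, (fun x => x * g) ⁻¹' A = (fun x => x * g⁻¹) '' A := by
      intro A
      ext x
      simp
    have hc : ∀ A : Set SL2C, A = ⋃ i, A ∩ P i := fun A => by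
      rw [← Set.inter_iUnion, hPc, Set.inter_univ]
    have hdis : Pairwise (Function.onFun Disjoint fun i => S ∩ P i) := fun i j hij =>
      (hPd hij).mono Set.inter_subset_right Set.inter_subset_right
    rw [hc S, Set.preimage_iUnion, measure_iUnion hdis (fun i => hS.inter (hPm i)),
      measure_iUnion]
    · congr 1
      ext1 i
      have inj1 : Set.InjOn (pp D) (S ∩ P i) :=
        (hVi i).mono (Set.inter_subset_right.trans (hPV i))
      have hSi := hS.inter (hPm i)
      rw [hmT _ hSi inj1, hmT, hpre, mu_img D μ hinv]
      · exact hmeas i _ hSi (Set.inter_subset_right.trans (hPV i))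
      · exact measurable_mul_const g hSi
      · intro x hx y hy e
        have : pp D (x * g) = pp D (y * g) := by rw [← act_pp, ← act_pp, e]
        exact mul_right_cancel (inj1 hx hy this)
    · intro i j hij
      exact (hdis hij).preimage _
    · intro i
      exact measurable_mul_const g (hS.inter (hPm i))

lemma haar_right (g : SL2C) : Measure.map (· * g) (Measure.haar : Measure SL2C) = Measure.haar := by
  have h1 : ∀ g : SL2C, (Measure.modularCharacter (G := SL2C)).toHomUnits g = 1 := by
    intro g
    have h2 : commutator SL2C ≤ (Measure.modularCharacter (G := SL2C)).toHomUnits.ker :=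
      Abelianization.commutator_subset_ker _
    have h3 : commutator SL2C = ⊤ :=
      Matrix.SL2.commutator_eq_top (F := ℂ) (a := 2) (by norm_num) (by norm_num)
    rw [h3] at h2
    exact h2 (Subgroup.mem_top g)
  have h2 := congrArg Units.val (h1 g)
  rw [MonoidHom.coe_toHomUnits] at h2
  have h3 : Measure.modularCharacterFun g = 1 := h2
  rw [Measure.map_right_mul_eq_modularCharacterFun_smul, h3, one_smul]

lemma lift_left (m : Measure SL2C) [IsFiniteMeasureOnCompacts m] [m.IsMulRightInvariant]
    (g : SL2C) (S : Set SL2C) (hS : MeasurableSet S) : m ((fun x => g * x) ⁻¹' S) = m S := by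
  have hk : IsFiniteMeasureOnCompacts m.inv := by
    refine ⟨fun K hK => ?_⟩
    rw [Measure.inv_apply]
    exact hK.inv.measure_lt_top
  have e := Measure.isMulLeftInvariant_eq_smul m.inv (Measure.haar : Measure SL2C)
  have e2 : m = m.inv.inv := by rw [Measure.inv_inv]
  rw [e2, e]
  simp only [Measure.inv_apply]
  have h3 : ((fun x => g * x) ⁻¹' S)⁻¹ = (fun x => x * g⁻¹) ⁻¹' S⁻¹ := by
    ext x; simp
  rw [h3]
  simp only [Measure.smul_apply]
  congr 1
  rw [← Measure.map_apply (measurable_mul_const _) hS.inv, haar_right]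

lemma cpt_of (h0 : μ ≠ 0) (hd : ∃ η > 0, ∀ γ ∈ LL D, sz γ < η → sz γ = 0)
    (hinv : ∀ g : PSL2C, Measure.map (fun x => act D x g) μ = μ) (ε : ℝ) (hε : 0 < ε) :
    ∃ K, IsCompact K ∧ ∀ g ∈ Wset (LL D) ε, ∃ γ ∈ LL D, γ * g ∈ K := by
  obtain ⟨m, hm1, hm2, hm⟩ := exists_lift D μ hd hinv
  obtain ⟨B, C, hB, hB1, hC, hBC, hinj⟩ := inj_ball (neg_one_mem_LL D) ε hε
  by_cases hW : (Wset (LL D) ε).Nonempty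
  swap
  · refine ⟨∅, isCompact_empty, fun g hg => absurd ⟨g, hg⟩ hW⟩
  set gB : SL2C → Set SL2C := fun g => (fun x => g⁻¹ * x) ⁻¹' B with hgB
  have hgBo : ∀ g, IsOpen (gB g) := fun g => hB.preimage (by fun_prop)
  have hgm : ∀ g, m (gB g) = m B := fun g => lift_left m g⁻¹ B hB.measurableSet
  have hgp : ∀ g ∈ Wset (LL D) ε, μ (pp D '' gB g) = m B := by
    intro g hg
    rw [← hgm g, hm _ (hgBo g).measurableSet]
    intro y hy z hz e
    obtain ⟨γ, hγ, e⟩ := (pp_eq D _ _).1 e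
    have := hinj g hg _ hy _ hz γ hγ (by rw [e]; group)
    rw [e, this, one_mul]
  have hpos : m B ≠ 0 := by
    obtain ⟨g, hg⟩ := hW
    rw [← hgp g hg]
    exact mu_open_pos D μ h0 hinv _ (hgBo g) ⟨g, by simpa [hgB] using hB1⟩
  set Q : Set ℕ := {n | ∃ s : Finset SL2C, s.card = n ∧ (∀ g ∈ s, g ∈ Wset (LL D) ε) ∧
    (s : Set SL2C).PairwiseDisjoint (fun g => pp D '' gB g)} with hQ
  have hQb : BddAbove Q := by
    obtain ⟨N, hN⟩ := ENNReal.exists_nat_mul_gt hpos (measure_ne_top μ Set.univ)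
    refine ⟨N, ?_⟩
    rintro n ⟨s, rfl, hsW, hsd⟩
    have h1 : μ (⋃ g ∈ s, pp D '' gB g) = ∑ g ∈ s, μ (pp D '' gB g) :=
      measure_biUnion_finset hsd (fun g _ => (pp_open D _ (hgBo g)).measurableSet)
    rw [Finset.sum_congr rfl (fun g hg => hgp g (hsW g hg)), Finset.sum_const, nsmul_eq_mul] at h1
    have h2 : (s.card : ENNReal) * m B < N * m B :=
      lt_of_le_of_lt (h1 ▸ measure_mono (Set.subset_univ _)) hN
    by_contra hlt
    have h3 : (N : ENNReal) ≤ s.card := by exact_mod_cast (not_le.1 hlt).le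
    exact absurd h2 (not_lt.2 (by gcongr))
  have hQn : Q.Nonempty := ⟨0, ∅, by simp⟩
  obtain ⟨s, hsc, hsW, hsd⟩ := Nat.sSup_mem hQn hQb
  refine ⟨⋃ g ∈ s, (fun x => g * x) '' C, s.isCompact_biUnion fun g _ => hC.image (by fun_prop), ?_⟩
  intro g hg
  by_contra hno
  push Not at hno
  have hdis : ∀ g' ∈ s, Disjoint (pp D '' gB g) (pp D '' gB g') := by
    intro g' hg'
    rw [Set.disjoint_left]
    rintro _ ⟨x, hx, rfl⟩ ⟨y, hy, e⟩
    obtain ⟨γ, hγ, e⟩ := (pp_eq D _ _).1 e.symm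
    apply hno γ hγ
    simp only [Set.mem_iUnion]
    refine ⟨g', hg', (g'⁻¹ * y) * (g⁻¹ * x)⁻¹, hBC _ hy _ hx, ?_⟩
    dsimp only
    rw [e]; group
  have hgs : g ∉ s := by
    intro hgs
    have := hdis g hgs
    rw [disjoint_self] at this
    have h1 : pp D g ∈ pp D '' gB g := ⟨g, by simpa [hgB] using hB1, rfl⟩
    rw [this] at h1
    exact h1
  have : s.card + 1 ∈ Q := by
    classical
    refine ⟨insert g s, Finset.card_insert_of_notMem hgs, ?_, ?_⟩
    · intro x hx
      rcases Finset.mem_insert.1 hx with rfl | hx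
      · exact hg
      · exact hsW x hx
    · rw [Finset.coe_insert]
      exact hsd.insert fun j hj _ => hdis j hj
  have := le_csSup hQb this
  omega

end meas

lemma latHyp_of (D : Subgroup PSL2C) (hD : DiscreteTopology D) (hl : IsLattice D) :
    LatHyp (LL D) := by
  letI : MeasurableSpace (XΓ D) := borel _
  haveI : BorelSpace (XΓ D) := ⟨rfl⟩
  obtain ⟨μ, h0, hf, hinv⟩ := hl
  exact ⟨neg_one_mem_LL D, LL_disc D hD, fun a V hV hne N => recur_of D μ h0 hinv a V hV hne N,
    fun ε hε => cpt_of D μ h0 (LL_disc D hD) hinv ε hε⟩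

lemma u00 (z : ℂ) : mx (uMat z) 0 0 = 1 := rfl
lemma u01 (z : ℂ) : mx (uMat z) 0 1 = z := rfl
lemma u10 (z : ℂ) : mx (uMat z) 1 0 = 0 := rfl
lemma u11 (z : ℂ) : mx (uMat z) 1 1 = 1 := rfl

/-- The diagonal matrix with entries `exp t`, `exp (-t)`. -/
def aE (t : ℝ) : SL2C := ⟨!![(Real.exp t : ℂ), 0; 0, (Real.exp (-t) : ℂ)], by
  simp only [Matrix.det_fin_two_of]
  rw [mul_zero, sub_zero, ← Complex.ofReal_mul, ← Real.exp_add]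
  simp⟩

lemma a00 (t : ℝ) : mx (aE t) 0 0 = (Real.exp t : ℂ) := rfl
lemma a01 (t : ℝ) : mx (aE t) 0 1 = 0 := rfl
lemma a10 (t : ℝ) : mx (aE t) 1 0 = 0 := rfl
lemma a11 (t : ℝ) : mx (aE t) 1 1 = (Real.exp (-t) : ℂ) := rfl

lemma uMat_add (z w : ℂ) : uMat (z + w) = uMat z * uMat w := by
  apply sl_ext <;> simp only [mul_e, u00, u01, u10, u11] <;> ring
lemma uMat_zero : uMat 0 = 1 := by
  apply sl_ext <;> simp [u00, u01, u10, u11, mx_one]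
lemma uMat_inv (z : ℂ) : (uMat z)⁻¹ = uMat (-z) := by
  apply sl_ext <;> simp [u00, u01, u10, u11, inv_00, inv_01, inv_10, inv_11]

lemma aE_add (s t : ℝ) : aE (s + t) = aE s * aE t := by
  apply sl_ext <;> simp only [mul_e, a00, a01, a10, a11, neg_add, Real.exp_add] <;> push_cast <;> ring
lemma aE_inv (t : ℝ) : (aE t)⁻¹ = aE (-t) := by
  apply sl_ext <;> simp [a00, a01, a10, a11, inv_00, inv_01, inv_10, inv_11]
lemma aE_pow (t : ℝ) (k : ℕ) : aE t ^ k = aE (k * t) := by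
  induction k with
  | zero => apply sl_ext <;> simp [a00, a01, a10, a11, mx_one]
  | succ k ih => rw [pow_succ, ih, ← aE_add]; congr 1; push_cast; ring

lemma uMat_cont : Continuous uMat := by
  rw [continuous_iff_continuousAt]
  intro z
  refine tendsto_sl4 ?_ ?_ ?_ ?_ <;> simp only [u00, u01, u10, u11]
  · exact tendsto_const_nhds
  · exact tendsto_id
  · exact tendsto_const_nhds
  · exact tendsto_const_nhds
lemma aE_cont : Continuous aE := by
  rw [continuous_iff_continuousAt]
  intro z
  refine tendsto_sl4 ?_ ?_ ?_ ?_ <;> simp only [a00, a01, a10, a11]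
  · exact Continuous.tendsto (by fun_prop) z
  · exact tendsto_const_nhds
  · exact tendsto_const_nhds
  · exact Continuous.tendsto (by fun_prop) z

lemma tl_prop {P Q : M2C} (h : P * Q = Q * P) (hP : tl P ≠ 0) : ∃ c : ℂ, tl Q = c • tl P := by
  have e0 : P 0 1 * Q 1 0 = Q 0 1 * P 1 0 := by
    have := congrFun (congrFun h 0) 0
    simp only [Matrix.mul_apply, Fin.sum_univ_two] at this
    linear_combination this
  have e1 : (P 0 0 - P 1 1) * Q 0 1 = (Q 0 0 - Q 1 1) * P 0 1 := by
    have := congrFun (congrFun h 0) 1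
    simp only [Matrix.mul_apply, Fin.sum_univ_two] at this
    linear_combination this
  have e2 : (P 0 0 - P 1 1) * Q 1 0 = (Q 0 0 - Q 1 1) * P 1 0 := by
    have := congrFun (congrFun h 1) 0
    simp only [Matrix.mul_apply, Fin.sum_univ_two] at this
    linear_combination -this
  have fin : ∀ c : ℂ, Q 0 0 - Q 1 1 = c * (P 0 0 - P 1 1) → Q 0 1 = c * P 0 1 →
      Q 1 0 = c * P 1 0 → tl Q = c • tl P := by
    intro c h0 h1 h2
    ext i j
    fin_cases i <;> fin_cases j <;>
      simp only [Fin.zero_eta, Fin.mk_one, Fin.isValue, Matrix.smul_apply, smul_eq_mul, tl_00, tl_01, tl_10, tl_11]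
    · linear_combination h0 / 2
    · exact h1
    · exact h2
    · linear_combination -h0 / 2
  by_cases ha : P 0 0 - P 1 1 = 0
  · by_cases hb : P 0 1 = 0
    · by_cases hc : P 1 0 = 0
      · exfalso
        apply hP
        ext i j
        fin_cases i <;> fin_cases j <;> simp [tl_00, tl_01, tl_10, tl_11, ha, hb, hc]
      · refine ⟨Q 1 0 / P 1 0, fin _ ?_ ?_ ?_⟩ <;> field_simp
        · linear_combination -e2
        · linear_combination -e0
    · refine ⟨Q 0 1 / P 0 1, fin _ ?_ ?_ ?_⟩ <;> field_simp
      · linear_combination -e1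
      · linear_combination e0
  · refine ⟨(Q 0 0 - Q 1 1) / (P 0 0 - P 1 1), fin _ ?_ ?_ ?_⟩ <;> field_simp
    · linear_combination e1
    · linear_combination e2

lemma comm_of_prop {g h : SL2C} (c : ℂ) (e : tl (mx h) = c • tl (mx g)) : g * h = h * g := by
  apply mx_inj
  rw [mx_mul, mx_mul, sl_eq_tl h, e, sl_eq_tl g]
  simp only [mul_add, add_mul, smul_mul_assoc, mul_smul_comm, one_mul, mul_one, tl]
  ext i j
  simp
  ring

lemma sz_eq_zero_iff_tl {g : SL2C} : sz g = 0 ↔ tl (mx g) = 0 :=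
  ⟨fun h => nm_eq_zero h, fun h => by rw [sz, h, nm_zero]⟩

lemma tl_prop' {g h : SL2C} (e : g * h = h * g) (hg : sz g ≠ 0) :
    ∃ c : ℂ, tl (mx h) = c • tl (mx g) := by
  apply tl_prop
  · rw [← mx_mul, ← mx_mul, e]
  · exact fun h => hg (sz_eq_zero_iff_tl.2 h)

lemma comm_trans {g h k : SL2C} (hh : sz h ≠ 0) (e1 : g * h = h * g) (e2 : h * k = k * h) :
    g * k = k * g := by
  obtain ⟨c, hc⟩ := tl_prop' e1.symm hh
  obtain ⟨d, hd⟩ := tl_prop' e2 hh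
  by_cases h0 : c = 0
  · have : sz g = 0 := sz_eq_zero_iff_tl.2 (by rw [hc, h0, zero_smul])
    rcases sz_zero this with rfl | rfl <;> simp
  · refine comm_of_prop (d / c) ?_
    rw [hd, hc, smul_smul, div_mul_cancel₀ _ h0]

lemma nm_inv (g : SL2C) : nm (mx g⁻¹) = nm (mx g) := by
  unfold nm
  rw [inv_00, inv_01, inv_10, inv_11, norm_neg, norm_neg]; ring

/-- The Zassenhaus constant. -/
def ε0 : ℝ := 1 / 1000

lemma nm_le_of_small {g : SL2C} (h : sz g < ε0) : nm (mx g) ≤ 3 := by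
  unfold ε0 at h
  rcases sz_small g with h1 | h1
  · have e : mx g = (mx g - 1) + 1 := by simp
    rw [e]
    refine (nm_add_le _ _).trans ?_
    rw [nm_one]; linarith
  · have e : mx g = (-1 : ℂ) • ((mx (-g) - 1) + 1) := by rw [mx_neg]; simp
    rw [e, nm_smul]
    have := nm_add_le (mx (-g) - 1) 1
    rw [nm_one] at this
    simp only [norm_neg, norm_one, one_mul]
    linarith

lemma sz_commutator {A B : SL2C} (hA : sz A < ε0) (hB : sz B < ε0) :
    sz (A * B * A⁻¹ * B⁻¹) ≤ 36 * sz A * sz B := by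
  have e : mx (A * B * A⁻¹ * B⁻¹) - 1 =
      (tl (mx A) * tl (mx B) - tl (mx B) * tl (mx A)) * mx A⁻¹ * mx B⁻¹ := by
    have e1 : tl (mx A) * tl (mx B) - tl (mx B) * tl (mx A) = mx A * mx B - mx B * mx A := by
      unfold tl
      simp only [mul_sub, sub_mul, smul_mul_assoc, mul_smul_comm, one_mul, mul_one]
      ext i j
      simp
      ring
    rw [e1, sub_mul, sub_mul, mx_mul, mx_mul, mx_mul]
    congr 1
    rw [← mx_one, ← mx_mul, ← mx_mul, ← mx_mul]
    congr 1
    group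
  refine (sz_le_nm _).trans ?_
  rw [e]
  have h1 := nm_mul_le ((tl (mx A) * tl (mx B) - tl (mx B) * tl (mx A)) * mx A⁻¹) (mx B⁻¹)
  have h2 := nm_mul_le (tl (mx A) * tl (mx B) - tl (mx B) * tl (mx A)) (mx A⁻¹)
  have h3 := nm_sub_le (tl (mx A) * tl (mx B)) (tl (mx B) * tl (mx A))
  have h4 := nm_mul_le (tl (mx A)) (tl (mx B))
  have h5 := nm_mul_le (tl (mx B)) (tl (mx A))
  rw [nm_inv] at h1 h2
  have h6 := nm_le_of_small hA
  have h7 := nm_le_of_small hB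
  have h8 := nm_nonneg (mx A)
  have h9 := nm_nonneg (mx B)
  have ha := sz_nonneg A
  have hb := sz_nonneg B
  have k1 : nm (tl (mx A) * tl (mx B) - tl (mx B) * tl (mx A)) ≤ 2 * (sz A * sz B) := by
    unfold sz at *; nlinarith
  have k2 : nm ((tl (mx A) * tl (mx B) - tl (mx B) * tl (mx A)) * mx A⁻¹) ≤ 2 * (sz A * sz B) * 3 :=
    h2.trans (mul_le_mul k1 h6 h8 (by positivity))
  have k3 := h1.trans (mul_le_mul k2 h7 h9 (by positivity))
  linarith

/-- Zassenhaus: small elements of a discrete group commute. -/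
lemma zass1 {L : Subgroup SL2C} (hd : ∃ η > 0, ∀ γ ∈ L, sz γ < η → sz γ = 0)
    {a b : SL2C} (ha : a ∈ L) (hb : b ∈ L) (has : sz a < ε0) (hbs : sz b < ε0) :
    a * b = b * a := by
  obtain ⟨η, hη, hd⟩ := hd
  by_contra hab
  set Bad : Set SL2C := {A | A ∈ L ∧ sz A < ε0 ∧ ∃ B ∈ L, sz B < ε0 ∧ A * B ≠ B * A} with hBad
  have hne : (sz '' Bad).Nonempty := ⟨sz a, a, ⟨ha, has, b, hb, hbs, hab⟩, rfl⟩
  have hlow : ∀ r ∈ sz '' Bad, η ≤ r := by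
    rintro _ ⟨A, ⟨hA, hAs, B, hB, hBs, hAB⟩, rfl⟩
    by_contra hlt
    rcases sz_zero (hd A hA (not_le.1 hlt)) with rfl | rfl <;> simp at hAB
  have hbdd : BddBelow (sz '' Bad) := ⟨η, hlow⟩
  have hinf : η ≤ sInf (sz '' Bad) := le_csInf hne hlow
  obtain ⟨_, ⟨A, ⟨hA, hAs, B, hB, hBs, hAB⟩, rfl⟩, hlt⟩ :=
    exists_lt_of_csInf_lt hne (show sInf (sz '' Bad) < 2 * sInf (sz '' Bad) by linarith)
  set C := A * B * A⁻¹ * B⁻¹ with hC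
  have hCL : C ∈ L := L.mul_mem (L.mul_mem (L.mul_mem hA hB) (L.inv_mem hA)) (L.inv_mem hB)
  have hCs := sz_commutator hAs hBs
  rw [← hC] at hCs
  have e0 : ε0 = 1 / 1000 := rfl
  have hA0 := sz_nonneg A
  have hCs2 : sz C < sInf (sz '' Bad) := by nlinarith
  have hCs3 : sz C < ε0 := by nlinarith
  have hCc : ∀ E ∈ L, sz E < ε0 → C * E = E * C := by
    intro E hE hEs
    by_contra hne
    exact absurd (csInf_le hbdd ⟨C, ⟨hCL, hCs3, E, hE, hEs, hne⟩, rfl⟩) (not_le.2 hCs2)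
  have hCA := hCc A hA hAs
  have hCB := hCc B hB hBs
  by_cases hC0 : sz C = 0
  · rcases sz_zero hC0 with h1 | h1
    · apply hAB
      have : A * B = C * (B * A) := by rw [hC]; group
      rw [this, h1, one_mul]
    · have h2 : A * B = -(B * A) := by
        have : A * B = C * (B * A) := by rw [hC]; group
        rw [this, h1]; simp
      have h3 : B * A * B⁻¹ = -A := by
        have : A = -(B * A * B⁻¹) := by
          calc A = (A * B) * B⁻¹ := by group
            _ = _ := by rw [h2]; simp
        rw [← neg_eq_iff_eq_neg]; exact this.symm
      have h4 : (mx A).trace = 0 := by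
        have h5 : (mx (B * A * B⁻¹)).trace = (mx A).trace := by
          rw [mx_mul, mx_mul, Matrix.trace_mul_cycle, sl_inv_mul, one_mul]
        rw [h3, mx_neg, Matrix.trace_neg] at h5
        have : 2 * (mx A).trace = 0 := by linear_combination -h5
        simpa using this
      have h5 := ht_bound A
      rw [ht, h4] at h5
      norm_num at h5
      rw [e0] at hAs
      rw [abs_of_nonneg hA0] at h5
      linarith
  · exact hAB (comm_trans hC0 hCA.symm hCB)

/-- Conjugate subgroup `y⁻¹ L y`. -/
def cj (L : Subgroup SL2C) (y : SL2C) : Subgroup SL2C := L.map (MulAut.conj y⁻¹).toMonoidHom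

lemma mem_cj {L : Subgroup SL2C} {y g : SL2C} : g ∈ cj L y ↔ ∃ γ ∈ L, g = y⁻¹ * γ * y := by
  unfold cj
  rw [Subgroup.mem_map]
  simp [eq_comm]

lemma sz_conj_zero {y γ : SL2C} : sz (y⁻¹ * γ * y) = 0 ↔ sz γ = 0 := by
  constructor
  · intro h
    rcases sz_zero h with h | h
    · have : γ = y * (y⁻¹ * γ * y) * y⁻¹ := by group
      rw [this, h]; simp [sz_one]
    · have : γ = y * (y⁻¹ * γ * y) * y⁻¹ := by group
      rw [this, h]; simp [sz_one, sz_neg]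
  · intro h
    rcases sz_zero h with rfl | rfl <;> simp [sz_one, sz_neg]

lemma cj_disc {L : Subgroup SL2C} (hd : ∃ η > 0, ∀ γ ∈ L, sz γ < η → sz γ = 0) (y : SL2C) :
    ∃ η > 0, ∀ γ ∈ cj L y, sz γ < η → sz γ = 0 := by
  obtain ⟨ε, hε, h⟩ := mem_Wset_of_disc hd y
  refine ⟨ε, hε, fun g hg hlt => ?_⟩
  obtain ⟨γ, hγ, rfl⟩ := mem_cj.1 hg
  by_contra hne
  rw [sz_conj_zero] at hne
  exact absurd (h γ hγ hne) (not_le.2 hlt)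

lemma Wset_cj {L : Subgroup SL2C} {y g : SL2C} {ε : ℝ} : g ∈ Wset (cj L y) ε ↔ y * g ∈ Wset L ε := by
  constructor
  · intro h γ hγ hs
    have := h (y⁻¹ * γ * y) (mem_cj.2 ⟨γ, hγ, rfl⟩) (by rwa [ne_eq, sz_conj_zero])
    convert this using 2
    group
  · intro h g' hg' hs
    obtain ⟨γ, hγ, rfl⟩ := mem_cj.1 hg'
    rw [ne_eq, sz_conj_zero] at hs
    have := h γ hγ hs
    convert this using 2
    group

lemma zass {L : Subgroup SL2C} (hd : ∃ η > 0, ∀ γ ∈ L, sz γ < η → sz γ = 0)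
    {x a b : SL2C} (ha : a ∈ L) (hb : b ∈ L) (has : sz (x⁻¹ * a * x) < ε0)
    (hbs : sz (x⁻¹ * b * x) < ε0) : a * b = b * a := by
  have := zass1 (cj_disc hd x) (mem_cj.2 ⟨a, ha, rfl⟩) (mem_cj.2 ⟨b, hb, rfl⟩) has hbs
  have h2 : x * (x⁻¹ * a * x * (x⁻¹ * b * x)) * x⁻¹ = x * (x⁻¹ * b * x * (x⁻¹ * a * x)) * x⁻¹ := by
    rw [this]
  have e1 : x * (x⁻¹ * a * x * (x⁻¹ * b * x)) * x⁻¹ = a * b := by group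
  have e2 : x * (x⁻¹ * b * x * (x⁻¹ * a * x)) * x⁻¹ = b * a := by group
  rwa [e1, e2] at h2

lemma mx_conj (x g : SL2C) : tl (mx (x⁻¹ * g * x)) = mx x⁻¹ * tl (mx g) * mx x := by
  rw [mx_mul, mx_mul, tl_conj]

lemma conj_ua_01 (s t : ℝ) (g : SL2C) : mx ((uMat s * aE t)⁻¹ * g * (uMat s * aE t)) 0 1 =
    (Real.exp (-t) : ℂ) ^ 2 * (mx g 0 1 + s * (mx g 0 0 - mx g 1 1) - s ^ 2 * mx g 1 0) := by
  rw [_root_.mul_inv_rev, uMat_inv, aE_inv]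
  simp only [mul_e, u00, u01, u10, u11, a00, a01, a10, a11]
  push_cast
  ring

lemma nondiv1 {L : Subgroup SL2C} (hd : ∃ η > 0, ∀ γ ∈ L, sz γ < η → sz γ = 0) (T : ℝ) :
    ∃ s t : ℝ, t < T ∧ uMat s * aE t ∈ Wset L ε0 := by
  by_contra hno
  push Not at hno
  set Ω : Set (ℝ × ℝ) := Set.univ ×ˢ Set.Iio T with hΩ
  set N : ℝ × ℝ → SL2C := fun z => uMat z.1 * aE z.2 with hN
  have hNc : Continuous N := by
    have h1 : Continuous fun z : ℝ × ℝ => uMat (z.1 : ℂ) := uMat_cont.comp (by fun_prop)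
    have h2 : Continuous fun z : ℝ × ℝ => aE z.2 := aE_cont.comp (by fun_prop)
    exact h1.mul h2
  have hch : ∀ z : ℝ × ℝ, ∃ γ : SL2C, z ∈ Ω → γ ∈ L ∧ sz γ ≠ 0 ∧ sz ((N z)⁻¹ * γ * N z) < ε0 := by
    intro z
    by_cases hz : z ∈ Ω
    · have := hno z.1 z.2 hz.2
      unfold Wset at this
      simp only [Set.mem_ofPred_eq] at this
      push Not at this
      obtain ⟨γ, h1, h2, h3⟩ := this
      exact ⟨γ, fun _ => ⟨h1, h2, h3⟩⟩
    · exact ⟨1, fun h => absurd h hz⟩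
  choose γ hγ using hch
  have hpre : IsPreconnected Ω := (convex_univ.prod (convex_Iio T)).isPreconnected
  have hz0 : ((0 : ℝ), T - 1) ∈ Ω := ⟨trivial, by simp⟩
  set q := γ (0, T - 1) with hq
  have hall : ∀ z ∈ Ω, (q * γ z = γ z * q) := by
    intro z hz
    refine hpre.induction₂ (fun x y => x ∈ Ω → y ∈ Ω → γ x * γ y = γ y * γ x)
      ?_ ?_ ?_ hz0 hz hz0 hz
    · intro x hx
      have hc : Continuous fun y => sz ((N y)⁻¹ * γ x * N y) :=
        sz_continuous.comp ((hNc.inv.mul continuous_const).mul hNc)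
      have := (hc.tendsto x).eventually (gt_mem_nhds (hγ x hx).2.2)
      refine Filter.Eventually.filter_mono nhdsWithin_le_nhds ?_
      filter_upwards [this] with y hy _ hy'
      exact zass hd (hγ x hx).1 (hγ y hy').1 hy (hγ y hy').2.2
    · intro x y z hx hy hz h1 h2 _ _
      exact comm_trans (hγ y hy).2.1 (h1 hx hy) (h2 hy hz)
    · intro x y hx hy h1 _ _
      exact (h1 hx hy).symm
  obtain ⟨η, hη, hd'⟩ := hd
  have hq0 : sz q ≠ 0 := (hγ _ hz0).2.1
  have hqpos : 0 < sz q := lt_of_le_of_ne (sz_nonneg q) (Ne.symm hq0)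
  have hbd : ∀ z ∈ Ω, sz ((N z)⁻¹ * q * N z) ≤ ε0 * sz q / η := by
    intro z hz
    obtain ⟨h1, h2, h3⟩ := hγ z hz
    obtain ⟨c, hc⟩ := tl_prop' (hall z hz) hq0
    have e1 : sz (γ z) = ‖c‖ * sz q := by unfold sz; rw [hc, nm_smul]
    have e2 : sz ((N z)⁻¹ * γ z * N z) = ‖c‖ * sz ((N z)⁻¹ * q * N z) := by
      unfold sz
      rw [mx_conj, mx_conj, hc, mul_smul_comm, smul_mul_assoc, nm_smul]
    have e3 : η ≤ sz (γ z) := by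
      by_contra hlt
      exact h2 (hd' _ h1 (not_le.1 hlt))
    rw [e2] at h3
    rw [e1] at e3
    rw [le_div_iff₀ hη]
    have hs := sz_nonneg ((N z)⁻¹ * q * N z)
    calc sz ((N z)⁻¹ * q * N z) * η ≤ sz ((N z)⁻¹ * q * N z) * (‖c‖ * sz q) := by gcongr
      _ = (‖c‖ * sz ((N z)⁻¹ * q * N z)) * sz q := by ring
      _ ≤ ε0 * sz q := by gcongr
  have hzero : ∀ s : ℝ, mx q 0 1 + s * (mx q 0 0 - mx q 1 1) - s ^ 2 * mx q 1 0 = 0 := by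
    intro s
    set β := mx q 0 1 + s * (mx q 0 0 - mx q 1 1) - s ^ 2 * mx q 1 0 with hβ
    by_contra hne
    have hpos : 0 < ‖β‖ := norm_pos_iff.2 hne
    have hlim : Tendsto (fun t : ℝ => (Real.exp (-t)) ^ 2 * ‖β‖) atBot atTop := by
      refine Tendsto.atTop_mul_const hpos ?_
      exact (tendsto_pow_atTop (by norm_num)).comp
        (Real.tendsto_exp_atTop.comp tendsto_neg_atBot_atTop)
    obtain ⟨t, ht1, ht2⟩ := ((hlim.eventually_gt_atTop (ε0 * sz q / η)).and
      (eventually_lt_atBot T)).exists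
    have h1 := hbd (s, t) ⟨trivial, ht2⟩
    have h2 := nm_entry (tl (mx ((N (s, t))⁻¹ * q * N (s, t)))) 0 1
    rw [tl_01, hN] at h2
    dsimp only at h2
    rw [conj_ua_01, norm_mul, norm_pow, Complex.norm_real, Real.norm_eq_abs,
      abs_of_pos (Real.exp_pos _)] at h2
    have h3 := h2.trans h1
    linarith
  have k0 := hzero 0
  have k1 := hzero 1
  have k2 := hzero (-1)
  push_cast at k0 k1 k2
  apply hq0
  rw [sz_eq_zero_iff_tl]
  have z1 : mx q 0 1 = 0 := by linear_combination k0
  have z2 : mx q 1 0 = 0 := by linear_combination k0 - (k1 + k2) / 2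
  have z3 : mx q 0 0 - mx q 1 1 = 0 := by linear_combination (k1 - k2) / 2
  ext i j
  fin_cases i <;> fin_cases j <;> simp [tl_00, tl_01, tl_10, tl_11, z1, z2, z3]

lemma nondiv {L : Subgroup SL2C} (hd : ∃ η > 0, ∀ γ ∈ L, sz γ < η → sz γ = 0) (y : SL2C) (T : ℝ) :
    ∃ s t : ℝ, t < T ∧ y * (uMat s * aE t) ∈ Wset L ε0 := by
  obtain ⟨s, t, h1, h2⟩ := nondiv1 (cj_disc hd y) T
  exact ⟨s, t, h1, Wset_cj.1 h2⟩

/-- Closed sets invariant on the left under `L` and on the right under `S`. -/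
structure CI (L : Subgroup SL2C) (S : Set SL2C) (C : Set SL2C) : Prop where
  closed : IsClosed C
  left : ∀ γ ∈ L, ∀ x ∈ C, γ * x ∈ C
  right : ∀ s ∈ S, ∀ x ∈ C, x * s ∈ C

lemma CI.inter {L : Subgroup SL2C} {S C D : Set SL2C} (hC : CI L S C) (hD : CI L S D) :
    CI L S (C ∩ D) :=
  ⟨hC.closed.inter hD.closed, fun γ h x hx => ⟨hC.left γ h x hx.1, hD.left γ h x hx.2⟩,
    fun γ h x hx => ⟨hC.right γ h x hx.1, hD.right γ h x hx.2⟩⟩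

/-- Minimal sets. -/
structure IsMinl (L : Subgroup SL2C) (S : Set SL2C) (M : Set SL2C) : Prop where
  ci : CI L S M
  ne : M.Nonempty
  min : ∀ C, CI L S C → (C ∩ M).Nonempty → M ⊆ C

lemma exists_minl {L : Subgroup SL2C} {S E K : Set SL2C} (hE : CI L S E) (hne : E.Nonempty)
    (hK : IsCompact K) (hm : ∀ C ⊆ E, CI L S C → C.Nonempty → (C ∩ K).Nonempty) :
    ∃ M ⊆ E, IsMinl L S M := by
  obtain ⟨M, hME, hM⟩ := zorn_superset_nonempty {C | CI L S C ∧ C.Nonempty ∧ C ⊆ E} (by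
    intro c hc hch hcne
    have hci : CI L S (⋂₀ c) := by
      refine ⟨isClosed_sInter fun t ht => (hc ht).1.closed, ?_, ?_⟩
      · intro γ hγ x hx t ht
        exact (hc ht).1.left γ hγ x (hx t ht)
      · intro γ hγ x hx t ht
        exact (hc ht).1.right γ hγ x (hx t ht)
    refine ⟨⋂₀ c, ⟨hci, ?_, ?_⟩, fun s hs => Set.sInter_subset_of_mem hs⟩
    · have : Nonempty c := hcne.to_subtype
      have h1 : (⋂ i : c, ((i : Set SL2C) ∩ K)).Nonempty := by
        apply IsCompact.nonempty_iInter_of_directed_nonempty_isCompact_isClosed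
        · intro a b
          rcases hch.total a.2 b.2 with h | h
          · exact ⟨a, subset_rfl, Set.inter_subset_inter_left _ h⟩
          · exact ⟨b, Set.inter_subset_inter_left _ h, subset_rfl⟩
        · intro a
          exact hm _ (hc a.2).2.2 (hc a.2).1 (hc a.2).2.1
        · intro a
          exact hK.inter_left (hc a.2).1.closed
        · intro a
          exact (hc a.2).1.closed.inter hK.isClosed
      obtain ⟨z, hz⟩ := h1
      refine ⟨z, fun t ht => ?_⟩
      exact (Set.mem_iInter.1 hz ⟨t, ht⟩).1
    · obtain ⟨t, ht⟩ := hcne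
      exact (Set.sInter_subset_of_mem ht).trans (hc ht).2.2) E ⟨hE, hne, subset_rfl⟩
  refine ⟨M, hME, hM.prop.1, hM.prop.2.1, fun C hC hCM => ?_⟩
  have := hM.le_of_le (y := C ∩ M) ⟨hC.inter hM.prop.1, hCM, Set.inter_subset_right.trans hME⟩
    Set.inter_subset_right
  exact fun x hx => (this hx).1

/-- Lower triangular unipotents. -/
def lMat (z : ℂ) : SL2C := ⟨!![1, 0; z, 1], by simp [Matrix.det_fin_two_of]⟩

lemma l00 (z : ℂ) : mx (lMat z) 0 0 = 1 := rfl
lemma l01 (z : ℂ) : mx (lMat z) 0 1 = 0 := rfl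
lemma l10 (z : ℂ) : mx (lMat z) 1 0 = z := rfl
lemma l11 (z : ℂ) : mx (lMat z) 1 1 = 1 := rfl

lemma sl_dec1 (g : SL2C) (h : mx g 1 0 ≠ 0) :
    g = uMat ((mx g 0 0 - 1) / mx g 1 0) * lMat (mx g 1 0) * uMat ((mx g 1 1 - 1) / mx g 1 0) := by
  have hd := det_eq g
  apply sl_ext <;> simp only [mul_e, u00, u01, u10, u11, l00, l01, l10, l11] <;> field_simp <;>
    first | ring1 | linear_combination hd | linear_combination -hd

lemma sl_gen {C : Set SL2C} (h1 : C.Nonempty) (hu : ∀ z, ∀ x ∈ C, x * uMat z ∈ C)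
    (hl : ∀ z, ∀ x ∈ C, x * lMat z ∈ C) : C = Set.univ := by
  have hA : ∀ g, mx g 1 0 ≠ 0 → ∀ x ∈ C, x * g ∈ C := by
    intro g hg x hx
    rw [sl_dec1 g hg, ← mul_assoc, ← mul_assoc]
    exact hu _ _ (hl _ _ (hu _ _ hx))
  obtain ⟨x, hx⟩ := h1
  have hB : ∀ g, x * g ∈ C := by
    intro g
    by_cases hg : mx g 1 0 = 0
    · have h2 : mx (g * lMat 1) 1 0 ≠ 0 := by
        have hd := det_eq g
        simp only [mul_e, l00, l10, hg]
        rw [hg] at hd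
        intro h
        have : mx g 1 1 = 0 := by linear_combination h
        rw [this] at hd
        simp at hd
      have := hl (-1) _ (hA _ h2 x hx)
      have e : x * (g * lMat 1) * lMat (-1) = x * g := by
        have : lMat 1 * lMat (-1) = 1 := by
          apply sl_ext <;> simp [mul_e, l00, l01, l10, l11, mx_one]
        rw [mul_assoc, mul_assoc, this, mul_one]
      rwa [e] at this
    · exact hA g hg x hx
  ext g
  simpa using hB (x⁻¹ * g)

lemma aE_u (k : ℕ) (z : ℂ) : aE (-1) ^ k * uMat z * (aE (-1) ^ k)⁻¹ =
    uMat ((Real.exp (-2) : ℂ) ^ k * z) := by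
  rw [aE_pow, aE_inv]
  have e1 : (Real.exp (-2) : ℂ) ^ k = (Real.exp (-k) * Real.exp (-k) : ℝ) := by
    rw [← Real.exp_add, ← Complex.ofReal_pow, ← Real.exp_nat_mul]; congr 2; ring
  have e2 : ((Real.exp (k * -1) : ℝ) : ℂ) * (Real.exp (- (k * -1)) : ℝ) = 1 := by
    rw [← Complex.ofReal_mul, ← Real.exp_add]; simp
  apply sl_ext <;> simp only [mul_e, u00, u01, u10, u11, a00, a01, a10, a11, e1]
  · linear_combination e2
  · simp only [neg_neg, mul_neg, mul_one]; push_cast; ring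
  · ring
  · simp only [neg_neg]; linear_combination e2

lemma aE_l (k : ℕ) (z : ℂ) : (aE (-1) ^ k)⁻¹ * lMat z * aE (-1) ^ k =
    lMat ((Real.exp (-2) : ℂ) ^ k * z) := by
  rw [aE_pow, aE_inv]
  have e1 : (Real.exp (-2) : ℂ) ^ k = (Real.exp (-k) * Real.exp (-k) : ℝ) := by
    rw [← Real.exp_add, ← Complex.ofReal_pow, ← Real.exp_nat_mul]; congr 2; ring
  have e2 : ((Real.exp (k * -1) : ℝ) : ℂ) * (Real.exp (- (k * -1)) : ℝ) = 1 := by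
    rw [← Complex.ofReal_mul, ← Real.exp_add]; simp
  apply sl_ext <;> simp only [mul_e, l00, l01, l10, l11, a00, a01, a10, a11, e1]
  · linear_combination e2
  · ring
  · simp only [neg_neg, mul_neg, mul_one]; push_cast; ring
  · simp only [neg_neg]; linear_combination e2

lemma exp_pow_tendsto (z : ℂ) : Tendsto (fun k : ℕ => (Real.exp (-2) : ℂ) ^ k * z) atTop (𝓝 0) := by
  have : Tendsto (fun k : ℕ => (Real.exp (-2) : ℂ) ^ k) atTop (𝓝 0) := by
    apply tendsto_pow_atTop_nhds_zero_of_norm_lt_one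
    rw [Complex.norm_real, Real.norm_eq_abs, abs_of_pos (Real.exp_pos _)]
    exact Real.exp_lt_one_iff.2 (by norm_num)
  simpa using this.mul_const z

lemma lMat_cont : Continuous lMat := by
  rw [continuous_iff_continuousAt]
  intro z
  refine tendsto_sl4 ?_ ?_ ?_ ?_ <;> simp only [l00, l01, l10, l11]
  · exact tendsto_const_nhds
  · exact tendsto_const_nhds
  · exact tendsto_id
  · exact tendsto_const_nhds

lemma lMat_zero : lMat 0 = 1 := by
  apply sl_ext <;> simp [l00, l01, l10, l11, mx_one]

lemma nbhd_mul {D : Set SL2C} (hD : IsOpen D) {x : SL2C} (hx : x ∈ D) :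
    ∃ V B : Set SL2C, IsOpen V ∧ x ∈ V ∧ B ∈ 𝓝 (1 : SL2C) ∧ ∀ v ∈ V, ∀ b ∈ B, v * b ∈ D := by
  have hc : Continuous fun q : SL2C × SL2C => q.1 * q.2 := continuous_mul
  have := (hD.preimage hc).mem_nhds (x := (x, 1)) (by simpa using hx)
  obtain ⟨V, B, hV, hxV, hB, h1B, h⟩ := mem_nhds_prod_iff'.1 this
  exact ⟨V, B, hV, hxV, hB.mem_nhds h1B, fun v hv b hb => h (Set.mk_mem_prod hv hb)⟩

lemma transl {L : Subgroup SL2C} (hL : LatHyp L) {W O : Set SL2C} (hW : IsOpen W)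
    (hWne : W.Nonempty) (hO : IsOpen O) (hOne : O.Nonempty) :
    ∃ k : ℕ, ∃ x ∈ W, ∃ γ ∈ L, γ * x * aE (-1) ^ k ∈ O := by
  set a := aE (-1) with ha
  set D : Set SL2C := {g | ∃ k : ℕ, ∃ x ∈ W, ∃ γ ∈ L, g = γ * x * a ^ k} with hD
  have hDo : IsOpen D := by
    have : D = ⋃ k : ℕ, ⋃ γ ∈ L, (fun g => γ⁻¹ * g * (a ^ k)⁻¹) ⁻¹' W := by
      ext g
      simp only [hD, Set.mem_ofPred_eq, Set.mem_iUnion, Set.mem_preimage]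
      constructor
      · rintro ⟨k, x, hx, γ, hγ, rfl⟩
        refine ⟨k, γ, hγ, ?_⟩
        convert hx using 1; group
      · rintro ⟨k, γ, hγ, hx⟩
        exact ⟨k, _, hx, γ, hγ, by group⟩
    rw [this]
    refine isOpen_iUnion fun k => isOpen_biUnion fun γ _ => hW.preimage ?_
    exact (continuous_const.mul continuous_id).mul continuous_const
  have hDne : D.Nonempty := by
    obtain ⟨x, hx⟩ := hWne
    exact ⟨x, 0, x, hx, 1, L.one_mem, by simp⟩
  have hDL : ∀ γ ∈ L, ∀ x ∈ D, γ * x ∈ D := by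
    rintro γ hγ _ ⟨k, x, hx, γ', hγ', rfl⟩
    exact ⟨k, x, hx, γ * γ', L.mul_mem hγ hγ', by group⟩
  have hDa : ∀ j : ℕ, ∀ x ∈ D, x * a ^ j ∈ D := by
    rintro j _ ⟨k, x, hx, γ', hγ', rfl⟩
    exact ⟨k + j, x, hx, γ', hγ', by rw [pow_add]; group⟩
  have hcl : ∀ (f : SL2C → SL2C), Continuous f → (∀ x ∈ D, f x ∈ closure D) →
      ∀ x ∈ closure D, f x ∈ closure D := by
    intro f hf h x hx
    have := map_mem_closure hf hx h
    simpa using this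
  have hCL : ∀ γ ∈ L, ∀ x ∈ closure D, γ * x ∈ closure D := by
    intro γ hγ
    exact hcl (fun x => γ * x) (continuous_const.mul continuous_id) fun x hx => subset_closure (hDL γ hγ x hx)
  have hCm : ∀ x ∈ closure D, x * a⁻¹ ∈ closure D := by
    refine hcl (fun x => x * a⁻¹) (continuous_id.mul continuous_const) ?_
    by_contra hne
    push Not at hne
    obtain ⟨x0, hx0, hx0'⟩ := hne
    obtain ⟨k, hk, x, hx, γ, hγ, hx'⟩ := hL.recur a (D ∩ (fun x => x * a⁻¹) ⁻¹' (closure D)ᶜ)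
      (hDo.inter ((isClosed_closure.isOpen_compl).preimage (continuous_id.mul continuous_const)))
      ⟨x0, hx0, hx0'⟩ 1
    obtain ⟨j, rfl⟩ : ∃ j, k = j + 1 := ⟨k - 1, by omega⟩
    apply hx'.2
    have e : γ * x * a ^ (j + 1) * a⁻¹ = γ * (x * a ^ j) := by rw [pow_succ]; group
    simp only [e]
    exact subset_closure (hDL γ hγ _ (hDa j x hx.1))
  have hCk : ∀ k : ℕ, ∀ x ∈ closure D, x * (a ^ k)⁻¹ ∈ closure D := by
    intro k
    induction k with
    | zero => intro x hx; simpa using hx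
    | succ k ih =>
      intro x hx
      have := hCm _ (ih x hx)
      convert this using 1
      rw [pow_succ']; group
  have huniv : closure D = Set.univ := by
    apply sl_gen hDne.closure
    · intro z
      refine hcl (fun x => x * uMat z) (continuous_id.mul continuous_const) ?_
      by_contra hne
      push Not at hne
      obtain ⟨x0, hx0, hx0'⟩ := hne
      obtain ⟨V, B, hV, hxV, hB, hVB⟩ := nbhd_mul hDo hx0
      have ht : Tendsto (fun k : ℕ => uMat ((Real.exp (-2) : ℂ) ^ k * z)) atTop (𝓝 1) := by
        have := (uMat_cont.tendsto 0).comp (exp_pow_tendsto z)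
        rwa [uMat_zero] at this
      obtain ⟨N, hN⟩ := eventually_atTop.1 (ht.eventually hB)
      obtain ⟨k, hk, x, hx, γ, hγ, hx'⟩ := hL.recur a (V ∩ (fun x => x * uMat z) ⁻¹' (closure D)ᶜ)
        (hV.inter ((isClosed_closure.isOpen_compl).preimage (continuous_id.mul continuous_const)))
        ⟨x0, hxV, hx0'⟩ N
      apply hx'.2
      have e : γ * x * a ^ k * uMat z = γ * ((x * uMat ((Real.exp (-2) : ℂ) ^ k * z)) * a ^ k) := by
        rw [← aE_u, ← ha]; group
      simp only [e]
      exact subset_closure (hDL γ hγ _ (hDa k _ (hVB x hx.1 _ (hN k hk))))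
    · intro z
      refine hcl (fun x => x * lMat z) (continuous_id.mul continuous_const) ?_
      by_contra hne
      push Not at hne
      obtain ⟨x0, hx0, hx0'⟩ := hne
      obtain ⟨V, B, hV, hxV, hB, hVB⟩ := nbhd_mul hDo hx0
      have ht : Tendsto (fun k : ℕ => lMat ((Real.exp (-2) : ℂ) ^ k * z)) atTop (𝓝 1) := by
        have := (lMat_cont.tendsto 0).comp (exp_pow_tendsto z)
        rwa [lMat_zero] at this
      obtain ⟨N, hN⟩ := eventually_atTop.1 (ht.eventually hB)
      obtain ⟨k, hk, x, hx, γ, hγ, hx'⟩ := hL.recur a (V ∩ (fun x => x * lMat z) ⁻¹' (closure D)ᶜ)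
        (hV.inter ((isClosed_closure.isOpen_compl).preimage (continuous_id.mul continuous_const)))
        ⟨x0, hxV, hx0'⟩ N
      apply hx.2
      have e : x * lMat z = γ⁻¹ * (((γ * x * a ^ k) * lMat ((Real.exp (-2) : ℂ) ^ k * z)) * (a ^ k)⁻¹) := by
        rw [← aE_l, ← ha]; group
      simp only [e]
      exact hCL _ (L.inv_mem hγ) _ (hCk k _ (subset_closure (hVB _ hx'.1 _ (hN k hk))))
  have hdense : Dense D := dense_iff_closure_eq.2 huniv
  obtain ⟨g, hgO, k, x, hx, γ, hγ, rfl⟩ := hdense.inter_open_nonempty O hO hOne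
  exact ⟨k, x, hx, γ, hγ, hgO⟩

/-- Real matrices. -/
def HH : Subgroup SL2C where
  carrier := {g | ∀ i j, (mx g i j).im = 0}
  mul_mem' := by
    intro a b ha hb i j
    rw [mul_e]
    simp [ha, hb, ha i 0, hb 0 j, ha i 1, hb 1 j]
  one_mem' := by
    intro i j
    fin_cases i <;> fin_cases j <;> simp [mx_one]
  inv_mem' := by
    intro a ha i j
    fin_cases i <;> fin_cases j
    · simpa [inv_00] using ha 1 1
    · simpa [inv_01] using ha 0 1
    · simpa [inv_10] using ha 1 0
    · simpa [inv_11] using ha 0 0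

lemma mem_HH {g : SL2C} : g ∈ HH ↔ ∀ i j, (mx g i j).im = 0 := Iff.rfl

lemma mem_HH4 {g : SL2C} (h0 : (mx g 0 0).im = 0) (h1 : (mx g 0 1).im = 0)
    (h2 : (mx g 1 0).im = 0) (h3 : (mx g 1 1).im = 0) : g ∈ HH := by
  rw [mem_HH]
  intro i j
  fin_cases i <;> fin_cases j <;> assumption

lemma HH_closed : IsClosed (HH : Set SL2C) := by
  have : (HH : Set SL2C) = ⋂ i, ⋂ j, {g | (mx g i j).im = 0} := by
    ext g
    simp [mem_HH]
  rw [this]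
  refine isClosed_iInter fun i => isClosed_iInter fun j => ?_
  exact isClosed_eq (Complex.continuous_im.comp (centry i j)) continuous_const

lemma aE_HH (t : ℝ) : aE t ∈ HH := by
  apply mem_HH4 <;> simp only [a00, a01, a10, a11, Complex.ofReal_im, Complex.zero_im]

lemma u_HH (t : ℝ) : uMat t ∈ HH := by
  apply mem_HH4 <;> simp [u00, u01, u10, u11]

lemma l_HH (t : ℝ) : lMat t ∈ HH := by
  apply mem_HH4 <;> simp [l00, l01, l10, l11]

lemma neg_HH {g : SL2C} (h : g ∈ HH) : -g ∈ HH := by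
  rw [mem_HH] at h ⊢
  intro i j
  simp [mx_neg, h i j]

lemma dens {L : Subgroup SL2C} (hL : LatHyp L) {F : Set SL2C} (hF : CI L HH F) {y : SL2C}
    {c d : ℝ} (hcd : c < d) (h : ∀ x ρ : ℝ, c < ρ → ρ < d → y * uMat (x + ρ * Complex.I) ∈ F) :
    F = Set.univ := by
  by_contra hne
  obtain ⟨g0, hg0⟩ := (Set.ne_univ_iff_exists_notMem F).1 hne
  obtain ⟨V, B, hV, hgV, hB, hVB⟩ := nbhd_mul hF.closed.isOpen_compl (x := g0) hg0
  obtain ⟨δ, hδ, hBδ⟩ := nhds_one_basis hB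
  set f : SL2C → ℝ × ℝ := fun g => ((mx (y⁻¹ * g) 0 1 / mx (y⁻¹ * g) 1 1).im,
    ‖(mx (y⁻¹ * g) 1 1)⁻¹ - 1‖ + ‖mx (y⁻¹ * g) 1 1 - 1‖ + ‖mx (y⁻¹ * g) 1 0‖) with hf
  have hce : ∀ i j, Continuous fun g : SL2C => mx (y⁻¹ * g) i j := fun i j =>
    (centry i j).comp (continuous_const.mul continuous_id)
  set Z : Set SL2C := {g | mx (y⁻¹ * g) 1 1 ≠ 0} with hZ
  have hZo : IsOpen Z := isOpen_ne_fun (hce 1 1) continuous_const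
  have hfc : ContinuousOn f Z := by
    have h1 : ContinuousOn (fun g : SL2C => mx (y⁻¹ * g) 0 1 / mx (y⁻¹ * g) 1 1) Z :=
      (hce 0 1).continuousOn.div (hce 1 1).continuousOn fun g hg => hg
    have h2 : ContinuousOn (fun g : SL2C => (mx (y⁻¹ * g) 1 1)⁻¹) Z :=
      (hce 1 1).continuousOn.inv₀ fun g hg => hg
    refine (Complex.continuous_im.comp_continuousOn h1).prodMk ?_
    refine ContinuousOn.add (ContinuousOn.add ?_ ?_) ?_
    · exact (h2.sub continuousOn_const).norm
    · exact ((hce 1 1).continuousOn.sub continuousOn_const).norm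
    · exact (hce 1 0).continuousOn.norm
  have hWo : IsOpen (Z ∩ f ⁻¹' (Set.Ioo c d ×ˢ Set.Iio δ)) :=
    hfc.isOpen_inter_preimage hZo (isOpen_Ioo.prod isOpen_Iio)
  have hWne : (Z ∩ f ⁻¹' (Set.Ioo c d ×ˢ Set.Iio δ)).Nonempty := by
    refine ⟨y * uMat (((c + d) / 2 : ℝ) * Complex.I), ?_, ?_⟩
    · simp [hZ, u11]
    · simp only [hf, Set.mem_preimage, inv_mul_cancel_left, u01, u11, u10, Set.mem_prod]
      refine ⟨?_, by simpa using hδ⟩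
      simp only [div_one, Complex.mul_I_im, Complex.ofReal_re, Set.mem_Ioo]
      constructor <;> linarith
  obtain ⟨k, x, ⟨hxZ, hxf⟩, γ, hγ, hxV⟩ := transl hL hWo hWne hV ⟨g0, hgV⟩
  set g := y⁻¹ * x with hg
  have hxZ : mx g 1 1 ≠ 0 := hxZ
  set z := mx g 0 1 / mx g 1 1 with hz
  obtain ⟨⟨hz1, hz2⟩, hsm⟩ := hxf
  simp only [hf, ← hg, ← hz] at hz1 hz2 hsm
  have hzz : y * uMat z ∈ F := by
    have := h z.re z.im hz1 hz2
    rwa [Complex.re_add_im] at this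
  set b := uMat (-z) * g with hb
  have hb01 : mx b 0 1 = 0 := by
    simp only [hb, mul_e, u00, u01, hz]; field_simp; ring
  have hb00 : mx b 0 0 = (mx g 1 1)⁻¹ := by
    simp only [hb, mul_e, u00, u01, hz]; field_simp; linear_combination det_eq g
  have hb10 : mx b 1 0 = mx g 1 0 := by
    simp only [hb, mul_e, u10, u11]; ring
  have hb11 : mx b 1 1 = mx g 1 1 := by
    simp only [hb, mul_e, u10, u11]; ring
  have hx : x = y * uMat z * b := by
    rw [hb, hg, ← uMat_inv]; group
  set a := aE (-1) with ha
  set q := γ * (y * uMat z) * a ^ k with hq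
  have hqF : q ∈ F := by
    refine hF.right _ (HH.pow_mem (aE_HH _) _) _ (hF.left γ hγ _ hzz)
  have hq2 : q = γ * x * a ^ k * ((a ^ k)⁻¹ * b * a ^ k)⁻¹ := by
    rw [hq, hx]; group
  refine hVB _ hxV ((a ^ k)⁻¹ * b * a ^ k)⁻¹ ?_ (by rw [← hq2]; exact hqF)
  apply hBδ
  have e2 : ((Real.exp (k * -1) : ℝ) : ℂ) * (Real.exp (- (k * -1)) : ℝ) = 1 := by
    rw [← Complex.ofReal_mul, ← Real.exp_add]; simp
  have hle : ‖((Real.exp (k * -1) : ℝ) : ℂ)‖ ≤ 1 := by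
    rw [Complex.norm_real, Real.norm_eq_abs, abs_of_pos (Real.exp_pos _), Real.exp_le_one_iff]
    simp
  set E := ((Real.exp (k * -1) : ℝ) : ℂ) with hE
  set E' := ((Real.exp (-(k * -1)) : ℝ) : ℂ) with hE'
  have c00 : mx ((a ^ k)⁻¹ * b * a ^ k)⁻¹ 0 0 = mx g 1 1 := by
    rw [inv_00, ha, aE_pow, aE_inv]
    simp only [mul_e, a00, a01, a10, a11, hb00, hb01, hb10, hb11, neg_neg]
    rw [← hE, ← hE']; linear_combination mx g 1 1 * e2
  have c11 : mx ((a ^ k)⁻¹ * b * a ^ k)⁻¹ 1 1 = (mx g 1 1)⁻¹ := by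
    rw [inv_11, ha, aE_pow, aE_inv]
    simp only [mul_e, a00, a01, a10, a11, hb00, hb01, hb10, hb11, neg_neg]
    rw [← hE, ← hE']; linear_combination (mx g 1 1)⁻¹ * e2
  have c01 : mx ((a ^ k)⁻¹ * b * a ^ k)⁻¹ 0 1 = 0 := by
    rw [inv_01, ha, aE_pow, aE_inv]
    simp only [mul_e, a00, a01, a10, a11, hb00, hb01, hb10, hb11, neg_neg]
    ring
  have c10 : mx ((a ^ k)⁻¹ * b * a ^ k)⁻¹ 1 0 = - (E * E * mx g 1 0) := by
    rw [inv_10, ha, aE_pow, aE_inv]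
    simp only [mul_e, a00, a01, a10, a11, hb00, hb01, hb10, hb11, neg_neg]
    rw [← hE]; ring
  unfold nm
  simp only [Matrix.sub_apply, c00, c01, c10, c11]
  have hEE : ‖E * E * mx g 1 0‖ ≤ ‖mx g 1 0‖ := by
    rw [norm_mul, norm_mul]
    have h1 : ‖E‖ * ‖E‖ ≤ 1 := mul_le_one₀ hle (norm_nonneg _) hle
    exact mul_le_of_le_one_left (norm_nonneg _) h1
  rw [norm_mul, norm_mul] at hEE
  simp
  simp at hsm
  linarith

/-- Complex conjugation. -/
def bar : SL2C →* SL2C := Matrix.SpecialLinearGroup.map (starRingEnd ℂ)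

lemma bar_e (g : SL2C) (i j : Fin 2) : mx (bar g) i j = starRingEnd ℂ (mx g i j) := rfl

lemma bar_cont : Continuous bar := by
  rw [continuous_iff_continuousAt]
  intro g
  unfold ContinuousAt
  rw [tendsto_sl]
  intro i j
  simp only [bar_e]
  exact (Complex.continuous_conj.comp (centry i j)).tendsto g

lemma bar_bar (g : SL2C) : bar (bar g) = g := by
  apply sl_ext <;> simp [bar_e]

lemma bar_HH {g : SL2C} : g ∈ HH ↔ bar g = g := by
  constructor
  · intro h
    have h2 : ∀ i j, starRingEnd ℂ (mx g i j) = mx g i j := fun i j =>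
      Complex.conj_eq_iff_im.2 (h i j)
    apply sl_ext <;> simp [bar_e, h2]
  · intro h i j
    rw [← Complex.conj_eq_iff_im, ← bar_e, h]

/-- The map `g ↦ g ḡ⁻¹`. -/
def sg (g : SL2C) : SL2C := g * (bar g)⁻¹

lemma sg_cont : Continuous sg := continuous_id.mul bar_cont.inv

lemma sg_bar (g : SL2C) : bar (sg g) = (sg g)⁻¹ := by
  unfold sg
  rw [map_mul, map_inv, bar_bar]; group

lemma sg_mul (x g : SL2C) : sg (x * g) = x * sg g * (bar x)⁻¹ := by
  unfold sg
  rw [map_mul]; group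

lemma sg_one : sg 1 = 1 := by simp [sg]

lemma sg_eq_one {g : SL2C} : sg g = 1 ↔ g ∈ HH := by
  rw [bar_HH]
  unfold sg
  rw [mul_inv_eq_one]
  exact eq_comm

lemma bar_v (s : ℝ) : bar (uMat (s * Complex.I)) = uMat (-(s * Complex.I)) := by
  apply sl_ext <;> simp [bar_e, u00, u01, u10, u11]

lemma bar_u (s : ℝ) : bar (uMat s) = uMat s := bar_HH.1 (u_HH s)

lemma sg_vh (s : ℝ) {h : SL2C} (hh : h ∈ HH) : sg (uMat (s * Complex.I) * h) = uMat (2 * s * Complex.I) := by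
  rw [sg_mul, sg_eq_one.2 hh, bar_v, uMat_inv, mul_one, ← uMat_add]
  congr 1; ring

/-- Degenerate elements: those in `V H`. -/
def Deg (g : SL2C) : Prop := ∃ s : ℝ, ∃ h ∈ HH, g = uMat (s * Complex.I) * h

lemma deg_of {g : SL2C} (h10 : mx (sg g) 1 0 = 0) (he : mx (sg g) 0 0 = mx (sg g) 1 1)
    (hne : mx (sg g) 0 0 ≠ -1) : Deg g := by
  have hd := det_eq (sg g)
  rw [h10, ← he] at hd
  have h1 : mx (sg g) 0 0 = 1 := by
    have : (mx (sg g) 0 0 - 1) * (mx (sg g) 0 0 + 1) = 0 := by linear_combination hd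
    rcases mul_eq_zero.1 this with h | h
    · linear_combination h
    · exact absurd (by linear_combination h) hne
  have hS : sg g = uMat (mx (sg g) 0 1) := by
    apply sl_ext <;> simp only [u00, u01, u10, u11]
    · exact h1
    · exact h10
    · rw [← he, h1]
  have hb := sg_bar g
  have hb01 : starRingEnd ℂ (mx (sg g) 0 1) = - mx (sg g) 0 1 := by
    rw [← bar_e, hb, inv_01]
  have him : mx (sg g) 0 1 = (mx (sg g) 0 1).im * Complex.I := by
    apply Complex.ext
    · have := congrArg Complex.re hb01
      simp at this
      simp; linarith
    · simp
  refine ⟨(mx (sg g) 0 1).im / 2, uMat (-(((mx (sg g) 0 1).im / 2 : ℝ) * Complex.I)) * g, ?_, ?_⟩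
  · rw [← sg_eq_one, sg_mul]
    rw [← bar_v, bar_bar, bar_v, uMat_inv, hS]
    rw [← uMat_add, ← uMat_add, ← uMat_zero]
    congr 1
    rw [u01]
    push_cast
    linear_combination him
  · rw [← uMat_inv]; group

lemma sec1 (g : SL2C) (h : 0 < (2 + (mx (sg g) 0 0 + mx (sg g) 1 1)).re) :
    ∃ h ∈ HH, ∀ i j, mx (g * h) i j =
      ((Real.sqrt (2 + (mx (sg g) 0 0 + mx (sg g) 1 1)).re : ℝ) : ℂ)⁻¹ * (1 + mx (sg g)) i j := by
  set S := sg g with hS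
  set d := (2 + (mx S 0 0 + mx S 1 1)).re with hd
  have hb := sg_bar g
  rw [← hS] at hb
  have b00 : starRingEnd ℂ (mx S 0 0) = mx S 1 1 := by rw [← bar_e, hb, inv_00]
  have b01 : starRingEnd ℂ (mx S 0 1) = - mx S 0 1 := by rw [← bar_e, hb, inv_01]
  have b10 : starRingEnd ℂ (mx S 1 0) = - mx S 1 0 := by rw [← bar_e, hb, inv_10]
  have b11 : starRingEnd ℂ (mx S 1 1) = mx S 0 0 := by rw [← bar_e, hb, inv_11]
  have hdc : (d : ℂ) = 2 + (mx S 0 0 + mx S 1 1) := by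
    rw [hd]
    apply Complex.conj_eq_iff_re.1
    rw [map_add, map_add, b00, b11, map_ofNat]; ring
  set r : ℂ := ((Real.sqrt d : ℝ) : ℂ)⁻¹ with hr
  have hr2 : r * r * d = 1 := by
    have h1 : ((Real.sqrt d : ℝ) : ℂ) * (Real.sqrt d : ℝ) = d := by
      rw [← Complex.ofReal_mul, Real.mul_self_sqrt h.le]
    have h0 : ((Real.sqrt d : ℝ) : ℂ) ≠ 0 := by
      rw [Complex.ofReal_ne_zero]; exact (Real.sqrt_pos.2 h).ne'
    rw [hr, ← h1]; field_simp
  have hrc : starRingEnd ℂ r = r := by rw [hr, map_inv₀, Complex.conj_ofReal]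
  have hdet := det_eq S
  have hg1 : ∃ g1 : SL2C, ∀ i j, mx g1 i j = r * (1 + mx S) i j := by
    refine ⟨⟨r • (1 + mx S), ?_⟩, fun i j => rfl⟩
    rw [Matrix.det_fin_two]
    simp [smul_eq_mul]
    linear_combination hr2 + r * r * hdet - r * r * hdc
  obtain ⟨g1, hg1⟩ := hg1
  refine ⟨g⁻¹ * g1, ?_, ?_⟩
  · rw [bar_HH, map_mul, map_inv]
    have h1 : g1 = S * bar g1 := by
      apply sl_ext <;> simp only [mul_e, bar_e, hg1, map_mul, hrc] <;>
        simp [b00, b01, b10, b11]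
      · linear_combination -r * hdet
      · ring
      · ring
      · linear_combination -r * hdet
    have h2 : bar g1 = S⁻¹ * g1 := by nth_rewrite 2 [h1]; group
    rw [h2, hS]; unfold sg; group
  · intro i j
    rw [mul_inv_cancel_left]
    exact hg1 i j

lemma sec {f : ℕ → SL2C} (hf : Tendsto (fun n => sg (f n)) atTop (𝓝 1)) :
    ∃ h : ℕ → SL2C, (∀ n, h n ∈ HH) ∧ Tendsto (fun n => f n * h n) atTop (𝓝 1) := by
  have hch : ∀ n, ∃ h ∈ HH, 0 < (2 + (mx (sg (f n)) 0 0 + mx (sg (f n)) 1 1)).re → ∀ i j,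
      mx (f n * h) i j = ((Real.sqrt (2 + (mx (sg (f n)) 0 0 + mx (sg (f n)) 1 1)).re : ℝ) : ℂ)⁻¹ *
        (1 + mx (sg (f n))) i j := by
    intro n
    by_cases hp : 0 < (2 + (mx (sg (f n)) 0 0 + mx (sg (f n)) 1 1)).re
    · obtain ⟨h, hh, h2⟩ := sec1 (f n) hp
      exact ⟨h, hh, fun _ => h2⟩
    · exact ⟨1, HH.one_mem, fun h => absurd h hp⟩
  choose h hh h2 using hch
  refine ⟨h, hh, ?_⟩
  rw [tendsto_sl] at hf ⊢
  have hd : Tendsto (fun n => (2 + (mx (sg (f n)) 0 0 + mx (sg (f n)) 1 1)).re) atTop (𝓝 4) := by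
    have := (Complex.continuous_re.tendsto _).comp (((hf 0 0).add (hf 1 1)).const_add 2)
    simp only [mx_one] at this
    norm_num at this
    exact this
  have hev : ∀ᶠ n in atTop, 0 < (2 + (mx (sg (f n)) 0 0 + mx (sg (f n)) 1 1)).re :=
    hd.eventually (lt_mem_nhds (by norm_num))
  have hsq : Tendsto (fun n => ((Real.sqrt (2 + (mx (sg (f n)) 0 0 + mx (sg (f n)) 1 1)).re : ℝ) : ℂ)⁻¹)
      atTop (𝓝 ((2 : ℂ)⁻¹)) := by
    refine Tendsto.inv₀ ?_ (by norm_num)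
    have h4 : Real.sqrt 4 = 2 := by rw [show (4:ℝ) = 2 ^ 2 by norm_num]; simp
    have := (Complex.continuous_ofReal.tendsto _).comp ((Real.continuous_sqrt.tendsto 4).comp hd)
    rw [h4] at this
    exact_mod_cast this
  intro i j
  have h3 := hsq.mul ((hf i j).const_add ((1 : M2C) i j))
  have e : (2 : ℂ)⁻¹ * ((1 : M2C) i j + mx 1 i j) = mx 1 i j := by rw [mx_one]; ring
  rw [e] at h3
  refine h3.congr' ?_
  filter_upwards [hev] with n hn
  rw [h2 n hn, Matrix.add_apply]

/-- The real upper triangular unipotents. -/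
def US : Set SL2C := Set.range fun t : ℝ => uMat t

/-- `v_s`. -/
def vM (s : ℝ) : SL2C := uMat (s * Complex.I)

lemma US_sub : US ⊆ (HH : Set SL2C) := by
  rintro _ ⟨t, rfl⟩
  exact u_HH t

lemma v_u_comm (s t : ℝ) : vM s * uMat t = uMat t * vM s := by
  unfold vM
  rw [← uMat_add, ← uMat_add, add_comm]

lemma vM_inv (s : ℝ) : (vM s)⁻¹ = vM (-s) := by
  unfold vM; rw [uMat_inv]; congr 1; push_cast; ring

lemma vM_add (s t : ℝ) : vM (s + t) = vM s * vM t := by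
  unfold vM; rw [← uMat_add]; congr 1; push_cast; ring

lemma vM_cont : Continuous vM := uMat_cont.comp (by fun_prop)

lemma vM_zero : vM 0 = 1 := by unfold vM; rw [← uMat_zero]; congr 1; simp

lemma CI.vshift {L : Subgroup SL2C} {F : Set SL2C} (hF : CI L US F) (r : ℝ) :
    CI L US {x | x * vM r ∈ F} := by
  refine ⟨hF.closed.preimage (continuous_id.mul continuous_const), ?_, ?_⟩
  · intro γ hγ x hx
    have := hF.left γ hγ _ hx
    simpa [mul_assoc] using this
  · rintro _ ⟨t, rfl⟩ x hx
    have := hF.right _ ⟨t, rfl⟩ _ hx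
    simp only [Set.mem_ofPred_eq]
    rw [mul_assoc, ← v_u_comm, ← mul_assoc]
    exact this

lemma CI.toU {L : Subgroup SL2C} {F : Set SL2C} (hF : CI L HH F) : CI L US F :=
  ⟨hF.closed, hF.left, fun s hs => hF.right s (US_sub hs)⟩

lemma pushl {L : Subgroup SL2C} {F Y K : Set SL2C} (hF : CI L HH F) (hY : IsMinl L US Y)
    (hK : IsCompact K) (hYK : ∀ y ∈ Y, ∃ γ ∈ L, γ * y ∈ K) {y : SL2C} (hy : y ∈ Y)
    {g : ℕ → SL2C} (hg : ∀ n, y * g n ∈ F) {t : ℕ → ℝ} {r : ℝ}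
    (ht : Tendsto (fun n => uMat (-(t n)) * sg (g n) * uMat (t n)) atTop (𝓝 (uMat (2 * r * Complex.I)))) :
    ∀ x ∈ Y, x * vM r ∈ F := by
  have hyu : ∀ n, y * uMat (t n) ∈ Y := fun n => hY.ci.right _ ⟨t n, rfl⟩ _ hy
  choose γ hγ hγK using fun n => hYK _ (hyu n)
  obtain ⟨z, hz, φ, hφ, hlim⟩ := hK.tendsto_subseq hγK
  have hzY : z ∈ Y := hY.ci.closed.mem_of_tendsto hlim
    (Eventually.of_forall fun n => hY.ci.left _ (hγ _) _ (hyu _))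
  have hs : Tendsto (fun n => sg (vM (-r) * uMat (-(t n)) * g n)) atTop (𝓝 1) := by
    have h1 : ∀ n, sg (vM (-r) * uMat (-(t n)) * g n) =
        vM (-r) * (uMat (-(t n)) * sg (g n) * uMat (t n)) * vM (-r) := by
      intro n
      rw [mul_assoc, sg_mul, sg_mul]
      have e1 : (bar (vM (-r)))⁻¹ = vM (-r) := by
        unfold vM; rw [bar_v, uMat_inv, neg_neg]
      have e2 : (bar (uMat (-(t n : ℂ))))⁻¹ = uMat (t n) := by
        have := bar_u (-(t n))
        push_cast at this
        rw [this, uMat_inv, neg_neg]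
      rw [e1, e2]
    simp only [h1]
    have h2 := (ht.const_mul (vM (-r))).mul_const (vM (-r))
    convert h2 using 2
    unfold vM
    rw [← uMat_add, ← uMat_add, ← uMat_zero]
    congr 1; push_cast; ring
  obtain ⟨h, hh, hlim2⟩ := sec hs
  have hzF : z * vM r ∈ F := by
    have h3 : Tendsto (fun n => (γ (φ n) * (y * uMat (t (φ n)))) * (vM r * (vM (-r) * uMat (-(t (φ n))) * g (φ n) * h (φ n))))
        atTop (𝓝 (z * (vM r * 1))) :=
      hlim.mul ((hlim2.comp hφ.tendsto_atTop).const_mul (vM r))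
    rw [mul_one] at h3
    refine hF.closed.mem_of_tendsto h3 (Eventually.of_forall fun n => ?_)
    have e : (γ (φ n) * (y * uMat (t (φ n)))) * (vM r * (vM (-r) * uMat (-(t (φ n))) * g (φ n) * h (φ n)))
        = γ (φ n) * (y * g (φ n) * h (φ n)) := by
      rw [← vM_inv, ← uMat_inv]; group
    simp only [e]
    exact hF.left _ (hγ _) _ (hF.right _ (hh _) _ (hg _))
  exact hY.min _ (hF.toU.vshift r) ⟨z, hzF, hzY⟩

lemma conj_lim (S : SL2C) (t : ℂ) : uMat (-t) * S * uMat t = uMat (-t) * S * uMat t ∧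
    mx (uMat (-t) * S * uMat t) 0 0 = mx S 0 0 - t * mx S 1 0 ∧
    mx (uMat (-t) * S * uMat t) 0 1 = mx S 0 1 + t * (mx S 0 0 - mx S 1 1) - t ^ 2 * mx S 1 0 ∧
    mx (uMat (-t) * S * uMat t) 1 0 = mx S 1 0 ∧
    mx (uMat (-t) * S * uMat t) 1 1 = mx S 1 1 + t * mx S 1 0 := by
  refine ⟨rfl, ?_, ?_, ?_, ?_⟩ <;> simp only [mul_e, u00, u01, u10, u11] <;> ring

lemma nd_lim {g : ℕ → SL2C} (hg : Tendsto g atTop (𝓝 1)) (hnd : ∀ n, ¬ Deg (g n)) :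
    ∃ φ : ℕ → ℕ, ∃ τ : ℕ → ℝ, ∃ β κ : ℝ, (β ≠ 0 ∨ κ ≠ 0) ∧
      ∀ s : ℝ, Tendsto (fun n => uMat (-((τ n * s : ℝ) : ℂ)) * sg (g (φ n)) * uMat ((τ n * s : ℝ) : ℂ)) atTop
        (𝓝 (uMat (2 * (β * s - κ * s ^ 2 : ℝ) * Complex.I))) := by
  have hS : Tendsto (fun n => sg (g n)) atTop (𝓝 1) := by
    have := (sg_cont.tendsto 1).comp hg
    rwa [sg_one] at this
  have hSe := tendsto_sl.1 hS
  simp only [mx_one] at hSe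
  have h00 : Tendsto (fun n => mx (sg (g n)) 0 0) atTop (𝓝 1) := by simpa using hSe 0 0
  have h01 : Tendsto (fun n => mx (sg (g n)) 0 1) atTop (𝓝 0) := by simpa using hSe 0 1
  have h10 : Tendsto (fun n => mx (sg (g n)) 1 0) atTop (𝓝 0) := by simpa using hSe 1 0
  have h11 : Tendsto (fun n => mx (sg (g n)) 1 1) atTop (𝓝 1) := by simpa using hSe 1 1
  have hev : ∀ᶠ n in atTop, mx (sg (g n)) 0 0 ≠ -1 := h00.eventually_ne (by norm_num)
  set E : ℕ → ℂ := fun n => mx (sg (g n)) 0 0 - mx (sg (g n)) 1 1 with hE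
  set C : ℕ → ℂ := fun n => mx (sg (g n)) 1 0 with hC
  set m : ℕ → ℝ := fun n => max ‖E n‖ (Real.sqrt ‖C n‖) with hm
  have hE0 : Tendsto E atTop (𝓝 0) := by simpa using h00.sub h11
  have hm0 : Tendsto m atTop (𝓝 0) := by
    have h1 := hE0.norm
    have h2 := (Real.continuous_sqrt.tendsto _).comp h10.norm
    have := h1.max h2
    simpa using this
  have hmpos : ∀ᶠ n in atTop, 0 < m n := by
    filter_upwards [hev] with n hn
    have hmn : 0 ≤ m n := (norm_nonneg _).trans (le_max_left _ _)
    refine lt_of_le_of_ne hmn fun h0 => hnd n ?_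
    have hE' : ‖E n‖ = 0 := le_antisymm (by rw [h0]; exact le_max_left _ _) (norm_nonneg _)
    have hC' : Real.sqrt ‖C n‖ = 0 := le_antisymm (by rw [h0]; exact le_max_right _ _) (Real.sqrt_nonneg _)
    rw [Real.sqrt_eq_zero (norm_nonneg _), norm_eq_zero] at hC'
    rw [norm_eq_zero] at hE'
    exact deg_of hC' (sub_eq_zero.1 hE') hn
  obtain ⟨N, hN⟩ := eventually_atTop.1 hmpos
  set x : ℕ → ℂ × ℂ := fun n => (E (n + N) / m (n + N), C (n + N) / (m (n + N) : ℂ) ^ 2) with hx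
  have hmx : ∀ n, max ‖(x n).1‖ (Real.sqrt ‖(x n).2‖) = 1 := by
    intro n
    have hp := hN (n + N) (by omega)
    simp only [hx, norm_div, norm_pow, Complex.norm_real, Real.norm_eq_abs, abs_of_pos hp]
    rw [Real.sqrt_div (norm_nonneg _), Real.sqrt_sq hp.le, max_div_div_right hp.le]
    exact div_self hp.ne'
  have hxK : ∀ n, x n ∈ Metric.closedBall (0 : ℂ) 1 ×ˢ Metric.closedBall (0 : ℂ) 1 := by
    intro n
    have h1 : ‖(x n).1‖ ≤ 1 := (le_max_left _ _).trans (hmx n).le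
    have h2 : Real.sqrt ‖(x n).2‖ ≤ 1 := (le_max_right _ _).trans (hmx n).le
    rw [Real.sqrt_le_one] at h2
    exact ⟨by simpa using h1, by simpa using h2⟩
  obtain ⟨⟨β, κ⟩, -, φ, hφ, hlim⟩ := ((isCompact_closedBall (0 : ℂ) 1).prod
    (isCompact_closedBall (0 : ℂ) 1)).tendsto_subseq hxK
  have hβ : Tendsto (fun n => (x (φ n)).1) atTop (𝓝 β) := (continuous_fst.tendsto _).comp hlim
  have hκ : Tendsto (fun n => (x (φ n)).2) atTop (𝓝 κ) := (continuous_snd.tendsto _).comp hlim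
  have hmax : max ‖β‖ (Real.sqrt ‖κ‖) = 1 := by
    have h1 := hβ.norm.max ((Real.continuous_sqrt.tendsto _).comp hκ.norm)
    refine tendsto_nhds_unique h1 ?_
    simp only [Function.comp_apply, hmx]
    exact tendsto_const_nhds
  have hb : ∀ n, bar (sg (g n)) = (sg (g n))⁻¹ := fun n => sg_bar _
  have hEre : ∀ n, (E n).re = 0 := by
    intro n
    have : starRingEnd ℂ (mx (sg (g n)) 0 0) = mx (sg (g n)) 1 1 := by rw [← bar_e, hb, inv_00]
    simp only [hE]
    rw [← this]; simp
  have hCre : ∀ n, (C n).re = 0 := by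
    intro n
    have : starRingEnd ℂ (mx (sg (g n)) 1 0) = - mx (sg (g n)) 1 0 := by rw [← bar_e, hb, inv_10]
    have := congrArg Complex.re this
    simp only [Complex.conj_re, Complex.neg_re] at this
    simp only [hC]; linarith
  have hβre : β.re = 0 := by
    refine tendsto_nhds_unique ((Complex.continuous_re.tendsto _).comp hβ) ?_
    have : ∀ n, ((x (φ n)).1).re = 0 := by
      intro n
      simp only [hx, Complex.div_ofReal_re, hEre, zero_div]
    simp only [Function.comp_def, this]
    exact tendsto_const_nhds
  have hκre : κ.re = 0 := by
    refine tendsto_nhds_unique ((Complex.continuous_re.tendsto _).comp hκ) ?_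
    have : ∀ n, ((x (φ n)).2).re = 0 := by
      intro n
      simp only [hx, ← Complex.ofReal_pow, Complex.div_ofReal_re, hCre, zero_div]
    simp only [Function.comp_def, this]
    exact tendsto_const_nhds
  have eβ : β = β.im * Complex.I := by apply Complex.ext <;> simp [hβre]
  have eκ : κ = κ.im * Complex.I := by apply Complex.ext <;> simp [hκre]
  refine ⟨fun n => φ n + N, fun n => (m (φ n + N))⁻¹, β.im / 2, κ.im / 2, ?_, ?_⟩
  · by_contra hc
    push Not at hc
    have h1 : β = 0 := by rw [eβ, show β.im = 0 by linarith [hc.1]]; simp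
    have h2 : κ = 0 := by rw [eκ, show κ.im = 0 by linarith [hc.2]]; simp
    rw [h1, h2] at hmax
    simp at hmax
  · intro s
    have hsub : Tendsto (fun n => φ n + N) atTop atTop :=
      tendsto_atTop_mono (fun n => Nat.le_add_right _ _) hφ.tendsto_atTop
    have hmc : Tendsto (fun n => (m (φ n + N) : ℂ)) atTop (𝓝 0) := by
      have := (Complex.continuous_ofReal.tendsto _).comp (hm0.comp hsub)
      simpa [Function.comp_def] using this
    have hτC : ∀ n, (((m (φ n + N))⁻¹ * s : ℝ) : ℂ) * C (φ n + N) =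
        s * (m (φ n + N) : ℂ) * (x (φ n)).2 := by
      intro n
      have hp : (m (φ n + N) : ℂ) ≠ 0 := Complex.ofReal_ne_zero.2 (hN _ (by omega)).ne'
      simp only [hx]; push_cast; field_simp
    have hτC0 : Tendsto (fun n => (((m (φ n + N))⁻¹ * s : ℝ) : ℂ) * C (φ n + N)) atTop (𝓝 0) := by
      simp only [hτC]
      simpa using (hmc.const_mul (s : ℂ)).mul hκ
    refine tendsto_sl4 ?_ ?_ ?_ ?_
    · simp only [(conj_lim _ _).2.1, u00]
      simpa using (h00.comp hsub).sub hτC0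
    · simp only [(conj_lim _ _).2.2.1, u01]
      have h5 := ((h01.comp hsub).add (hβ.const_mul (s : ℂ))).sub (hκ.const_mul ((s : ℂ) ^ 2))
      have e2 : 0 + (s : ℂ) * β - (s : ℂ) ^ 2 * κ =
          2 * ((β.im / 2 * s - κ.im / 2 * s ^ 2 : ℝ) : ℂ) * Complex.I := by
        push_cast
        linear_combination (s : ℂ) * eβ - (s : ℂ) ^ 2 * eκ
      rw [e2] at h5
      refine h5.congr fun n => ?_
      have hp : (m (φ n + N) : ℂ) ≠ 0 := Complex.ofReal_ne_zero.2 (hN _ (by omega)).ne'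
      simp only [hx, Function.comp_apply, hE, hC]; push_cast; field_simp
    · simp only [(conj_lim _ _).2.2.2.1, u10]
      exact h10.comp hsub
    · simp only [(conj_lim _ _).2.2.2.2, u11]
      simpa using (h11.comp hsub).add hτC0

lemma ndl {L : Subgroup SL2C} (hL : LatHyp L) {F Y K : Set SL2C} (hF : CI L HH F)
    (hFu : F ≠ Set.univ) (hY : IsMinl L US Y)
    (hK : IsCompact K) (hYK : ∀ y ∈ Y, ∃ γ ∈ L, γ * y ∈ K) {y : SL2C} (hy : y ∈ Y) :
    ∀ᶠ g in 𝓝 (1 : SL2C), y * g ∈ F → Deg g := by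
  by_contra hne
  rw [not_eventually] at hne
  obtain ⟨g, hg, hg2⟩ := exists_seq_forall_of_frequently hne
  push Not at hg2
  obtain ⟨φ, τ, β, κ, hβκ, hlim⟩ := nd_lim hg (fun n => (hg2 n).2)
  have key : ∀ s : ℝ, ∀ x ∈ Y, x * vM (β * s - κ * s ^ 2) ∈ F := fun s =>
    pushl hF hY hK hYK hy (g := fun n => g (φ n)) (fun n => (hg2 _).1) (hlim s)
  have hs0 : ∃ s0 : ℝ, β * s0 - κ * s0 ^ 2 ≠ 0 := by
    by_contra hc
    push Not at hc
    have h1 := hc 1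
    have h2 := hc (-1)
    rcases hβκ with h | h
    · apply h; linarith
    · apply h; linarith
  obtain ⟨s0, hs0⟩ := hs0
  have hcont : Continuous fun s : ℝ => β * s - κ * s ^ 2 := by fun_prop
  have hpre : ∀ ρ ∈ Set.uIcc 0 (β * s0 - κ * s0 ^ 2), ∃ s : ℝ, β * s - κ * s ^ 2 = ρ := by
    intro ρ hρ
    have := intermediate_value_uIcc (a := 0) (b := s0) hcont.continuousOn
    simp only [mul_zero, ne_eq, OfNat.ofNat_ne_zero, not_false_eq_true, zero_pow, sub_zero] at this
    obtain ⟨s, _, hs⟩ := this hρ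
    exact ⟨s, hs⟩
  apply hFu
  have hlt : min 0 (β * s0 - κ * s0 ^ 2) < max 0 (β * s0 - κ * s0 ^ 2) := by
    rw [min_lt_max]; exact hs0.symm
  refine dens hL hF (y := y) hlt ?_
  intro x ρ h1 h2
  obtain ⟨s, hs⟩ := hpre ρ ⟨h1.le, h2.le⟩
  have := key s _ (hY.ci.right _ ⟨x, rfl⟩ _ hy)
  rw [hs] at this
  unfold vM at this
  rwa [mul_assoc, ← uMat_add] at this

lemma L_closed {L : Subgroup SL2C} (hd : ∃ η > 0, ∀ γ ∈ L, sz γ < η → sz γ = 0) :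
    IsClosed (L : Set SL2C) := by
  have := disc_of hd
  exact Subgroup.isClosed_of_discrete

lemma L_count {L : Subgroup SL2C} (hd : ∃ η > 0, ∀ γ ∈ L, sz γ < η → sz γ = 0) :
    Countable L := by
  have := disc_of hd
  exact countable_of_Lindelof_of_discrete

/-- The double coset `L g H`. -/
def Zset (L : Subgroup SL2C) (g : SL2C) : Set SL2C := {x | ∃ γ ∈ L, ∃ h ∈ HH, x = γ * g * h}

lemma mem_Zset_self (L : Subgroup SL2C) (g : SL2C) : g ∈ Zset L g :=
  ⟨1, L.one_mem, 1, HH.one_mem, by simp⟩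

lemma Zset_ci {L : Subgroup SL2C} {g : SL2C} (h : IsClosed (Zset L g)) : CI L HH (Zset L g) := by
  refine ⟨h, ?_, ?_⟩
  · rintro γ hγ _ ⟨γ', hγ', h, hh, rfl⟩
    exact ⟨γ * γ', L.mul_mem hγ hγ', h, hh, by group⟩
  · rintro s hs _ ⟨γ', hγ', h, hh, rfl⟩
    exact ⟨γ', hγ', h * s, HH.mul_mem hh hs, by group⟩

lemma Zset_eq {L : Subgroup SL2C} {g x : SL2C} (h : x ∈ Zset L g) : Zset L x = Zset L g := by
  obtain ⟨γ, hγ, h, hh, rfl⟩ := h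
  ext z
  constructor
  · rintro ⟨γ', hγ', h', hh', rfl⟩
    exact ⟨γ' * γ, L.mul_mem hγ' hγ, h * h', HH.mul_mem hh hh', by group⟩
  · rintro ⟨γ', hγ', h', hh', rfl⟩
    exact ⟨γ' * γ⁻¹, L.mul_mem hγ' (L.inv_mem hγ), h⁻¹ * h', HH.mul_mem (HH.inv_mem hh) hh', by group⟩

lemma baire {L : Subgroup SL2C} (hd : ∃ η > 0, ∀ γ ∈ L, sz γ < η → sz γ = 0) {g z : SL2C}
    (hc : IsClosed (Zset L g)) (hz : z ∈ Zset L g) :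
    ∀ᶠ e in 𝓝 (1 : SL2C), z * e ∈ Zset L g → e ∈ HH := by
  have := L_count hd
  have : LocallyCompactSpace (Zset L g) := hc.isClosedEmbedding_subtypeVal.locallyCompactSpace
  have : Nonempty (Zset L g) := ⟨⟨z, hz⟩⟩
  have hcl : ∀ γ : L, IsClosed {x : Zset L g | (γ * g : SL2C)⁻¹ * x.1 ∈ HH} := by
    intro γ
    exact HH_closed.preimage (continuous_const.mul continuous_subtype_val)
  have hun : ⋃ γ : L, {x : Zset L g | (γ * g : SL2C)⁻¹ * x.1 ∈ HH} = Set.univ := by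
    ext ⟨x, γ, hγ, h, hh, hx⟩
    simp only [Set.mem_iUnion, Set.mem_univ, iff_true]
    refine ⟨⟨γ, hγ⟩, ?_⟩
    simp only [Set.mem_ofPred_eq, hx]
    convert hh using 1; group
  obtain ⟨γ, ⟨z0, hz0⟩⟩ := nonempty_interior_of_iUnion_of_closed hcl hun
  obtain ⟨O, hO, hO2⟩ := mem_nhds_subtype _ _ _ |>.1 (mem_interior_iff_mem_nhds.1 hz0)
  have hz0' : (γ * g : SL2C)⁻¹ * z0.1 ∈ HH := by
    have h9 : z0 ∈ {x : Zset L g | (γ * g : SL2C)⁻¹ * x.1 ∈ HH} := interior_subset hz0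
    exact h9
  set h0 := (γ * g : SL2C)⁻¹ * z0.1 with hh0
  obtain ⟨γ1, hγ1, h1, hh1, rfl⟩ := hz
  have hcont : Continuous fun e : SL2C => (γ : SL2C) * γ1⁻¹ * (γ1 * g * h1 * e) * (h1⁻¹ * h0) :=
    (continuous_const.mul (continuous_const.mul continuous_id)).mul continuous_const
  have hat : (γ : SL2C) * γ1⁻¹ * (γ1 * g * h1 * 1) * (h1⁻¹ * h0) = z0.1 := by
    rw [hh0]; group
  have hev := hcont.tendsto 1
  simp only [hat] at hev
  filter_upwards [hev.eventually hO] with e he hez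
  have hmem : (γ : SL2C) * γ1⁻¹ * (γ1 * g * h1 * e) * (h1⁻¹ * h0) ∈ Zset L g :=
    (Zset_ci hc).right _ (HH.mul_mem (HH.inv_mem hh1) hz0') _
      ((Zset_ci hc).left _ (L.mul_mem γ.2 (L.inv_mem hγ1)) _ hez)
  have h3 := hO2 (a := ⟨_, hmem⟩) he
  simp only [Set.mem_ofPred_eq] at h3
  have e1 : (γ * g : SL2C)⁻¹ * (γ * γ1⁻¹ * (γ1 * g * h1 * e) * (h1⁻¹ * h0)) = h1 * e * (h1⁻¹ * h0) := by
    group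
  rw [e1, Subgroup.mul_mem_cancel_right _ (HH.mul_mem (HH.inv_mem hh1) hz0'),
    Subgroup.mul_mem_cancel_left _ hh1] at h3
  exact h3

lemma meets {L : Subgroup SL2C} (hL : LatHyp L) : ∃ K : Set SL2C, IsCompact K ∧
    ∀ C, CI L HH C → C.Nonempty → (C ∩ K).Nonempty := by
  obtain ⟨K, hK, h⟩ := hL.cpt ε0 (by norm_num [ε0])
  refine ⟨K, hK, ?_⟩
  rintro C hC ⟨x, hx⟩
  obtain ⟨s, t, -, hst⟩ := nondiv hL.disc x 0
  obtain ⟨γ, hγ, hγK⟩ := h _ hst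
  exact ⟨_, hC.left γ hγ _ (hC.right _ (HH.mul_mem (u_HH s) (aE_HH t)) _ hx), hγK⟩

lemma cuspC {L : Subgroup SL2C} (hd : ∃ η > 0, ∀ γ ∈ L, sz γ < η → sz γ = 0) {y : SL2C} {w : ℂ}
    (hw : w ≠ 0) (hy : uMat w ∈ cj L y) : ∃ ε > 0, ∀ s : ℝ, y * uMat s ∈ Wset L ε := by
  obtain ⟨γw, hγw, eγw⟩ := mem_cj.1 hy
  obtain ⟨η, hη, hcd⟩ := cj_disc hd y
  have hε0 : (0 : ℝ) < ε0 := by norm_num [ε0]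
  have hwn : 0 < ‖w‖ := norm_pos_iff.2 hw
  obtain ⟨t, ht⟩ : ∃ t : ℝ, Real.exp (-t) ^ 2 * ‖w‖ < ε0 := by
    refine ⟨-(Real.log (ε0 / 2 / ‖w‖)) / 2, ?_⟩
    rw [← Real.exp_nat_mul]
    have : ((2 : ℕ) : ℝ) * -(-Real.log (ε0 / 2 / ‖w‖) / 2) = Real.log (ε0 / 2 / ‖w‖) := by push_cast; ring
    rw [this, Real.exp_log (by positivity), div_mul_cancel₀ _ hwn.ne']
    linarith
  set a := aE t with ha
  set C := nm (mx a⁻¹) * nm (mx a) with hC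
  have hC0 : 0 ≤ C := mul_nonneg (nm_nonneg _) (nm_nonneg _)
  refine ⟨min η (ε0 / (C + 1)), by positivity, ?_⟩
  intro s γ hγ hsz
  by_contra hlt
  push Not at hlt
  set d := (y * uMat s)⁻¹ * γ * (y * uMat s) with hdd
  have h1 : sz ((y * uMat s * a)⁻¹ * γ * (y * uMat s * a)) < ε0 := by
    have e : (y * uMat s * a)⁻¹ * γ * (y * uMat s * a) = a⁻¹ * d * a := by rw [hdd]; group
    rw [e]
    refine (sz_conj_le a d).trans_lt ?_
    have h2 : sz d < ε0 / (C + 1) := hlt.trans_le (min_le_right _ _)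
    rw [lt_div_iff₀ (by positivity)] at h2
    rw [← hC]
    nlinarith [sz_nonneg d]
  have h2 : sz ((y * uMat s * a)⁻¹ * γw * (y * uMat s * a)) < ε0 := by
    have e : (y * uMat s * a)⁻¹ * γw * (y * uMat s * a) = uMat ((Real.exp (-t) : ℂ) ^ 2 * w) := by
      have e1 : (y * uMat s * a)⁻¹ * γw * (y * uMat s * a) =
        a⁻¹ * ((uMat s)⁻¹ * (y⁻¹ * γw * y) * uMat s) * a := by group
      rw [e1, ← eγw, uMat_inv, ← uMat_add, ← uMat_add, ha, aE_inv]
      have e2 : ((Real.exp t : ℝ) : ℂ) * (Real.exp (-t) : ℝ) = 1 := by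
        rw [← Complex.ofReal_mul, ← Real.exp_add]; simp
      apply sl_ext <;> simp only [mul_e, a00, a01, a10, a11, u00, u01, u10, u11, neg_neg]
      · linear_combination e2
      · ring
      · ring
      · linear_combination e2
    rw [e]
    unfold sz nm
    rw [tl_00, tl_01, tl_10, tl_11, u00, u01, u10, u11]
    simp only [sub_self, zero_div, neg_zero, norm_zero, norm_mul, norm_pow, Complex.norm_real,
      Real.norm_eq_abs, abs_of_pos (Real.exp_pos _)]
    linarith
  have hcomm := zass hd hγ hγw h1 h2
  have hwsz : sz (uMat w) ≠ 0 := by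
    unfold sz nm
    rw [tl_00, tl_01, tl_10, tl_11, u00, u01, u10, u11]
    simpa using hw
  have hcomm2 : (y⁻¹ * γ * y) * uMat w = uMat w * (y⁻¹ * γ * y) := by
    rw [eγw]
    calc (y⁻¹ * γ * y) * (y⁻¹ * γw * y) = y⁻¹ * (γ * γw) * y := by group
      _ = y⁻¹ * (γw * γ) * y := by rw [hcomm]
      _ = _ := by group
  have hcomm3 : (y⁻¹ * γ * y) * uMat s = uMat s * (y⁻¹ * γ * y) := by
    refine comm_trans hwsz hcomm2 ?_
    rw [← uMat_add, ← uMat_add, add_comm]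
  have hde : d = y⁻¹ * γ * y := by
    have : d = (uMat s)⁻¹ * ((y⁻¹ * γ * y) * uMat s) := by rw [hdd]; group
    rw [this, hcomm3]; group
  have hz := hcd (y⁻¹ * γ * y) (mem_cj.2 ⟨γ, hγ, rfl⟩) (by rw [← hde]; exact hlt.trans_le (min_le_left _ _))
  rw [sz_conj_zero] at hz
  exact hsz hz

/-- The Weyl element. -/
def wM : SL2C := ⟨!![0, 1; -1, 0], by simp [Matrix.det_fin_two_of]⟩

lemma w00 : mx wM 0 0 = 0 := rfl
lemma w01 : mx wM 0 1 = 1 := rfl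
lemma w10 : mx wM 1 0 = -1 := rfl
lemma w11 : mx wM 1 1 = 0 := rfl

lemma w_HH : wM ∈ HH := by
  apply mem_HH4 <;> simp [w00, w01, w10, w11]

lemma near_min {L : Subgroup SL2C} (hd : ∃ η > 0, ∀ γ ∈ L, sz γ < η → sz γ = 0) (x : SL2C)
    (hne : ∃ γ ∈ L, sz γ ≠ 0) : ∃ γ ∈ L, sz γ ≠ 0 ∧
      ∀ γ' ∈ L, sz γ' ≠ 0 → sz (x⁻¹ * γ * x) ≤ 2 * sz (x⁻¹ * γ' * x) := by
  obtain ⟨ε, hε, hx⟩ := mem_Wset_of_disc hd x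
  set A : Set ℝ := {r | ∃ γ ∈ L, sz γ ≠ 0 ∧ sz (x⁻¹ * γ * x) = r} with hA
  have hAne : A.Nonempty := by
    obtain ⟨γ, h1, h2⟩ := hne
    exact ⟨_, γ, h1, h2, rfl⟩
  have hAb : ∀ r ∈ A, ε ≤ r := by
    rintro _ ⟨γ, h1, h2, rfl⟩
    exact hx γ h1 h2
  have hle : ε ≤ sInf A := le_csInf hAne hAb
  obtain ⟨_, ⟨γ, h1, h2, rfl⟩, h3⟩ := exists_lt_of_csInf_lt hAne (show sInf A < 2 * sInf A by linarith)
  refine ⟨γ, h1, h2, fun γ' h4 h5 => ?_⟩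
  have : sInf A ≤ sz (x⁻¹ * γ' * x) := csInf_le ⟨ε, hAb⟩ ⟨γ', h4, h5, rfl⟩
  linarith

lemma pick_h (q : SL2C) : ∃ h ∈ HH, nm (mx h) ≤ 3 ∧ sz q ≤ 3 * ‖mx (h⁻¹ * q * h) 0 1‖ := by
  have u1 : ∀ t : ℝ, |t| ≤ 1 → nm (mx (uMat t)) ≤ 3 := by
    intro t ht
    unfold nm
    rw [u00, u01, u10, u11]
    simp only [norm_one, norm_zero, Complex.norm_real, Real.norm_eq_abs]
    linarith
  have k0 : mx ((1 : SL2C)⁻¹ * q * 1) 0 1 = mx q 0 1 := by simp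
  have k1 : ∀ t : ℝ, mx ((uMat t)⁻¹ * q * uMat t) 0 1 =
      mx q 0 1 + t * (mx q 0 0 - mx q 1 1) - t ^ 2 * mx q 1 0 := by
    intro t
    rw [uMat_inv]; simp only [mul_e, u00, u01, u10, u11]; ring
  have k3 : mx (wM⁻¹ * q * wM) 0 1 = - mx q 1 0 := by
    simp only [mul_e, inv_00, inv_01, inv_10, inv_11, w00, w01, w10, w11]; ring
  by_contra hc
  push Not at hc
  have h0 := hc 1 HH.one_mem (by rw [mx_one, nm_one]; norm_num)
  have h1 := hc (uMat (1 : ℝ)) (u_HH 1) (u1 1 (by norm_num))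
  have h2 := hc (uMat (-1 : ℝ)) (u_HH (-1)) (u1 (-1) (by norm_num))
  have h3 := hc wM w_HH (by unfold nm; rw [w00, w01, w10, w11]; norm_num)
  rw [k0] at h0
  rw [k1] at h1 h2
  rw [k3, norm_neg] at h3
  set e := mx q 0 0 - mx q 1 1 with he
  have h4 : ‖(2 : ℂ) * e‖ ≤ ‖mx q 0 1 + ((1 : ℝ) : ℂ) * e - ((1 : ℝ) : ℂ) ^ 2 * mx q 1 0‖ +
      ‖mx q 0 1 + ((-1 : ℝ) : ℂ) * e - ((-1 : ℝ) : ℂ) ^ 2 * mx q 1 0‖ := by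
    refine le_trans (le_of_eq ?_) (norm_sub_le _ _)
    congr 1; push_cast; ring
  rw [norm_mul] at h4
  have h5 : sz q = ‖e‖ + ‖mx q 0 1‖ + ‖mx q 1 0‖ := by
    unfold sz nm
    rw [tl_00, tl_01, tl_10, tl_11, ← he, norm_neg, norm_div]
    simp; ring
  have h6 : ‖(2 : ℂ)‖ = 2 := by simp
  rw [h6] at h4
  linarith

lemma cusp1 {L : Subgroup SL2C} (hd : ∃ η > 0, ∀ γ ∈ L, sz γ < η → sz γ = 0) {M : Set SL2C}
    (hM : CI L HH M) (hu : ∀ ε > 0, ¬ M ⊆ Wset L ε) (η : ℝ) (hη : 0 < η) :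
    ∃ x ∈ M, ∃ γ ∈ L, sz γ ≠ 0 ∧ sz (x⁻¹ * γ * x) < η ∧
      sz (x⁻¹ * γ * x) ≤ 27 * ‖mx (x⁻¹ * γ * x) 0 1‖ ∧
      ∀ γ' ∈ L, sz γ' ≠ 0 → sz (x⁻¹ * γ * x) ≤ 162 * sz (x⁻¹ * γ' * x) := by
  obtain ⟨x, hx, hxW⟩ := Set.not_subset.1 (hu (η / 18) (by positivity))
  unfold Wset at hxW
  simp only [Set.mem_ofPred_eq] at hxW
  push Not at hxW
  obtain ⟨γ1, hγ1, hs1, hlt⟩ := hxW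
  obtain ⟨γ, hγ, hs, hmin⟩ := near_min hd x ⟨γ1, hγ1, hs1⟩
  set q := x⁻¹ * γ * x with hq
  have hqs : sz q < η / 9 := by linarith [hmin γ1 hγ1 hs1]
  obtain ⟨h, hh, hn, hbig⟩ := pick_h q
  have e : ∀ δ : SL2C, (x * h)⁻¹ * δ * (x * h) = h⁻¹ * (x⁻¹ * δ * x) * h := fun δ => by group
  have hle : ∀ δ : SL2C, sz (h⁻¹ * δ * h) ≤ 9 * sz δ := by
    intro δ
    refine (sz_conj_le h δ).trans ?_
    rw [nm_inv]
    refine mul_le_mul_of_nonneg_right ?_ (sz_nonneg _)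
    nlinarith [nm_nonneg (mx h)]
  have hge : ∀ δ : SL2C, sz δ ≤ 9 * sz (h⁻¹ * δ * h) := by
    intro δ
    have h1 := sz_conj_le h⁻¹ (h⁻¹ * δ * h)
    have e2 : h⁻¹⁻¹ * (h⁻¹ * δ * h) * h⁻¹ = δ := by group
    rw [e2, inv_inv, nm_inv] at h1
    refine h1.trans (mul_le_mul_of_nonneg_right ?_ (sz_nonneg _))
    nlinarith [nm_nonneg (mx h)]
  refine ⟨x * h, hM.right h hh x hx, γ, hγ, hs, ?_, ?_, ?_⟩
  · rw [e, ← hq]; linarith [hle q]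
  · rw [e, ← hq]; linarith [hle q]
  · intro γ' h1 h2
    rw [e, e, ← hq]
    linarith [hle q, hmin γ' h1 h2, hge (x⁻¹ * γ' * x)]

lemma pick_t (B e : ℝ) (hB : 0 < B) (he : 0 < e) : ∃ t : ℝ, Real.exp t ^ 2 = B / e ∧
    Real.exp (-t) ^ 2 * B = e := by
  have het : Real.exp (Real.log (B / e) / 2) ^ 2 = B / e := by
    rw [← Real.exp_nat_mul]
    have : ((2 : ℕ) : ℝ) * (Real.log (B / e) / 2) = Real.log (B / e) := by push_cast; ring
    rw [this, Real.exp_log (by positivity)]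
  refine ⟨Real.log (B / e) / 2, het, ?_⟩
  have h1 : Real.exp (-(Real.log (B / e) / 2)) ^ 2 * Real.exp (Real.log (B / e) / 2) ^ 2 = 1 := by
    rw [← mul_pow, ← Real.exp_add]; simp
  rw [het] at h1
  field_simp at h1
  linarith

set_option maxHeartbeats 1000000 in
lemma cusp2 {L : Subgroup SL2C} (hd : ∃ η > 0, ∀ γ ∈ L, sz γ < η → sz γ = 0) {M : Set SL2C}
    (hM : CI L HH M) (hu : ∀ ε > 0, ¬ M ⊆ Wset L ε) (η : ℝ) (hη : 0 < η) :
    ∃ x ∈ M, x ∈ Wset L (ε0 / 400) ∧ ∃ γ ∈ L, sz (x⁻¹ * γ * x) < ε0 ∧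
      ‖mx (x⁻¹ * γ * x) 0 1‖ = ε0 / 2 ∧ ‖mx (x⁻¹ * γ * x) 1 0‖ < η ∧
      ‖mx (x⁻¹ * γ * x) 0 0 - mx (x⁻¹ * γ * x) 1 1‖ < η := by
  have hε0 : (0 : ℝ) < ε0 := by norm_num [ε0]
  obtain ⟨x, hx, γ, hγ, hs, hsm, h27, h162⟩ := cusp1 hd hM hu (min η (ε0 / 2)) (by positivity)
  have hs1 : sz (x⁻¹ * γ * x) < η := hsm.trans_le (min_le_left _ _)
  have hs2 : sz (x⁻¹ * γ * x) < ε0 / 2 := hsm.trans_le (min_le_right _ _)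
  set q := x⁻¹ * γ * x with hq
  have hszq : sz q = ‖mx q 0 0 - mx q 1 1‖ + ‖mx q 0 1‖ + ‖mx q 1 0‖ := by
    unfold sz nm
    rw [tl_00, tl_01, tl_10, tl_11, norm_neg, norm_div]
    simp; ring
  have hn1 := norm_nonneg (mx q 0 0 - mx q 1 1)
  have hn2 := norm_nonneg (mx q 0 1)
  have hn3 := norm_nonneg (mx q 1 0)
  have hqs : sz q ≠ 0 := by rw [hq, ne_eq, sz_conj_zero]; exact hs
  have hqpos : 0 < sz q := lt_of_le_of_ne (sz_nonneg _) (Ne.symm hqs)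
  have hβ : 0 < ‖mx q 0 1‖ := by linarith
  obtain ⟨t, het, het2⟩ := pick_t ‖mx q 0 1‖ (ε0 / 2) hβ (by positivity)
  have het1 : Real.exp t ^ 2 ≤ 1 := by
    rw [het, div_le_one (by positivity)]; linarith
  set a := aE t with ha
  have e : ∀ δ : SL2C, (x * a)⁻¹ * δ * (x * a) = a⁻¹ * (x⁻¹ * δ * x) * a := fun δ => by group
  have e2 : ((Real.exp t : ℝ) : ℂ) * (Real.exp (-t) : ℝ) = 1 := by
    rw [← Complex.ofReal_mul, ← Real.exp_add]; simp
  have c00 : ∀ d : SL2C, mx (a⁻¹ * d * a) 0 0 = mx d 0 0 := by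
    intro d
    rw [ha, aE_inv]; simp only [mul_e, a00, a01, a10, a11, neg_neg]
    linear_combination mx d 0 0 * e2
  have c11 : ∀ d : SL2C, mx (a⁻¹ * d * a) 1 1 = mx d 1 1 := by
    intro d
    rw [ha, aE_inv]; simp only [mul_e, a00, a01, a10, a11, neg_neg]
    linear_combination mx d 1 1 * e2
  have c01 : ∀ d : SL2C, mx (a⁻¹ * d * a) 0 1 = (Real.exp (-t) : ℂ) ^ 2 * mx d 0 1 := by
    intro d
    rw [ha, aE_inv]; simp only [mul_e, a00, a01, a10, a11, neg_neg]
    ring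
  have c10 : ∀ d : SL2C, mx (a⁻¹ * d * a) 1 0 = (Real.exp t : ℂ) ^ 2 * mx d 1 0 := by
    intro d
    rw [ha, aE_inv]; simp only [mul_e, a00, a01, a10, a11, neg_neg]
    ring
  have n01 : ‖mx (a⁻¹ * q * a) 0 1‖ = ε0 / 2 := by
    rw [c01, norm_mul, norm_pow, Complex.norm_real, Real.norm_eq_abs, abs_of_pos (Real.exp_pos _), het2]
  have n10 : ‖mx (a⁻¹ * q * a) 1 0‖ ≤ ‖mx q 1 0‖ := by
    rw [c10, norm_mul, norm_pow, Complex.norm_real, Real.norm_eq_abs, abs_of_pos (Real.exp_pos _)]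
    exact mul_le_of_le_one_left hn3 het1
  have nq : sz (a⁻¹ * q * a) < ε0 := by
    have : sz (a⁻¹ * q * a) = ‖mx q 0 0 - mx q 1 1‖ + ‖mx (a⁻¹ * q * a) 0 1‖ + ‖mx (a⁻¹ * q * a) 1 0‖ := by
      unfold sz nm
      rw [tl_00, tl_01, tl_10, tl_11, norm_neg, norm_div, c00, c11]
      simp; ring
    linarith
  refine ⟨x * a, hM.right a (aE_HH t) x hx, ?_, γ, hγ, ?_⟩
  · intro γ' hγ' hs'
    by_contra hlt
    push Not at hlt
    have hcomm := zass hd (x := x * a) hγ hγ' (by rw [e, ← hq]; exact nq) (by linarith)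
    have hcomm2 : (x⁻¹ * γ * x) * (x⁻¹ * γ' * x) = (x⁻¹ * γ' * x) * (x⁻¹ * γ * x) := by
      calc _ = x⁻¹ * (γ * γ') * x := by group
        _ = x⁻¹ * (γ' * γ) * x := by rw [hcomm]
        _ = _ := by group
    obtain ⟨c, hc⟩ := tl_prop' hcomm2 (by rw [← hq]; exact hqs)
    rw [← hq] at hc
    have hsz' : sz (x⁻¹ * γ' * x) = ‖c‖ * sz q := by
      unfold sz; rw [hc, nm_smul]
    have h3 := h162 γ' hγ' hs'
    rw [hsz'] at h3
    have hcl : 1 ≤ 162 * ‖c‖ := by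
      by_contra hh
      push Not at hh
      nlinarith
    have h01 : mx (x⁻¹ * γ' * x) 0 1 = c * mx q 0 1 := by
      rw [← tl_01 (mx (x⁻¹ * γ' * x)), hc, Matrix.smul_apply, tl_01, smul_eq_mul]
    have h5 : ‖mx ((x * a)⁻¹ * γ' * (x * a)) 0 1‖ = ‖c‖ * (ε0 / 2) := by
      rw [e, c01, h01, ← n01, c01, norm_mul, norm_mul, norm_mul]; ring
    have h6 : ‖mx ((x * a)⁻¹ * γ' * (x * a)) 0 1‖ ≤ sz ((x * a)⁻¹ * γ' * (x * a)) := by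
      unfold sz
      rw [← tl_01 (mx _)]; exact nm_entry _ _ _
    rw [h5] at h6
    nlinarith
  · rw [e, ← hq]
    refine ⟨nq, n01, by linarith, ?_⟩
    rw [c00, c11]; linarith

lemma cpt_ball (R : ℝ) : IsCompact {g : SL2C | nm (mx g) ≤ R} := by
  have h1 : IsCompact {A : M2C | ∀ i j, A i j ∈ Metric.closedBall (0 : ℂ) R} :=
    isCompact_pi_infinite fun i => isCompact_pi_infinite fun j => isCompact_closedBall (0 : ℂ) R
  have h2 := mx_embed.isCompact_preimage h1
  refine h2.of_isClosed_subset (isClosed_le (nm_continuous.comp cval) continuous_const) ?_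
  intro g hg i j
  rw [mem_closedBall_zero_iff]
  exact (nm_entry _ _ _).trans hg

lemma cusp {L : Subgroup SL2C} (hL : LatHyp L) {M : Set SL2C}
    (hM : CI L HH M) (hu : ∀ ε > 0, ¬ M ⊆ Wset L ε) :
    ∃ y ∈ M, ∃ w : ℂ, w ≠ 0 ∧ uMat w ∈ cj L y := by
  have hε0 : (0 : ℝ) < ε0 := by norm_num [ε0]
  have hpos : ∀ n : ℕ, (0 : ℝ) < 1 / ((n : ℝ) + 1) := fun n => by positivity
  choose x hxM hxW γ hγ h1 h2 h3 h4 using fun n : ℕ => cusp2 hL.disc hM hu _ (hpos n)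
  obtain ⟨K, hK, hKW⟩ := hL.cpt (ε0 / 400) (by positivity)
  choose δ hδ hδK using fun n => hKW _ (hxW n)
  set q : ℕ → SL2C := fun n => (x n)⁻¹ * γ n * x n with hq
  have hqK : ∀ n, q n ∈ {g : SL2C | nm (mx g) ≤ 3} := fun n => nm_le_of_small (h1 n)
  obtain ⟨⟨y, q0⟩, -, φ, hφ, hlim⟩ := (hK.prod (cpt_ball 3)).tendsto_subseq
    (x := fun n => (δ n * x n, q n)) (fun n => ⟨hδK n, hqK n⟩)
  have hy : Tendsto (fun n => δ (φ n) * x (φ n)) atTop (𝓝 y) := (continuous_fst.tendsto _).comp hlim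
  have hq0 : Tendsto (fun n => q (φ n)) atTop (𝓝 q0) := (continuous_snd.tendsto _).comp hlim
  have hyM : y ∈ M := hM.closed.mem_of_tendsto hy
    (Eventually.of_forall fun n => hM.left _ (hδ _) _ (hxM _))
  have hqe := tendsto_sl.1 hq0
  have hz : Tendsto (fun n => 1 / ((φ n : ℝ) + 1)) atTop (𝓝 0) :=
    tendsto_one_div_add_atTop_nhds_zero_nat.comp hφ.tendsto_atTop
  have l01 : ‖mx q0 0 1‖ = ε0 / 2 := by
    refine tendsto_nhds_unique (hqe 0 1).norm ?_
    simp only [hq, h2]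
    exact tendsto_const_nhds
  have l10 : mx q0 1 0 = 0 := by
    rw [← norm_eq_zero]
    refine le_antisymm (le_of_tendsto_of_tendsto' (hqe 1 0).norm hz fun n => (h3 _).le) (norm_nonneg _)
  have l00 : mx q0 0 0 - mx q0 1 1 = 0 := by
    rw [← norm_eq_zero]
    refine le_antisymm (le_of_tendsto_of_tendsto' ((hqe 0 0).sub (hqe 1 1)).norm hz fun n => (h4 _).le)
      (norm_nonneg _)
  have hmem : y * q0 * y⁻¹ ∈ L := by
    refine (L_closed hL.disc).mem_of_tendsto ((hy.mul hq0).mul hy.inv) (Eventually.of_forall fun n => ?_)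
    have e : δ (φ n) * x (φ n) * q (φ n) * (δ (φ n) * x (φ n))⁻¹ = δ (φ n) * γ (φ n) * (δ (φ n))⁻¹ := by
      simp only [hq]; group
    simp only [e]
    exact L.mul_mem (L.mul_mem (hδ _) (hγ _)) (L.inv_mem (hδ _))
  have hdet := det_eq q0
  rw [l10] at hdet
  have h11 : mx q0 1 1 = mx q0 0 0 := by linear_combination -l00
  rw [h11] at hdet
  have hn0 : mx q0 0 1 ≠ 0 := by
    rw [← norm_pos_iff, l01]; positivity
  have hcj : q0 ∈ cj L y := mem_cj.2 ⟨_, hmem, by group⟩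
  have hpm : (mx q0 0 0 - 1) * (mx q0 0 0 + 1) = 0 := by linear_combination hdet
  refine ⟨y, hyM, ?_⟩
  rcases mul_eq_zero.1 hpm with h | h
  · have h00 : mx q0 0 0 = 1 := by linear_combination h
    refine ⟨mx q0 0 1, hn0, ?_⟩
    have : uMat (mx q0 0 1) = q0 := by
      apply sl_ext <;> simp only [u00, u01, u10, u11]
      · exact h00.symm
      · exact l10.symm
      · rw [h11, h00]
    rwa [this]
  · have h00 : mx q0 0 0 = -1 := by linear_combination h
    refine ⟨-mx q0 0 1, neg_ne_zero.2 hn0, ?_⟩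
    have : uMat (-mx q0 0 1) = (-1) * q0 := by
      rw [neg_one_mul]
      apply sl_ext <;> simp only [u00, u01, u10, u11, mx_neg, Matrix.neg_apply]
      · rw [h00]; ring
      · rw [l10]; ring
      · rw [h11, h00]; ring
    rw [this]
    refine (cj L y).mul_mem (mem_cj.2 ⟨-1, hL.neg, ?_⟩) hcj
    simp

/-- The situation in which the final contradiction is derived. -/
structure Ctx (L : Subgroup SL2C) (F M Y K : Set SL2C) (Z : ℕ → Set SL2C) : Prop where
  hL : LatHyp L
  Fci : CI L HH F
  Fne : F ≠ Set.univ
  ZF : ∀ i, Z i ⊆ F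
  Zci : ∀ i, CI L HH (Z i)
  Zb : ∀ i, ∀ z ∈ Z i, ∀ᶠ e in 𝓝 (1 : SL2C), z * e ∈ Z i → e ∈ HH
  Zd : ∀ i j, i ≠ j → ∀ z ∈ Z i, z ∉ Z j
  Mm : IsMinl L HH M
  MF : M ⊆ F
  acc : ∀ y ∈ M, ∀ m : ℕ, ∀ N ∈ 𝓝 (1 : SL2C), ∃ i ≥ m, ∃ g ∈ N, y * g ∈ Z i
  Ym : IsMinl L US Y
  YM : Y ⊆ M
  Kc : IsCompact K
  YK : ∀ y ∈ Y, ∃ γ ∈ L, γ * y ∈ K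

section

variable {L : Subgroup SL2C} {F M Y K : Set SL2C} {Z : ℕ → Set SL2C}

lemma Ctx.appr (c : Ctx L F M Y K Z) {y : SL2C} (hy : y ∈ Y) (m : ℕ) {η : ℝ} (hη : 0 < η) :
    ∃ i ≥ m, ∃ s : ℝ, |s| < η ∧ s ≠ 0 ∧ y * vM s ∈ Z i := by
  obtain ⟨m', hm, hm'⟩ : ∃ m' ≥ m, ∀ i ≥ m', y ∉ Z i := by
    by_cases h : ∃ j, y ∈ Z j
    · obtain ⟨j, hj⟩ := h
      refine ⟨max m (j + 1), le_max_left _ _, fun i hi => c.Zd j i ?_ y hj⟩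
      have := le_trans (le_max_right _ _) hi
      omega
    · push Not at h
      exact ⟨m, le_rfl, fun i _ => h i⟩
  have h1 := ndl c.hL c.Fci c.Fne c.Ym c.Kc c.YK hy
  have h2 : ∀ᶠ g in 𝓝 (1 : SL2C), ‖mx (sg g) 0 1‖ < 2 * η := by
    have hc : Continuous fun g : SL2C => ‖mx (sg g) 0 1‖ := ((centry 0 1).comp sg_cont).norm
    refine hc.continuousAt.eventually_lt_const ?_
    show ‖mx (sg 1) 0 1‖ < 2 * η
    rw [sg_one, mx_one]; simpa using hη
  obtain ⟨i, hi, g, ⟨hg1, hg2⟩, hgZ⟩ := c.acc y (c.YM hy) m' _ (h1.and h2)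
  obtain ⟨s, h, hh, rfl⟩ := hg1 (c.ZF i hgZ)
  have hZ : y * vM s ∈ Z i := by
    have := (c.Zci i).right h⁻¹ (HH.inv_mem hh) _ hgZ
    have e : y * (uMat (s * Complex.I) * h) * h⁻¹ = y * vM s := by unfold vM; group
    rwa [e] at this
  refine ⟨i, hm.trans hi, s, ?_, ?_, hZ⟩
  · rw [sg_vh s hh, u01] at hg2
    simp at hg2
    linarith
  · rintro rfl
    rw [vM_zero, mul_one] at hZ
    exact hm' i hi hZ

lemma two_conj {e : SL2C} {s1 s2 : ℝ} (hs : s1 ≠ s2) (h1 : vM (-s1) * e * vM s1 ∈ HH)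
    (h2 : vM (-s2) * e * vM s2 ∈ HH) : ∃ t : ℝ, (e = uMat t ∨ e = -uMat t) ∧ (mx e 0 1).re ^ 2 = t ^ 2 := by
  have k : ∀ s : ℝ, vM (-s) * e * vM s ∈ HH → (mx e 1 0).im = 0 ∧ (mx e 0 0).im - s * (mx e 1 0).re = 0 ∧
      (mx e 1 1).im + s * (mx e 1 0).re = 0 ∧
      (mx e 0 1).im + s * ((mx e 0 0).re - (mx e 1 1).re) + s ^ 2 * (mx e 1 0).im = 0 := by
    intro s hs
    have a := hs 0 0
    have b := hs 0 1
    have c := hs 1 0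
    have d := hs 1 1
    simp only [vM, mul_e, u00, u01, u10, u11] at a b c d
    simp at a b c d
    refine ⟨c, by linarith, by linarith, ?_⟩
    rw [c] at b ⊢
    linarith
  obtain ⟨a1, b1, c1, d1⟩ := k s1 h1
  obtain ⟨a2, b2, c2, d2⟩ := k s2 h2
  have hs' : s1 - s2 ≠ 0 := sub_ne_zero.2 hs
  have r10 : (mx e 1 0).re = 0 := by
    have : (s1 - s2) * (mx e 1 0).re = 0 := by linarith
    exact (mul_eq_zero.1 this).resolve_left hs'
  rw [a1] at d1 d2
  have r : (mx e 0 0).re - (mx e 1 1).re = 0 := by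
    have : (s1 - s2) * ((mx e 0 0).re - (mx e 1 1).re) = 0 := by linarith
    exact (mul_eq_zero.1 this).resolve_left hs'
  rw [r10] at b1 c1
  rw [r] at d1
  have e10 : mx e 1 0 = 0 := Complex.ext r10 a1
  have i00 : (mx e 0 0).im = 0 := by linarith
  have i11 : (mx e 1 1).im = 0 := by linarith
  have i01 : (mx e 0 1).im = 0 := by linarith
  have hdet := det_eq e
  have e11 : mx e 1 1 = mx e 0 0 := Complex.ext (by linarith) (by rw [i00, i11])
  rw [e10, e11] at hdet
  have hpm : (mx e 0 0 - 1) * (mx e 0 0 + 1) = 0 := by linear_combination hdet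
  have e01 : mx e 0 1 = ((mx e 0 1).re : ℂ) := Complex.ext (by simp) (by simpa using i01)
  rcases mul_eq_zero.1 hpm with h | h
  · have h00 : mx e 0 0 = 1 := by linear_combination h
    refine ⟨(mx e 0 1).re, Or.inl ?_, rfl⟩
    apply sl_ext <;> simp only [u00, u01, u10, u11]
    · exact h00
    · exact e01
    · exact e10
    · rw [e11, h00]
  · have h00 : mx e 0 0 = -1 := by linear_combination h
    refine ⟨-(mx e 0 1).re, Or.inr ?_, by ring⟩
    apply sl_ext <;> simp only [mx_neg, Matrix.neg_apply, u00, u01, u10, u11]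
    · exact h00
    · rw [e01]; simp
    · rw [e10]; simp
    · rw [e11, h00]

lemma Ctx.per (c : Ctx L F M Y K Z) : ∃ y ∈ Y, ∃ t : ℝ, t ≠ 0 ∧ uMat t ∈ cj L y := by
  obtain ⟨y0, hy0⟩ := c.Ym.ne
  have hyn : ∀ n : ℕ, y0 * uMat (n : ℝ) ∈ Y := fun n => c.Ym.ci.right _ ⟨(n : ℝ), rfl⟩ _ hy0
  choose δ hδ hδK using fun n => c.YK _ (hyn n)
  obtain ⟨k, -, φ, hφ, hlim⟩ := c.Kc.tendsto_subseq hδK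
  have hYs : ∀ n, δ n * (y0 * uMat (n : ℝ)) ∈ Y := fun n => c.Ym.ci.left _ (hδ n) _ (hyn n)
  have hk : k ∈ Y := c.Ym.ci.closed.mem_of_tendsto hlim (Eventually.of_forall fun n => hYs _)
  obtain ⟨i1, -, s1, -, -, hz1⟩ := c.appr hk 0 one_pos
  obtain ⟨i2, hi2, s2, -, -, hz2⟩ := c.appr hk (i1 + 1) one_pos
  have hs : s1 ≠ s2 := by
    rintro rfl
    exact c.Zd i1 i2 (by omega) _ hz1 hz2
  set e : ℕ → SL2C := fun n => k⁻¹ * (δ (φ n) * (y0 * uMat ((φ n : ℕ) : ℝ))) with he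
  have hel : Tendsto e atTop (𝓝 1) := by
    have := hlim.const_mul k⁻¹
    rwa [inv_mul_cancel] at this
  have key : ∀ i s, k * vM s ∈ Z i → ∀ᶠ n in atTop, vM (-s) * e n * vM s ∈ HH := by
    intro i s hz
    have hsub := c.Ym.min _ ((c.Zci i).toU.vshift s) ⟨k, hz, hk⟩
    have hl : Tendsto (fun n => vM (-s) * e n * vM s) atTop (𝓝 1) := by
      have := (hel.const_mul (vM (-s))).mul_const (vM s)
      rw [← vM_inv, mul_one, inv_mul_cancel] at this
      rwa [← vM_inv]
    filter_upwards [hl.eventually (c.Zb i _ hz)] with n hn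
    apply hn
    have h2 : δ (φ n) * (y0 * uMat ((φ n : ℕ) : ℝ)) * vM s ∈ Z i := hsub (hYs (φ n))
    have e2 : k * vM s * (vM (-s) * e n * vM s) = δ (φ n) * (y0 * uMat ((φ n : ℕ) : ℝ)) * vM s := by
      rw [← vM_inv]; simp only [he]; group
    rwa [e2]
  have hsm : ∀ᶠ n in atTop, ‖mx (e n) 0 1‖ < 1 / 4 := by
    have h1 := (tendsto_sl.1 hel 0 1).norm
    refine h1.eventually_lt_const ?_
    rw [mx_one]; norm_num
  obtain ⟨N, hN⟩ := eventually_atTop.1 ((key i1 s1 hz1).and ((key i2 s2 hz2).and hsm))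
  have hall : ∀ n ≥ N, ∃ t : ℝ, |t| < 1 / 4 ∧ (e n = uMat t ∨ e n = -uMat t) := by
    intro n hn
    obtain ⟨a, b, d⟩ := hN n hn
    obtain ⟨t, ht, hsq⟩ := two_conj hs a b
    refine ⟨t, ?_, ht⟩
    rw [← (sq_eq_sq_iff_abs_eq_abs _ _).1 hsq]
    exact (Complex.abs_re_le_norm _).trans_lt d
  obtain ⟨t1, ht1, he1⟩ := hall N le_rfl
  obtain ⟨t2, ht2, he2⟩ := hall (N + 1) (Nat.le_succ _)
  have hlt : (φ N : ℝ) + 1 ≤ φ (N + 1) := by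
    exact_mod_cast hφ (Nat.lt_succ_self N)
  set w : ℝ := (φ N : ℝ) - φ (N + 1) - t1 + t2 with hw
  have hw0 : w ≠ 0 := by
    have := abs_lt.1 ht1
    have := abs_lt.1 ht2
    apply ne_of_lt
    rw [hw]; linarith
  have hsgn : ∃ σ : SL2C, (σ = 1 ∨ σ = -1) ∧ (e N)⁻¹ * e (N + 1) = σ * uMat ((t2 - t1 : ℝ)) := by
    have eu : (uMat t1)⁻¹ * uMat t2 = uMat ((t2 - t1 : ℝ)) := by
      rw [uMat_inv, ← uMat_add]; congr 1; push_cast; ring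
    have ni : ∀ g : SL2C, (-g)⁻¹ = -g⁻¹ := fun g => by
      rw [inv_eq_iff_mul_eq_one]; simp
    rcases he1 with h | h <;> rcases he2 with h' | h' <;> rw [h, h']
    · exact ⟨1, Or.inl rfl, by rw [eu, one_mul]⟩
    · exact ⟨-1, Or.inr rfl, by rw [mul_neg, eu, neg_one_mul]⟩
    · exact ⟨-1, Or.inr rfl, by rw [ni, neg_mul, eu, neg_one_mul]⟩
    · exact ⟨1, Or.inl rfl, by rw [ni, neg_mul_neg, eu, one_mul]⟩
  obtain ⟨σ, hσ, hσe⟩ := hsgn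
  have hσL : σ ∈ L := by
    rcases hσ with rfl | rfl
    · exact L.one_mem
    · exact c.hL.neg
  have hσc : ∀ g : SL2C, g * σ = σ * g := by
    rcases hσ with rfl | rfl <;> intro g <;> simp
  refine ⟨y0, hy0, w, hw0, mem_cj.2 ⟨σ⁻¹ * ((δ (φ N))⁻¹ * δ (φ (N + 1))), L.mul_mem (L.inv_mem hσL)
    (L.mul_mem (L.inv_mem (hδ _)) (hδ _)), ?_⟩⟩
  have e3 : (uMat ((φ N : ℕ) : ℝ))⁻¹ * (y0⁻¹ * ((δ (φ N))⁻¹ * δ (φ (N + 1))) * y0) * uMat ((φ (N + 1) : ℕ) : ℝ)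
      = σ * uMat ((t2 - t1 : ℝ)) := by
    rw [← hσe]; simp only [he]; group
  have e4 : y0⁻¹ * ((δ (φ N))⁻¹ * δ (φ (N + 1))) * y0 =
      σ * (uMat ((φ N : ℕ) : ℝ) * uMat ((t2 - t1 : ℝ)) * (uMat ((φ (N + 1) : ℕ) : ℝ))⁻¹) := by
    have e7 : ∀ A B C : SL2C, σ * (A * B * C) = A * (σ * B) * C := fun A B C => by
      rw [← mul_assoc A σ B, hσc A]; group
    rw [e7, ← e3]; group
  have e5 : uMat ((φ N : ℕ) : ℝ) * uMat ((t2 - t1 : ℝ)) * (uMat ((φ (N + 1) : ℕ) : ℝ))⁻¹ = uMat w := by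
    rw [uMat_inv, ← uMat_add, ← uMat_add]; congr 1; rw [hw]; push_cast; ring
  have e6 : y0⁻¹ * (σ⁻¹ * ((δ (φ N))⁻¹ * δ (φ (N + 1)))) * y0 =
      σ⁻¹ * (y0⁻¹ * ((δ (φ N))⁻¹ * δ (φ (N + 1))) * y0) := by
    have : y0⁻¹ * σ⁻¹ = σ⁻¹ * y0⁻¹ := by
      rw [← _root_.mul_inv_rev, ← _root_.mul_inv_rev, hσc]
    simp only [← mul_assoc]; rw [this]
  rw [e6, e4, e5]; group

lemma IsMinl.vshift (hY : IsMinl L US Y) (r : ℝ) : IsMinl L US {x | x * vM r ∈ Y} := by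
  have e : ∀ x : SL2C, x * vM (-r) * vM r = x := fun x => by rw [← vM_inv]; group
  have e' : ∀ x : SL2C, x * vM r * vM (-r) = x := fun x => by rw [← vM_inv]; group
  refine ⟨hY.ci.vshift r, ?_, ?_⟩
  · obtain ⟨y, hy⟩ := hY.ne
    exact ⟨y * vM (-r), by simpa only [Set.mem_ofPred_eq, e] using hy⟩
  · rintro C hC ⟨z, hzC, hz⟩ x hx
    have := hY.min _ (hC.vshift (-r)) ⟨z * vM r, by simpa only [Set.mem_ofPred_eq, e'] using hzC, hz⟩ hx
    simpa only [Set.mem_ofPred_eq, e'] using this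

lemma Ctx.claim1 (c : Ctx L F M Y K Z) {y : SL2C} (hy : y ∈ Y) {γ h : SL2C} (hγ : γ ∈ L) (hh : h ∈ HH)
    {σ : ℝ} (he : y * vM σ = γ * y * h) : mx h 1 0 = 0 := by
  have e : ∀ x : SL2C, x * vM σ * vM (-σ) = x := fun x => by rw [← vM_inv]; group
  have e' : ∀ x : SL2C, x * vM (-σ) * vM σ = x := fun x => by rw [← vM_inv]; group
  have hK : IsCompact ((fun x => x * vM σ) '' K) := c.Kc.image (continuous_id.mul continuous_const)
  have h1 := ndl c.hL c.Fci c.Fne (c.Ym.vshift (-σ)) hK (y := y * vM σ) (by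
      intro x hx
      obtain ⟨δ, hδ, hk⟩ := c.YK _ hx
      refine ⟨δ, hδ, _, hk, ?_⟩
      show δ * (x * vM (-σ)) * vM σ = δ * x
      rw [← mul_assoc, e']) (by simpa only [Set.mem_ofPred_eq, e] using hy)
  have hl : Tendsto (fun s : ℝ => h⁻¹ * vM s * h) (𝓝 0) (𝓝 1) := by
    have := ((vM_cont.tendsto 0).const_mul h⁻¹).mul_const h
    rwa [vM_zero, mul_one, inv_mul_cancel] at this
  obtain ⟨η, hη, hs⟩ := Metric.eventually_nhds_iff.1 (hl.eventually h1)
  obtain ⟨i, -, s, hsη, hs0, hZ⟩ := c.appr hy 0 hη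
  have hF : y * vM σ * (h⁻¹ * vM s * h) ∈ F := by
    have h2 := c.Fci.right h hh _ (c.Fci.left γ hγ _ (c.ZF i hZ))
    have e2 : y * vM σ * (h⁻¹ * vM s * h) = γ * (y * vM s) * h := by
      rw [he]; group
    rwa [e2]
  have hdeg := hs (y := s) (by simpa using hsη) hF
  obtain ⟨s', h', hh', e3⟩ := hdeg
  have e4 : mx (sg (h⁻¹ * vM s * h)) 1 0 = 0 := by
    rw [e3, sg_vh s' hh', u10]
  rw [mul_assoc, sg_mul, vM, sg_vh s hh, map_inv, bar_HH.1 hh] at e4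
  simp only [mul_e, inv_00, inv_01, inv_10, inv_11, u00, u01, u10, u11] at e4
  have e5 : (2 * s * Complex.I) * (mx h 1 0) ^ 2 = 0 := by linear_combination -e4
  have h6 : (2 * s * Complex.I : ℂ) ≠ 0 := by
    simp [hs0]
  exact pow_eq_zero_iff (two_ne_zero) |>.1 ((mul_eq_zero.1 e5).resolve_left h6)

end

lemma closure_ci {L : Subgroup SL2C} {S C : Set SL2C} (hl : ∀ γ ∈ L, ∀ x ∈ C, γ * x ∈ C)
    (hr : ∀ s ∈ S, ∀ x ∈ C, x * s ∈ C) : CI L S (closure C) := by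
  refine ⟨isClosed_closure, fun γ hγ x hx => ?_, fun s hs x hx => ?_⟩
  · exact map_mem_closure (f := fun x => γ * x) (continuous_const.mul continuous_id) hx
      (fun x hx => hl γ hγ x hx)
  · exact map_mem_closure (f := fun x => x * s) (continuous_id.mul continuous_const) hx
      (fun x hx => hr s hs x hx)

lemma tri_not_lt {L : Subgroup SL2C} (hd : ∃ η > 0, ∀ γ ∈ L, sz γ < η → sz γ = 0) {p : SL2C}
    (hp : p ∈ L) (h10 : mx p 1 0 = 0) {w : ℂ} (hw : w ≠ 0) (hu : uMat w ∈ L) :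
    ¬ ‖mx p 0 0‖ < 1 := by
  intro hlt
  obtain ⟨η, hη, hz⟩ := hd
  have hdet := det_eq p
  rw [h10] at hdet
  have hne : mx p 0 0 ≠ 0 := by
    intro h; rw [h] at hdet; simp at hdet
  have step : ∀ z : ℂ, p * uMat z * p⁻¹ = uMat (z * mx p 0 0 ^ 2) := by
    intro z
    apply sl_ext <;> simp only [mul_e, inv_00, inv_01, inv_10, inv_11, u00, u01, u10, u11, h10]
    · linear_combination hdet
    · ring
    · ring
    · linear_combination hdet
  have hm : ∀ n : ℕ, uMat (w * (mx p 0 0 ^ 2) ^ n) ∈ L := by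
    intro n
    induction n with
    | zero => simpa using hu
    | succ n ih =>
      rw [pow_succ, ← mul_assoc, ← step]
      exact L.mul_mem (L.mul_mem hp ih) (L.inv_mem hp)
  have hsz : ∀ z : ℂ, sz (uMat z) = ‖z‖ := by
    intro z
    unfold sz nm
    rw [tl_00, tl_01, tl_10, tl_11, u00, u01, u10, u11]; simp
  have hl : Tendsto (fun n : ℕ => ‖w * (mx p 0 0 ^ 2) ^ n‖) atTop (𝓝 0) := by
    have h1 : Tendsto (fun n : ℕ => (mx p 0 0 ^ 2) ^ n) atTop (𝓝 0) := by
      apply tendsto_pow_atTop_nhds_zero_of_norm_lt_one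
      rw [norm_pow]
      exact pow_lt_one₀ (norm_nonneg _) hlt two_ne_zero
    have := (h1.const_mul w).norm
    simpa using this
  obtain ⟨n, hn⟩ := (hl.eventually_lt_const hη).exists
  have h0 := hz _ (hm n) (by rw [hsz]; exact hn)
  rw [hsz, norm_eq_zero] at h0
  exact mul_ne_zero hw (pow_ne_zero _ (pow_ne_zero _ hne)) h0

lemma tri_one {L : Subgroup SL2C} (hd : ∃ η > 0, ∀ γ ∈ L, sz γ < η → sz γ = 0) {p : SL2C}
    (hp : p ∈ L) (h10 : mx p 1 0 = 0) {w : ℂ} (hw : w ≠ 0) (hu : uMat w ∈ L) :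
    ‖mx p 0 0‖ = 1 := by
  have h1 := tri_not_lt hd hp h10 hw hu
  have h2 := tri_not_lt hd (L.inv_mem hp) (by rw [inv_10, h10, neg_zero]) hw hu
  have hdet := det_eq p
  rw [h10, mul_zero, sub_zero] at hdet
  rw [inv_00] at h2
  have h3 : ‖mx p 0 0‖ * ‖mx p 1 1‖ = 1 := by rw [← norm_mul, hdet, norm_one]
  push Not at h1 h2
  nlinarith [norm_nonneg (mx p 0 0), norm_nonneg (mx p 1 1)]

lemma Ctx.absurd {L : Subgroup SL2C} {F M Y K : Set SL2C} {Z : ℕ → Set SL2C}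
    (c : Ctx L F M Y K Z) : False := by
  obtain ⟨y, hy, t0, ht0, hu⟩ := c.per
  choose s t ht hW using fun n : ℕ => nondiv c.hL.disc y (-(n : ℝ))
  obtain ⟨K0, hK0, hK0W⟩ := c.hL.cpt ε0 (by norm_num [ε0])
  choose δ hδ hδK using fun n => hK0W _ (hW n)
  obtain ⟨z, -, φ, hφ, hlim⟩ := hK0.tendsto_subseq hδK
  have hzM : z ∈ M := c.Mm.ci.closed.mem_of_tendsto hlim (Eventually.of_forall fun n =>
    c.Mm.ci.left _ (hδ _) _ (c.Mm.ci.right _ (HH.mul_mem (u_HH _) (aE_HH _)) _ (c.YM hy)))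
  have hC : CI L HH (closure (Zset L z)) := by
    refine closure_ci ?_ ?_
    · rintro γ hγ _ ⟨γ', hγ', h, hh, rfl⟩
      exact ⟨γ * γ', L.mul_mem hγ hγ', h, hh, by group⟩
    · rintro s hs _ ⟨γ', hγ', h, hh, rfl⟩
      exact ⟨γ', hγ', h * s, HH.mul_mem hh hs, by group⟩
  have hyC : y ∈ closure (Zset L z) :=
    c.Mm.min _ hC ⟨z, subset_closure (mem_Zset_self L z), hzM⟩ (c.YM hy)
  have n1 := ndl c.hL c.Fci c.Fne c.Ym c.Kc c.YK hy
  have n2 : ∀ i j, ∀ᶠ e in 𝓝 (1 : SL2C), ‖mx e i j‖ < 2 := by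
    intro i j
    refine (centry i j).norm.continuousAt.eventually_lt_const ?_
    show ‖mx 1 i j‖ < 2
    rw [mx_one]
    fin_cases i <;> fin_cases j <;> simp
  obtain ⟨N, hN, hNo, h1N⟩ := eventually_nhds_iff.1 (n1.and ((n2 1 0).and (n2 1 1)))
  have hVo : IsOpen {x : SL2C | y⁻¹ * x ∈ N} := hNo.preimage (continuous_const.mul continuous_id)
  obtain ⟨_, hxV, γ', hγ', h', hh', rfl⟩ := mem_closure_iff.1 hyC _ hVo
    (by simpa only [Set.mem_ofPred_eq, inv_mul_cancel] using h1N)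
  have hlim2 : Tendsto (fun n => γ' * (δ (φ n) * (y * (uMat (s (φ n)) * aE (t (φ n))))) * h') atTop
      (𝓝 (γ' * z * h')) := (hlim.const_mul γ').mul_const h'
  have hev := hlim2.eventually (hVo.mem_nhds hxV)
  have hmain : ∀ᶠ n : ℕ in atTop, ∀ j, ‖mx h' 1 j‖ ≤ 2 * Real.exp (-(n : ℝ)) := by
    filter_upwards [hev] with n hn
    obtain ⟨k1, k2, k3⟩ := hN _ hn
    set g := γ' * (δ (φ n) * (y * (uMat (s (φ n)) * aE (t (φ n))))) * h' with hg
    obtain ⟨σ, h2, hh2, e1⟩ := k1 (by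
      have e2 : y * (y⁻¹ * g) = γ' * (δ (φ n) * (y * (uMat (s (φ n)) * aE (t (φ n))))) * h' := by
        rw [hg]; group
      rw [e2]
      exact c.Fci.right _ hh' _ (c.Fci.left _ hγ' _ (c.Fci.left _ (hδ _) _
        (c.Fci.right _ (HH.mul_mem (u_HH _) (aE_HH _)) _ (c.MF (c.YM hy))))))
    set h := uMat (s (φ n)) * aE (t (φ n)) * h' * h2⁻¹ with hhdef
    have hhH : h ∈ HH := HH.mul_mem (HH.mul_mem (HH.mul_mem (u_HH _) (aE_HH _)) hh') (HH.inv_mem hh2)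
    have e3 : y * vM σ = γ' * δ (φ n) * y * h := by
      have : y * vM σ = y * (y⁻¹ * g) * h2⁻¹ := by rw [e1]; unfold vM; group
      rw [this, hg, hhdef]; group
    have h10 := c.claim1 hy (L.mul_mem hγ' (hδ _)) hhH e3
    have hp : vM σ * h⁻¹ ∈ cj L y := by
      refine mem_cj.2 ⟨γ' * δ (φ n), L.mul_mem hγ' (hδ _), ?_⟩
      have : vM σ = y⁻¹ * (γ' * δ (φ n) * y * h) := by rw [← e3]; group
      rw [this]; group
    have hn1 := tri_one (cj_disc c.hL.disc y) hp (by
      simp only [vM, mul_e, inv_00, inv_01, inv_10, inv_11, u00, u01, u10, u11, h10]; ring)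
      (Complex.ofReal_ne_zero.2 ht0) hu
    have e4 : mx (vM σ * h⁻¹) 0 0 = mx h 1 1 := by
      simp only [vM, mul_e, inv_00, inv_01, inv_10, inv_11, u00, u01, u10, u11, h10]; ring
    rw [e4] at hn1
    have e5 : h * h2 = uMat (s (φ n)) * aE (t (φ n)) * h' := by rw [hhdef]; group
    have e6 : ∀ j, mx h 1 1 * mx h2 1 j = Real.exp (-(t (φ n))) * mx h' 1 j := by
      intro j
      have := congrArg (fun g => mx g 1 j) e5
      simp only [mul_e, u00, u01, u10, u11, a00, a01, a10, a11, h10] at this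
      linear_combination this
    have e7 : ∀ j, mx h2 1 j = mx (y⁻¹ * g) 1 j := by
      intro j
      rw [e1]; simp only [mul_e, u10, u11]; ring
    have e8 : ∀ j, ‖mx h2 1 j‖ ≤ 2 := by
      intro j
      rw [e7]
      fin_cases j
      · exact k2.le
      · exact k3.le
    intro j
    have e9 := congrArg norm (e6 j)
    rw [norm_mul, norm_mul, hn1, one_mul, Complex.norm_real, Real.norm_eq_abs, abs_of_pos (Real.exp_pos _)] at e9
    have e10 : ‖mx h' 1 j‖ = Real.exp (t (φ n)) * ‖mx h2 1 j‖ := by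
      rw [e9, ← mul_assoc, ← Real.exp_add]; simp
    have e11 : Real.exp (t (φ n)) ≤ Real.exp (-(n : ℝ)) := by
      apply Real.exp_le_exp.2
      have h1 := ht (φ n)
      have h2 : (n : ℝ) ≤ φ n := by exact_mod_cast hφ.id_le n
      linarith
    rw [e10]
    nlinarith [e8 j, norm_nonneg (mx h2 1 j), Real.exp_pos (t (φ n))]
  have hl0 : Tendsto (fun n : ℕ => 2 * Real.exp (-(n : ℝ))) atTop (𝓝 0) := by
    have := (Real.tendsto_exp_neg_atTop_nhds_zero.comp (tendsto_natCast_atTop_atTop (R := ℝ))).const_mul 2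
    simpa using this
  have hz0 : ∀ j, mx h' 1 j = 0 := by
    intro j
    rw [← norm_eq_zero]
    exact le_antisymm (ge_of_tendsto hl0 (hmain.mono fun n hn => hn j)) (norm_nonneg _)
  have := det_eq h'
  rw [hz0, hz0] at this
  simp at this

lemma Wset_closed (L : Subgroup SL2C) (ε : ℝ) : IsClosed (Wset L ε) := by
  have : Wset L ε = ⋂ γ ∈ L, ⋂ (_ : sz γ ≠ 0), {g | ε ≤ sz (g⁻¹ * γ * g)} := by
    ext g; simp [Wset]
  rw [this]
  refine isClosed_biInter fun γ _ => isClosed_iInter fun _ => ?_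
  exact isClosed_le continuous_const
    (sz_continuous.comp ((continuous_inv.mul continuous_const).mul continuous_id))

lemma Wset_left {L : Subgroup SL2C} {ε : ℝ} {γ g : SL2C} (hγ : γ ∈ L) (hg : g ∈ Wset L ε) :
    γ * g ∈ Wset L ε := by
  intro δ hδ hs
  have e : (γ * g)⁻¹ * δ * (γ * g) = g⁻¹ * (γ⁻¹ * δ * γ) * g := by group
  rw [e]
  exact hg _ (L.mul_mem (L.mul_mem (L.inv_mem hγ) hδ) hγ) (by rwa [ne_eq, sz_conj_zero])

lemma exists_Y {L : Subgroup SL2C} (hL : LatHyp L) {M : Set SL2C} (hM : IsMinl L HH M) :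
    ∃ Y K : Set SL2C, IsMinl L US Y ∧ Y ⊆ M ∧ IsCompact K ∧ ∀ y ∈ Y, ∃ γ ∈ L, γ * y ∈ K := by
  obtain ⟨P, ε, hε, hP, hPne, hPM, hPW⟩ : ∃ P : Set SL2C, ∃ ε > 0, CI L US P ∧ P.Nonempty ∧ P ⊆ M ∧
      P ⊆ Wset L ε := by
    by_cases h : ∃ ε > 0, M ⊆ Wset L ε
    · obtain ⟨ε, hε, h⟩ := h
      exact ⟨M, ε, hε, hM.ci.toU, hM.ne, subset_rfl, h⟩
    · push Not at h
      obtain ⟨y, hy, w, hw, hu⟩ := cusp hL hM.ci h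
      obtain ⟨ε, hε, hs⟩ := cuspC hL.disc hw hu
      set C : Set SL2C := {x | ∃ γ ∈ L, ∃ s : ℝ, x = γ * (y * uMat s)} with hC
      refine ⟨closure C, ε, hε, closure_ci ?_ ?_, ⟨y, subset_closure ⟨1, L.one_mem, 0, ?_⟩⟩, ?_, ?_⟩
      · rintro γ hγ _ ⟨γ', hγ', s, rfl⟩
        exact ⟨γ * γ', L.mul_mem hγ hγ', s, by group⟩
      · rintro _ ⟨t, rfl⟩ _ ⟨γ', hγ', s, rfl⟩
        refine ⟨γ', hγ', s + t, ?_⟩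
        rw [Complex.ofReal_add, uMat_add]
        simp only [mul_assoc]
      · simp [uMat_zero]
      · refine closure_minimal ?_ hM.ci.closed
        rintro _ ⟨γ', hγ', s, rfl⟩
        exact hM.ci.left _ hγ' _ (hM.ci.right _ (u_HH s) _ hy)
      · refine closure_minimal ?_ (Wset_closed L ε)
        rintro _ ⟨γ', hγ', s, rfl⟩
        exact Wset_left hγ' (hs s)
  obtain ⟨K, hK, hKW⟩ := hL.cpt ε hε
  obtain ⟨Y, hYP, hY⟩ := exists_minl hP hPne hK (by
    rintro C hCP hC ⟨x, hx⟩
    obtain ⟨γ, hγ, hk⟩ := hKW x (hPW (hCP hx))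
    exact ⟨γ * x, hC.left _ hγ _ hx, hk⟩)
  exact ⟨Y, K, hY, hYP.trans hPM, hK, fun y hy => hKW y (hPW (hYP hy))⟩

lemma main_sub {L : Subgroup SL2C} (hL : LatHyp L) (g : ℕ → SL2C) (hc : ∀ i, IsClosed (Zset L (g i)))
    (hd : ∀ i j, i ≠ j → Zset L (g i) ≠ Zset L (g j)) (O : Set SL2C) (hO : IsOpen O) (hne : O.Nonempty)
    (hav : ∀ i, ¬ (Zset L (g i) ∩ O).Nonempty) : False := by
  set F : Set SL2C := {x | ∀ γ ∈ L, ∀ h ∈ HH, γ * x * h ∉ O} with hFdef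
  have hFci : CI L HH F := by
    refine ⟨?_, ?_, ?_⟩
    · have : F = ⋂ γ ∈ L, ⋂ h ∈ HH, {x | γ * x * h ∈ Oᶜ} := by
        ext x; simp [hFdef]
      rw [this]
      refine isClosed_biInter fun γ _ => isClosed_biInter fun h _ => ?_
      exact hO.isClosed_compl.preimage ((continuous_const.mul continuous_id).mul continuous_const)
    · intro γ hγ x hx γ' hγ' h hh
      have e : γ' * (γ * x) * h = (γ' * γ) * x * h := by group
      rw [e]; exact hx _ (L.mul_mem hγ' hγ) h hh
    · intro s hs x hx γ' hγ' h hh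
      have e : γ' * (x * s) * h = γ' * x * (s * h) := by group
      rw [e]; exact hx _ hγ' _ (HH.mul_mem hs hh)
  have hFne : F ≠ Set.univ := by
    obtain ⟨o, ho⟩ := hne
    intro h
    have : o ∈ F := by rw [h]; trivial
    exact this 1 L.one_mem 1 HH.one_mem (by simpa using ho)
  have hZci := fun i => Zset_ci (hc i)
  have hZF : ∀ i, Zset L (g i) ⊆ F := by
    intro i x hx γ hγ h hh hO'
    exact hav i ⟨_, (hZci i).right h hh _ ((hZci i).left γ hγ _ hx), hO'⟩
  set A : ℕ → Set SL2C := fun m => closure (⋃ i ≥ m, Zset L (g i)) with hA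
  have hAci : ∀ m, CI L HH (A m) := by
    intro m
    refine closure_ci ?_ ?_
    · intro γ hγ x hx
      simp only [Set.mem_iUnion] at hx ⊢
      obtain ⟨i, hi, hx⟩ := hx
      exact ⟨i, hi, (hZci i).left γ hγ x hx⟩
    · intro γ hγ x hx
      simp only [Set.mem_iUnion] at hx ⊢
      obtain ⟨i, hi, hx⟩ := hx
      exact ⟨i, hi, (hZci i).right γ hγ x hx⟩
  have hAne : ∀ m, (A m).Nonempty := fun m => ⟨g m, subset_closure (by
    simp only [Set.mem_iUnion]; exact ⟨m, le_rfl, mem_Zset_self _ _⟩)⟩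
  have hAF : ∀ m, A m ⊆ F := fun m => closure_minimal
    (Set.iUnion_subset fun i => Set.iUnion_subset fun _ => hZF i) hFci.closed
  have hAanti : ∀ m, A (m + 1) ⊆ A m := fun m => closure_mono
    (Set.iUnion_subset fun i => Set.iUnion_subset fun hi =>
      Set.subset_iUnion_of_subset i (Set.subset_iUnion_of_subset ((Nat.le_succ m).trans hi) subset_rfl))
  obtain ⟨K0, hK0, hmeet⟩ := meets hL
  have hEne : (⋂ m, A m ∩ K0).Nonempty := by
    refine IsCompact.nonempty_iInter_of_sequence_nonempty_isCompact_isClosed _ ?_ ?_ ?_ ?_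
    · exact fun m => Set.inter_subset_inter_left _ (hAanti m)
    · exact fun m => hmeet _ (hAci m) (hAne m)
    · exact hK0.inter_left (hAci 0).closed
    · exact fun m => (hAci m).closed.inter hK0.isClosed
  set E : Set SL2C := ⋂ m, A m with hE
  have hEci : CI L HH E := by
    refine ⟨isClosed_iInter fun m => (hAci m).closed, ?_, ?_⟩
    · intro γ hγ x hx
      exact Set.mem_iInter.2 fun m => (hAci m).left γ hγ x (Set.mem_iInter.1 hx m)
    · intro γ hγ x hx
      exact Set.mem_iInter.2 fun m => (hAci m).right γ hγ x (Set.mem_iInter.1 hx m)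
  have hEne2 : E.Nonempty := by
    obtain ⟨x, hx⟩ := hEne
    exact ⟨x, Set.mem_iInter.2 fun m => (Set.mem_iInter.1 hx m).1⟩
  obtain ⟨M, hME, hM⟩ := exists_minl hEci hEne2 hK0 fun C _ h1 h2 => hmeet C h1 h2
  obtain ⟨Y, K, hY, hYM, hK, hYK⟩ := exists_Y hL hM
  have hEF : E ⊆ F := fun x hx => hAF 0 (Set.mem_iInter.1 hx 0)
  refine Ctx.absurd (L := L) (F := F) (M := M) (Y := Y) (K := K) (Z := fun i => Zset L (g i))
    ⟨hL, hFci, hFne, hZF, hZci, fun i z hz => baire hL.disc (hc i) hz, ?_, hM, hME.trans hEF, ?_,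
      hY, hYM, hK, hYK⟩
  · intro i j hij z hz1 hz2
    exact hd i j hij ((Zset_eq hz1).symm.trans (Zset_eq hz2))
  · intro y hy m N hN
    have h1 : y ∈ A m := Set.mem_iInter.1 (hME hy) m
    have h2 : {x | y⁻¹ * x ∈ N} ∈ 𝓝 y := by
      have : Tendsto (fun x => y⁻¹ * x) (𝓝 y) (𝓝 1) := by
        have := (tendsto_id (α := SL2C) (x := 𝓝 y)).const_mul y⁻¹
        rwa [inv_mul_cancel] at this
      exact this hN
    obtain ⟨x, hx1, hx2⟩ := mem_closure_iff_nhds.1 h1 _ h2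
    simp only [Set.mem_iUnion] at hx2
    obtain ⟨i, hi, hx2⟩ := hx2
    exact ⟨i, hi, y⁻¹ * x, hx1, by simpa using hx2⟩

lemma Hset_eq : Hset = pr '' (HH : Set SL2C) := by
  ext x
  constructor
  · rintro ⟨g, rfl⟩
    refine ⟨Matrix.SpecialLinearGroup.map (algebraMap ℝ ℂ) g, ?_, rfl⟩
    intro i j
    exact Complex.ofReal_im (g.1 i j)
  · rintro ⟨h, hh, rfl⟩
    have hre : ∀ i j, mx h i j = ((mx h i j).re : ℂ) := fun i j =>
      Complex.ext (by simp) (by simpa using hh i j)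
    refine ⟨⟨!![(mx h 0 0).re, (mx h 0 1).re; (mx h 1 0).re, (mx h 1 1).re], ?_⟩, ?_⟩
    · have := det_eq h
      rw [hre 0 0, hre 0 1, hre 1 0, hre 1 1] at this
      rw [Matrix.det_fin_two_of]
      exact_mod_cast this
    · congr 1
      apply sl_ext
      · exact hre 0 0
      · exact hre 0 1
      · exact hre 1 0
      · exact hre 1 1

lemma orb_pre (D : Subgroup PSL2C) (g : SL2C) : pp D ⁻¹' (orb D (pp D g) Hset) = Zset (LL D) g := by
  ext x
  rw [Set.mem_preimage, Hset_eq]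
  unfold orb
  constructor
  · rintro ⟨_, ⟨h, hh, rfl⟩, he⟩
    have he2 : act D (pp D g) (pr h) = pp D x := he
    rw [act_pp, pp_eq] at he2
    obtain ⟨γ, hγ, rfl⟩ := he2
    exact ⟨γ, hγ, h, hh, by group⟩
  · rintro ⟨γ, hγ, h, hh, rfl⟩
    refine ⟨_, ⟨h, hh, rfl⟩, ?_⟩
    show act D (pp D g) (pr h) = _
    rw [act_pp, pp_eq]
    exact ⟨γ, hγ, by group⟩

lemma final (D : Subgroup PSL2C) (hdisc : DiscreteTopology D) (hlat : IsLattice D)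
    (x : ℕ → XΓ D) (hclosed : ∀ i, IsClosed (orb D (x i) Hset))
    (hdistinct : ∀ i j, i ≠ j → orb D (x i) Hset ≠ orb D (x j) Hset)
    (O : Set (XΓ D)) (hO : IsOpen O) (hne : O.Nonempty) :
      ∀ᶠ i in atTop, (orb D (x i) Hset ∩ O).Nonempty := by
  have hL := latHyp_of D hdisc hlat
  by_contra hcon
  rw [not_eventually] at hcon
  obtain ⟨φ, hφ, hφ2⟩ := extraction_of_frequently_atTop hcon
  choose g hg using fun i => pp_surj D (x i)
  have hpre : ∀ i, pp D ⁻¹' (orb D (x i) Hset) = Zset (LL D) (g i) := fun i => by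
    rw [← hg i, orb_pre]
  refine main_sub hL (fun i => g (φ i)) ?_ ?_ (pp D ⁻¹' O) (hO.preimage (pp_cont D)) ?_ ?_
  · intro i
    rw [← hpre]; exact (hclosed _).preimage (pp_cont D)
  · intro i j hij h
    rw [← hpre, ← hpre] at h
    exact hdistinct _ _ (hφ.injective.ne hij) ((pp_surj D).preimage_injective h)
  · exact hne.preimage (pp_surj D)
  · rintro i ⟨z, hz1, hz2⟩
    rw [← hpre] at hz1
    exact hφ2 i ⟨_, hz1, hz2⟩

end Helpers

/-- If `Γ` is a lattice in `PSL(2,ℂ)` and `(x_i H)` is a sequence of pairwise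
distinct closed `H`-orbits, then `x_i H → Γ\G`: every nonempty open subset of
`Γ\G` meets `x_i H` for all sufficiently large `i`. -/
theorem closed_H_orbits_become_dense
    (Γ : Subgroup PSL2C) (hdisc : DiscreteTopology Γ) (hlat : IsLattice Γ)
    (x : ℕ → XΓ Γ) (hclosed : ∀ i, IsClosed (orb Γ (x i) Hset))
    (hdistinct : ∀ i j, i ≠ j → orb Γ (x i) Hset ≠ orb Γ (x j) Hset) :
    ∀ O : Set (XΓ Γ), IsOpen O → O.Nonempty →
      ∀ᶠ i in atTop, (orb Γ (x i) Hset ∩ O).Nonempty := by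
  exact final Γ hdisc hlat x hclosed hdistinct


end
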